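/- Let n ≥ 4, 1 ≤ q < ∞ and 1 ≤ p < ∞. There exists a constant C (depending only on n, p, q) such that ‖A_*[f₁,…,f_n]‖_{ℓ^q(ℤ)} ≤ C ∏_{i=1}^n ‖f_i‖_{ℓ^p(ℤ)} for all f₁,…,f_n ∈ ℓ^p(ℤ) if and only if n ≥ 5 and p ≤ nq. -/

import Mathlib

open scoped BigOperators ENNReal NNReal
open MeasureTheory Finset

noncomputable section

/-- `sphereCount n lam` is the number of lattice points `x ∈ ℤ^n` with
`x₁² + ⋯ + x_n² = lam`. -/
def sphereCount (n lam : ℕ) : ℕ :=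
  {x : Fin n → ℤ | ∑ i, (x i) ^ 2 = (lam : ℤ)}.ncard

/-- The multilinear spherical average
`A_lam[f₁,…,f_n](y) = (1/r_n(lam)) ∑_{|x|² = lam} f₁(y-x₁)⋯f_n(y-x_n)`. -/
def mulAvg (n lam : ℕ) (f : Fin n → ℤ → ℂ) (y : ℤ) : ℂ :=
  (sphereCount n lam : ℂ)⁻¹ *
    ∑ᶠ x ∈ {x : Fin n → ℤ | ∑ i, (x i) ^ 2 = (lam : ℤ)}, ∏ i, f i (y - x i)

/-- The maximal function `A_*[f₁,…,f_n](y) = sup_{lam ≥ 1} |A_lam[f₁,…,f_n](y)|`. -/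
def maxFn (n : ℕ) (f : Fin n → ℤ → ℂ) (y : ℤ) : ℝ≥0∞ :=
  ⨆ (lam : ℕ) (_ : 1 ≤ lam), (‖mulAvg n lam f y‖₊ : ℝ≥0∞)

/-- The `ℓ^p(ℤ)` norm of a complex-valued function, valued in `ℝ≥0∞`. -/
def lpNorm (p : ℝ) (g : ℤ → ℂ) : ℝ≥0∞ :=
  (∑' x : ℤ, (‖g x‖₊ : ℝ≥0∞) ^ p) ^ (1 / p)

/-- The `ℓ^q(ℤ)` norm of an `ℝ≥0∞`-valued function. -/
def lqNormE (q : ℝ) (g : ℤ → ℝ≥0∞) : ℝ≥0∞ :=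
  (∑' x : ℤ, g x ^ q) ^ (1 / q)

/-- Zagier-type set of triples `s² + 4yz = M`. -/
def zagSet (M : ℤ) : Finset (ℤ × ℤ × ℤ) :=
  (Icc (-M) M ×ˢ Icc 1 M ×ˢ Icc 1 M).filter (fun v => v.1 ^ 2 + 4 * v.2.1 * v.2.2 = M)

lemma mem_zagSet (M : ℤ) (v : ℤ × ℤ × ℤ) :
    v ∈ zagSet M ↔ v.1 ^ 2 + 4 * v.2.1 * v.2.2 = M ∧ 0 < v.2.1 ∧ 0 < v.2.2 := by
  obtain ⟨s, y, z⟩ := v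
  simp only [zagSet, mem_filter, mem_product, mem_Icc]
  constructor
  · rintro ⟨⟨⟨h1, h2⟩, ⟨h3, h4⟩, h5, h6⟩, h⟩
    exact ⟨h, by linarith, by linarith⟩
  · rintro ⟨h, hy, hz⟩
    have hyz : 0 < y * z := mul_pos hy hz
    have h1 : y ≤ y * z := by nlinarith
    have h2 : z ≤ y * z := by nlinarith
    have h3 : |s| ≤ s ^ 2 := by
      rw [← sq_abs]
      rcases (abs_nonneg s).eq_or_lt with h | h
      · rw [← h]; norm_num
      · nlinarith
    have h4 := abs_le.mp (show |s| ≤ M by nlinarith)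
    have := sq_nonneg s
    refine ⟨⟨⟨h4.1, h4.2⟩, ⟨by linarith, by nlinarith⟩, by linarith, by nlinarith⟩, h⟩

lemma zag_sum (M : ℤ) (hM : ∀ t : ℤ, t ^ 2 ≠ M) :
    ∑ v ∈ zagSet M, (v.2.1 * v.2.2 - v.1 ^ 2) * (v.2.1 + v.2.2) = 0 := by
  set A := (zagSet M).filter (fun v => v.1 < v.2.1 - v.2.2) with hA
  set B := (zagSet M).filter (fun v => ¬ v.1 < v.2.1 - v.2.2) with hB
  have split : ∀ g : ℤ × ℤ × ℤ → ℤ, ∑ v ∈ zagSet M, g v = ∑ v ∈ A, g v + ∑ v ∈ B, g v :=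
    fun g => (Finset.sum_filter_add_sum_filter_not _ _ _).symm
  have memA : ∀ v, v ∈ A ↔ (v.1 ^ 2 + 4 * v.2.1 * v.2.2 = M ∧ 0 < v.2.1 ∧ 0 < v.2.2) ∧
      v.1 < v.2.1 - v.2.2 := fun v => by rw [hA, mem_filter, mem_zagSet]
  have memB : ∀ v, v ∈ B ↔ (v.1 ^ 2 + 4 * v.2.1 * v.2.2 = M ∧ 0 < v.2.1 ∧ 0 < v.2.2) ∧
      v.2.1 - v.2.2 < v.1 := fun v => by
    rw [hB, mem_filter, mem_zagSet, not_lt]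
    refine and_congr_right fun h => ⟨fun h' => lt_of_le_of_ne h' fun h'' => ?_, le_of_lt⟩
    apply hM (v.2.1 + v.2.2)
    rw [← h.1, ← h'']; ring
  have iota : ∀ g : ℤ × ℤ × ℤ → ℤ, ∑ v ∈ B, g v = ∑ v ∈ A, g (-v.1, v.2.2, v.2.1) := by
    intro g
    refine Finset.sum_nbij' (fun v => (-v.1, v.2.2, v.2.1)) (fun v => (-v.1, v.2.2, v.2.1))
      ?_ ?_ ?_ ?_ ?_
    · intro v hv
      rw [memB] at hv; rw [memA]
      refine ⟨⟨?_, hv.1.2.2, hv.1.2.1⟩, ?_⟩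
      · simp only; rw [← hv.1.1]; ring
      · simp only; linarith [hv.2]
    · intro v hv
      rw [memA] at hv; rw [memB]
      refine ⟨⟨?_, hv.1.2.2, hv.1.2.1⟩, ?_⟩
      · simp only; rw [← hv.1.1]; ring
      · simp only; linarith [hv.2]
    · intro v _; simp
    · intro v _; simp
    · intro v _; simp
  have tee : ∀ g : ℤ × ℤ × ℤ → ℤ, ∑ v ∈ B, g v =
      ∑ v ∈ A, g (v.1 + 2 * v.2.2, v.2.2, v.2.1 - v.1 - v.2.2) := by
    intro g
    refine Finset.sum_nbij' (fun v => (v.1 - 2 * v.2.1, v.2.2 + v.1 - v.2.1, v.2.1))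
      (fun v => (v.1 + 2 * v.2.2, v.2.2, v.2.1 - v.1 - v.2.2)) ?_ ?_ ?_ ?_ ?_
    · intro v hv
      rw [memB] at hv; rw [memA]
      obtain ⟨⟨h1, h2, h3⟩, h4⟩ := hv
      refine ⟨⟨?_, ?_, ?_⟩, ?_⟩ <;> simp only
      · rw [← h1]; ring
      all_goals linarith
    · intro v hv
      rw [memA] at hv; rw [memB]
      obtain ⟨⟨h1, h2, h3⟩, h4⟩ := hv
      refine ⟨⟨?_, ?_, ?_⟩, ?_⟩ <;> simp only
      · rw [← h1]; ring
      all_goals linarith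
    · rintro ⟨s, y, z⟩ _; ext <;> simp <;> ring
    · rintro ⟨s, y, z⟩ _; ext <;> simp <;> ring
    · rintro ⟨s, y, z⟩ _; simp only; congr 1; ext <;> simp <;> ring
  have hodd : ∑ v ∈ zagSet M, v.1 * (v.2.1 ^ 2 - v.2.2 ^ 2) = 0 := by
    have : ∑ v ∈ zagSet M, v.1 * (v.2.1 ^ 2 - v.2.2 ^ 2) =
        ∑ v ∈ zagSet M, -(v.1 * (v.2.1 ^ 2 - v.2.2 ^ 2)) := by
      refine Finset.sum_nbij' (fun v => (-v.1, v.2.1, v.2.2)) (fun v => (-v.1, v.2.1, v.2.2))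
        ?_ ?_ ?_ ?_ ?_
      · intro v hv; rw [mem_zagSet] at *; simpa using hv
      · intro v hv; rw [mem_zagSet] at *; simpa using hv
      · intro v _; simp
      · intro v _; simp
      · intro v _; simp
    rw [Finset.sum_neg_distrib] at this
    linarith
  rw [split, iota] at hodd
  rw [split, iota]
  have key := (tee (fun v => -v.2.2 ^ 3 - v.2.1 ^ 2 * v.2.2 - v.1 * v.2.2 ^ 2)).symm.trans
    (iota (fun v => -v.2.2 ^ 3 - v.2.1 ^ 2 * v.2.2 - v.1 * v.2.2 ^ 2))
  rw [← sub_eq_zero, ← Finset.sum_sub_distrib] at key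
  rw [← Finset.sum_add_distrib] at hodd ⊢
  have h0 : ∑ v ∈ A, v.1 * (v.2.1 ^ 2 - v.2.2 ^ 2) = 0 := by
    have : ∀ v : ℤ × ℤ × ℤ, (v.1 * (v.2.1 ^ 2 - v.2.2 ^ 2) + -v.1 * (v.2.2 ^ 2 - v.2.1 ^ 2))
        = 2 * (v.1 * (v.2.1 ^ 2 - v.2.2 ^ 2)) := fun v => by ring
    simp only [this, ← Finset.mul_sum] at hodd
    linarith
  have h1 : ∑ v ∈ A, (v.2.1 * v.2.2 - v.1 ^ 2) * (v.2.1 + v.2.2) = 0 := by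
    calc _ = ∑ v ∈ A, ((-(v.2.1 - v.1 - v.2.2) ^ 3 - v.2.2 ^ 2 * (v.2.1 - v.1 - v.2.2)
          - (v.1 + 2 * v.2.2) * (v.2.1 - v.1 - v.2.2) ^ 2)
          - (-v.2.1 ^ 3 - v.2.2 ^ 2 * v.2.1 - (-v.1) * v.2.1 ^ 2)
          - v.1 * (v.2.1 ^ 2 - v.2.2 ^ 2)) := by
            refine Finset.sum_congr rfl fun v _ => by ring
      _ = 0 := by
            rw [Finset.sum_sub_distrib, h0, sub_zero]
            exact key
  have h2 : ∀ v : ℤ × ℤ × ℤ, ((v.2.1 * v.2.2 - v.1 ^ 2) * (v.2.1 + v.2.2) +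
      (v.2.2 * v.2.1 - (-v.1) ^ 2) * (v.2.2 + v.2.1)) =
      2 * ((v.2.1 * v.2.2 - v.1 ^ 2) * (v.2.1 + v.2.2)) := fun v => by ring
  simp only [h2, ← Finset.mul_sum, h1, mul_zero]

/-- `∑ y` over `4yz = N`. -/
def divE (N : ℤ) : ℤ :=
  ∑ v ∈ (Icc 1 N ×ˢ Icc 1 N).filter (fun v : ℤ × ℤ => 4 * v.1 * v.2 = N), v.1

lemma divE_rec (M : ℤ) (hM : ∀ t : ℤ, t ^ 2 ≠ M) :
    ∑ s ∈ Icc (-M) M, (M - 5 * s ^ 2) * divE (M - s ^ 2) = 0 := by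
  have h1 : ∑ v ∈ zagSet M, (v.2.1 * v.2.2 - v.1 ^ 2) * v.2.1 =
      ∑ v ∈ zagSet M, (v.2.1 * v.2.2 - v.1 ^ 2) * v.2.2 := by
    refine Finset.sum_nbij' (fun v => (v.1, v.2.2, v.2.1)) (fun v => (v.1, v.2.2, v.2.1))
        ?_ ?_ ?_ ?_ ?_
    · intro v hv; rw [mem_zagSet] at *; refine ⟨?_, hv.2.2, hv.2.1⟩; simp only; rw [← hv.1]; ring
    · intro v hv; rw [mem_zagSet] at *; refine ⟨?_, hv.2.2, hv.2.1⟩; simp only; rw [← hv.1]; ring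
    · intro v _; simp
    · intro v _; simp
    · intro v _; simp only; ring
  have h2 := zag_sum M hM
  simp only [mul_add, Finset.sum_add_distrib] at h2
  have h3 : ∑ v ∈ zagSet M, (M - 5 * v.1 ^ 2) * v.2.1 = 0 := by
    have : ∀ v ∈ zagSet M, (M - 5 * v.1 ^ 2) * v.2.1 =
        4 * ((v.2.1 * v.2.2 - v.1 ^ 2) * v.2.1) := by
      intro v hv
      rw [mem_zagSet] at hv
      rw [← hv.1]; ring
    rw [Finset.sum_congr rfl this, ← Finset.mul_sum]
    linarith
  rw [← h3]
  simp only [divE, Finset.mul_sum]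
  rw [Finset.sum_sigma']
  refine Finset.sum_nbij' (fun v => (v.1, v.2.1, v.2.2)) (fun v => ⟨v.1, v.2.1, v.2.2⟩) ?_ ?_ ?_ ?_ ?_
  · rintro ⟨s, y, z⟩ hv
    simp only [mem_sigma, mem_filter, mem_product, mem_Icc] at hv
    rw [mem_zagSet]
    refine ⟨by simp only; linarith [hv.2.2], by simp only; linarith [hv.2.1.1.1],
      by simp only; linarith [hv.2.1.2.1]⟩
  · rintro ⟨s, y, z⟩ hv
    have hv' := hv
    rw [mem_zagSet] at hv
    simp only [zagSet, mem_filter, mem_product, mem_Icc] at hv'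
    simp only [mem_sigma, mem_filter, mem_product, mem_Icc]
    simp only at hv
    obtain ⟨h, hy, hz⟩ := hv
    have hyz : 0 < y * z := mul_pos hy hz
    refine ⟨hv'.1.1, ⟨⟨by linarith, by nlinarith⟩, by linarith, by nlinarith⟩, by linarith⟩
  · intro v _; rfl
  · intro v _; rfl
  · intro v _; rfl

lemma divE_nonpos {N : ℤ} (hN : N ≤ 0) : divE N = 0 := by
  unfold divE
  rw [Finset.Icc_eq_empty (by linarith)]; simp

lemma divE_four : divE 4 = 1 := by decide +kernel

lemma divE_ge {m : ℤ} (hm : 1 ≤ m) : m ≤ divE (4 * m) := by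
  unfold divE
  have hmem : ((m, 1) : ℤ × ℤ) ∈ (Icc 1 (4 * m) ×ˢ Icc 1 (4 * m)).filter
      (fun v : ℤ × ℤ => 4 * v.1 * v.2 = 4 * m) := by
    simp only [mem_filter, mem_product, mem_Icc]
    refine ⟨⟨⟨hm, by linarith⟩, by norm_num, by linarith⟩, by ring⟩
  refine Finset.single_le_sum (f := fun v : ℤ × ℤ => v.1) ?_ hmem
  intro v hv
  simp only [mem_filter, mem_product, mem_Icc] at hv
  linarith [hv.1.1.1]

/-- odd points on sphere -/
def oddS (k : ℕ) (N : ℤ) : Finset (Fin k → ℤ) :=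
  (Fintype.piFinset (fun _ => Icc (-N) N)).filter
    (fun x => (∀ i, Odd (x i)) ∧ ∑ i, x i ^ 2 = N)

lemma int_abs_le_sq (s : ℤ) : |s| ≤ s ^ 2 := by
  rw [← sq_abs]
  rcases (abs_nonneg s).eq_or_lt with h | h
  · rw [← h]; norm_num
  · nlinarith

lemma mem_oddS {k : ℕ} {N : ℤ} {x : Fin k → ℤ} :
    x ∈ oddS k N ↔ (∀ i, Odd (x i)) ∧ ∑ i, x i ^ 2 = N := by
  simp only [oddS, mem_filter, Fintype.mem_piFinset, mem_Icc, and_iff_right_iff_imp]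
  rintro ⟨_, h⟩ i
  have h1 : x i ^ 2 ≤ N := by
    rw [← h]
    exact Finset.single_le_sum (f := fun i => x i ^ 2) (fun j _ => sq_nonneg _) (mem_univ i)
  exact abs_le.mp ((int_abs_le_sq _).trans h1)

lemma oddS_rec (M : ℤ) :
    ∑ s ∈ (Icc (-M) M).filter (fun s => Odd s), (M - 5 * s ^ 2) * ((oddS 4 (M - s ^ 2)).card : ℤ) = 0 := by
  have h1 : ∀ i : Fin 5, ∑ x ∈ oddS 5 M, x i ^ 2 = ∑ x ∈ oddS 5 M, x 0 ^ 2 := by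
    intro i
    refine Finset.sum_nbij' (fun x => x ∘ Equiv.swap 0 i) (fun x => x ∘ Equiv.swap 0 i) ?_ ?_ ?_ ?_ ?_
    · intro x hx; rw [mem_oddS] at *
      refine ⟨fun j => hx.1 _, ?_⟩
      rw [← hx.2]
      exact Equiv.sum_comp (Equiv.swap 0 i) (fun j => x j ^ 2)
    · intro x hx; rw [mem_oddS] at *
      refine ⟨fun j => hx.1 _, ?_⟩
      rw [← hx.2]
      exact Equiv.sum_comp (Equiv.swap 0 i) (fun j => x j ^ 2)
    · intro x _; ext j; simp
    · intro x _; ext j; simp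
    · intro x _; simp
  have h2 : ∑ x ∈ oddS 5 M, (M - 5 * x 0 ^ 2) = 0 := by
    have : ∀ x ∈ oddS 5 M, (M - 5 * x 0 ^ 2) = ∑ i, x i ^ 2 - 5 * x 0 ^ 2 := by
      intro x hx; rw [(mem_oddS.mp hx).2]
    rw [Finset.sum_congr rfl this, Finset.sum_sub_distrib, Finset.sum_comm,
      Finset.sum_congr rfl (fun i _ => h1 i), ← Finset.mul_sum]
    simp
  rw [← h2]
  have : ∀ s ∈ (Icc (-M) M).filter (fun s => Odd s),
      (M - 5 * s ^ 2) * ((oddS 4 (M - s ^ 2)).card : ℤ) =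
      ∑ x ∈ oddS 4 (M - s ^ 2), (M - 5 * s ^ 2) := by
    intro s _; rw [Finset.sum_const, nsmul_eq_mul, mul_comm]
  rw [Finset.sum_congr rfl this, Finset.sum_sigma']
  refine Finset.sum_nbij' (fun v => Fin.cons v.1 v.2) (fun x => ⟨x 0, Fin.tail x⟩) ?_ ?_ ?_ ?_ ?_
  · rintro ⟨s, x⟩ hv
    simp only [mem_sigma, mem_filter, mem_oddS] at hv
    rw [mem_oddS]
    refine ⟨fun i => ?_, ?_⟩
    · refine Fin.cases ?_ (fun j => ?_) i
      · simpa using hv.1.2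
      · simpa using hv.2.1 j
    · rw [Fin.sum_univ_succ]; simp [hv.2.2]
  · intro x hx
    have hx' := hx
    rw [mem_oddS] at hx
    simp only [oddS, mem_filter, Fintype.mem_piFinset] at hx'
    simp only [mem_sigma, mem_filter, mem_oddS]
    refine ⟨⟨hx'.1 0, hx.1 0⟩, fun i => hx.1 _, ?_⟩
    have h5 := hx.2
    rw [Fin.sum_univ_succ] at h5
    simp only [Fin.tail]
    linarith
  · intro v _; simp
  · intro x _; simp
  · intro v _; simp

lemma oddS_nonpos {N : ℤ} (hN : N ≤ 0) : (oddS 4 N).card = 0 := by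
  rw [Finset.card_eq_zero, Finset.eq_empty_iff_forall_notMem]
  intro x hx
  rw [mem_oddS] at hx
  have h0 : ∀ i, 0 < x i ^ 2 := fun i => by
    have := hx.1 i
    have : x i ≠ 0 := by rintro h; rw [h] at this; exact absurd this (by decide)
    positivity
  have := Finset.sum_pos (fun i (_ : i ∈ univ) => h0 i) univ_nonempty
  linarith [hx.2]

lemma odd_sq_mod {s : ℤ} (h : Odd s) : s ^ 2 % 8 = 1 := by
  obtain ⟨u, rfl⟩ := h
  obtain ⟨w, hw⟩ := Int.even_mul_succ_self u
  have : (2 * u + 1) ^ 2 = 8 * w + 1 := by linear_combination 4 * hw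
  omega

lemma oddS_eq (k : ℕ) : ((oddS 4 (8 * k + 4)).card : ℤ) = (oddS 4 4).card * divE (8 * k + 4) := by
  induction k using Nat.strong_induction_on with
  | _ k ih =>
    rcases Nat.eq_zero_or_pos k with rfl | hk
    · have h4 : (8 * ((0 : ℕ) : ℤ) + 4) = 4 := by norm_num
      rw [h4, divE_four, mul_one]
    set N : ℤ := 8 * k + 4 with hN
    set M : ℤ := N + 1 with hM
    have hMsq : ∀ t : ℤ, t ^ 2 ≠ M := by
      intro t ht
      rcases Int.even_or_odd t with h | h
      · obtain ⟨u, rfl⟩ := h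
        have : 4 * u ^ 2 = 8 * k + 5 := by rw [hM, hN] at ht; linarith
        omega
      · have := odd_sq_mod h
        omega
    have e1 := divE_rec M hMsq
    have e2 := oddS_rec M
    rw [← Finset.sum_filter_add_sum_filter_not _ (fun s => Odd s)] at e1
    have e3 : ∑ s ∈ (Icc (-M) M).filter (fun s => ¬ Odd s), (M - 5 * s ^ 2) * divE (M - s ^ 2) = 0 := by
      refine Finset.sum_eq_zero fun s hs => ?_
      have hs := (mem_filter.mp hs).2
      rw [Int.not_odd_iff_even] at hs
      obtain ⟨u, rfl⟩ := hs
      have : divE (M - (u + u) ^ 2) = 0 := by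
        unfold divE
        refine Finset.sum_eq_zero fun v hv => ?_
        exfalso
        have := (mem_filter.mp hv).2
        have h3 : 4 * (v.1 * v.2) + 4 * u ^ 2 = 8 * k + 5 := by rw [hM, hN] at this; linarith
        omega
      rw [this, mul_zero]
    rw [e3, add_zero] at e1
    set D : ℤ → ℤ := fun a => ((oddS 4 a).card : ℤ) - (oddS 4 4).card * divE a with hD
    have e4 : ∑ s ∈ (Icc (-M) M).filter (fun s => Odd s), (M - 5 * s ^ 2) * D (M - s ^ 2) = 0 := by
      have : ∀ s : ℤ, (M - 5 * s ^ 2) * D (M - s ^ 2) =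
        (M - 5 * s ^ 2) * ((oddS 4 (M - s ^ 2)).card : ℤ) -
          (oddS 4 4).card * ((M - 5 * s ^ 2) * divE (M - s ^ 2)) := fun s => by rw [hD]; ring
      simp only [this, Finset.sum_sub_distrib, ← Finset.mul_sum, e1, e2, mul_zero, sub_zero]
    have e5 : ∑ s ∈ (Icc (-M) M).filter (fun s => Odd s), (M - 5 * s ^ 2) * D (M - s ^ 2) =
        ∑ s ∈ ({1, -1} : Finset ℤ), (M - 5 * s ^ 2) * D (M - s ^ 2) := by
      symm
      refine Finset.sum_subset ?_ ?_
      · intro s hs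
        simp only [mem_insert, mem_singleton] at hs
        simp only [mem_filter, mem_Icc]
        rcases hs with rfl | rfl
        · exact ⟨⟨by omega, by omega⟩, by decide⟩
        · exact ⟨⟨by omega, by omega⟩, by decide⟩
      · intro s hs hs'
        simp only [mem_insert, mem_singleton, not_or] at hs'
        have hodd := (mem_filter.mp hs).2
        have hmod := odd_sq_mod hodd
        have hs9 : 9 ≤ s ^ 2 := by
          obtain ⟨u, rfl⟩ := hodd
          have : u ≠ 0 ∧ u ≠ -1 := by omega
          rcases lt_or_ge u 0 with h | h
          · have : u ≤ -2 := by omega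
            nlinarith
          · have : 1 ≤ u := by omega
            nlinarith
        have : D (M - s ^ 2) = 0 := by
          simp only [hD]
          rcases le_or_gt (M - s ^ 2) 0 with h | h
          · rw [oddS_nonpos h, divE_nonpos h, mul_zero, sub_zero, Nat.cast_zero]
          · obtain ⟨j, hj⟩ : ∃ j : ℕ, M - s ^ 2 = 8 * j + 4 := by
              refine ⟨((M - s ^ 2) / 8).toNat, ?_⟩
              omega
            rw [hj, ih j (by omega)]; ring
        rw [this, mul_zero]
    rw [e5, Finset.sum_pair (by norm_num)] at e4
    have e6 : M - 1 ^ 2 = N := by rw [hM]; ring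
    have e7 : M - (-1) ^ 2 = N := by rw [hM]; ring
    rw [e6, e7] at e4
    have e8 : (N - 4) * D N = 0 := by rw [hM] at e4; linarith
    have : D N = 0 := by
      rcases mul_eq_zero.mp e8 with h | h
      · omega
      · exact h
    rw [hD] at this
    simp only at this
    linarith

lemma oddS_four_pos : 1 ≤ (oddS 4 4).card := by
  rw [Nat.one_le_iff_ne_zero, Finset.card_ne_zero]
  refine ⟨fun _ => 1, mem_oddS.mpr ⟨fun _ => by decide, by simp⟩⟩

lemma oddS_ge {m : ℕ} (hm : Odd m) : m ≤ (oddS 4 (4 * m)).card := by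
  obtain ⟨k, rfl⟩ := hm
  have h1 := oddS_eq k
  have h2 := divE_ge (m := 2 * k + 1) (by omega)
  have h3 : (4 * ((2 * k + 1 : ℕ) : ℤ)) = 8 * k + 4 := by push_cast; ring
  rw [h3]
  have h4 : (4 * (2 * (k : ℤ) + 1)) = 8 * k + 4 := by ring
  rw [h4] at h2
  have h5 : (1 : ℤ) ≤ (oddS 4 4).card := by exact_mod_cast oddS_four_pos
  zify
  rw [h1]
  nlinarith

/-- the sphere as a finset -/
def sph (n lam : ℕ) : Finset (Fin n → ℤ) :=
  (Fintype.piFinset (fun _ => Icc (-(lam : ℤ)) lam)).filter (fun x => ∑ i, x i ^ 2 = (lam : ℤ))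

lemma mem_sph {n lam : ℕ} {x : Fin n → ℤ} : x ∈ sph n lam ↔ ∑ i, x i ^ 2 = (lam : ℤ) := by
  simp only [sph, mem_filter, Fintype.mem_piFinset, mem_Icc, and_iff_right_iff_imp]
  intro h i
  have h1 : x i ^ 2 ≤ lam := by
    rw [← h]
    exact Finset.single_le_sum (f := fun i => x i ^ 2) (fun j _ => sq_nonneg _) (mem_univ i)
  exact abs_le.mp ((int_abs_le_sq _).trans h1)

lemma coe_sph (n lam : ℕ) :
    (sph n lam : Set (Fin n → ℤ)) = {x : Fin n → ℤ | ∑ i, (x i) ^ 2 = (lam : ℤ)} := by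
  ext x; simp [mem_sph]

lemma sphereCount_eq (n lam : ℕ) : sphereCount n lam = (sph n lam).card := by
  rw [sphereCount, ← coe_sph, Set.ncard_coe_finset]

lemma sph4_ge {m : ℕ} (hm : Odd m) : m ≤ 16 * (sph 4 m).card := by
  refine (oddS_ge hm).trans ?_
  let E : Finset (Fin 4 → ℤ) := Fintype.piFinset (fun _ => ({1, -1} : Finset ℤ))
  have hE : E.card = 16 := by simp [E, Fintype.card_piFinset]
  rw [← hE, ← Finset.card_product]
  let φ : (Fin 4 → ℤ) × (Fin 4 → ℤ) → (Fin 4 → ℤ) := fun v =>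
    let e := v.1
    let y := v.2
    ![y 0 * e 0 - y 1 * e 1 - y 2 * e 2 - y 3 * e 3,
      y 0 * e 1 + y 1 * e 0 + y 2 * e 3 - y 3 * e 2,
      y 0 * e 2 - y 1 * e 3 + y 2 * e 0 + y 3 * e 1,
      y 0 * e 3 + y 1 * e 2 - y 2 * e 1 + y 3 * e 0]
  refine le_trans (Finset.card_le_card ?_) (Finset.card_image_le (f := φ))
  intro x hx
  rw [mem_oddS] at hx
  obtain ⟨hodd, hsum⟩ := hx
  have hek : ∀ i, ∃ e k : ℤ, (e = 1 ∨ e = -1) ∧ x i = e + 4 * k := by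
    intro i
    obtain ⟨u, hu⟩ := hodd i
    rcases Int.even_or_odd u with ⟨w, hw⟩ | ⟨w, hw⟩
    · exact ⟨1, w, Or.inl rfl, by omega⟩
    · exact ⟨-1, w + 1, Or.inr rfl, by omega⟩
  choose e k he hk using hek
  have he2 : ∀ i, e i ^ 2 = 1 := fun i => by rcases he i with h | h <;> rw [h] <;> norm_num
  let y : Fin 4 → ℤ := ![1 + k 0 * e 0 + k 1 * e 1 + k 2 * e 2 + k 3 * e 3,
      -k 0 * e 1 + k 1 * e 0 - k 2 * e 3 + k 3 * e 2,
      -k 0 * e 2 + k 1 * e 3 + k 2 * e 0 - k 3 * e 1,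
      -k 0 * e 3 - k 1 * e 2 + k 2 * e 1 + k 3 * e 0]
  have hx0 : x = φ (e, y) := by
    ext i
    fin_cases i
    · simp [φ, y, hk]
      linear_combination (-k 0) * (he2 0) - k 0 * he2 1 - k 0 * he2 2 - k 0 * he2 3
    · simp [φ, y, hk]
      linear_combination (-k 1) * (he2 0) - k 1 * he2 1 - k 1 * he2 2 - k 1 * he2 3
    · simp [φ, y, hk]
      linear_combination (-k 2) * (he2 0) - k 2 * he2 1 - k 2 * he2 2 - k 2 * he2 3
    · simp [φ, y, hk]
      linear_combination (-k 3) * (he2 0) - k 3 * he2 1 - k 3 * he2 2 - k 3 * he2 3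
  rw [Finset.mem_image]
  refine ⟨(e, y), ?_, hx0.symm⟩
  rw [Finset.mem_product]
  refine ⟨?_, ?_⟩
  · simp only [E, Fintype.mem_piFinset, mem_insert, mem_singleton]
    exact he
  · rw [mem_sph]
    simp only
    generalize y = y at hx0
    rw [hx0] at hsum
    simp only [Fin.sum_univ_four, φ, Matrix.cons_val] at hsum ⊢
    have : 4 * (y 0 ^ 2 + y 1 ^ 2 + y 2 ^ 2 + y 3 ^ 2) = 4 * (m : ℤ) := by
      rw [← hsum]
      linear_combination -(y 0 ^ 2 + y 1 ^ 2 + y 2 ^ 2 + y 3 ^ 2) * (he2 0 + he2 1 + he2 2 + he2 3)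
    linarith

lemma sph_succ_ge (n lam : ℕ) (S : Finset ℤ) (hS : ∀ s ∈ S, s ^ 2 ≤ (lam : ℤ)) :
    ∑ s ∈ S, (sph n (lam - s.natAbs ^ 2)).card ≤ (sph (n + 1) lam).card := by
  rw [← Finset.card_sigma]
  refine Finset.card_le_card_of_injOn (fun v => Fin.cons v.1 v.2) ?_ ?_
  · rintro ⟨s, x⟩ hv
    simp only [coe_sigma, Set.mem_sigma_iff, mem_coe, mem_sph] at hv
    simp only [mem_coe, mem_sph, Fin.sum_univ_succ, Fin.cons_zero, Fin.cons_succ]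
    rw [hv.2]
    have h1 := hS s hv.1
    have h2 : ((s.natAbs : ℤ)) ^ 2 = s ^ 2 := Int.natAbs_sq s
    have h3 : s.natAbs ^ 2 ≤ lam := by zify; rw [sq_abs]; exact h1
    push_cast [Nat.cast_sub h3]
    rw [sq_abs]; ring
  · rintro ⟨s, x⟩ _ ⟨s', x'⟩ _ h
    have h' := Fin.cons_inj.mp h
    obtain ⟨h1, h2⟩ := h'
    simp only at h1 h2
    subst h1; subst h2; rfl

lemma sph_pos {n lam : ℕ} (hn : 4 ≤ n) : 1 ≤ (sph n lam).card := by
  obtain ⟨k, rfl⟩ := Nat.exists_eq_add_of_le hn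
  rw [Nat.one_le_iff_ne_zero, Finset.card_ne_zero]
  obtain ⟨a, b, c, d, h⟩ := Nat.sum_four_squares lam
  refine ⟨Fin.append ![(a : ℤ), b, c, d] (fun _ => 0), mem_sph.mpr ?_⟩
  rw [Fin.sum_univ_add]
  simp [Fin.sum_univ_four]
  exact_mod_cast h

lemma sph5_ge : ∃ c : ℝ, 0 < c ∧ ∀ lam : ℕ, 1 ≤ lam → c * (lam : ℝ) ^ ((3 : ℝ) / 2) ≤ (sph 5 lam).card := by
  refine ⟨1 / 10000, by norm_num, fun lam hl => ?_⟩
  have hl0 : (0 : ℝ) < lam := by exact_mod_cast hl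
  have hpow : (lam : ℝ) ^ ((3 : ℝ) / 2) = lam * Real.sqrt lam := by
    rw [Real.sqrt_eq_rpow, ← Real.rpow_one_add' hl0.le (by norm_num)]; norm_num
  rw [hpow]
  set T := Nat.sqrt lam with hT
  have hT1 : T * T ≤ lam := Nat.sqrt_le lam
  have hT2 : lam < (T + 1) * (T + 1) := Nat.lt_succ_sqrt lam
  have hT0 : 1 ≤ T := by
    by_contra h
    have : T = 0 := by omega
    rw [this] at hT2; omega
  have hsq : Real.sqrt lam ≤ 2 * T := by
    rw [Real.sqrt_le_left (by positivity)]
    have : (lam : ℝ) ≤ (T + 1) * (T + 1) := by exact_mod_cast hT2.le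
    have h1 : (1 : ℝ) ≤ T := by exact_mod_cast hT0
    nlinarith
  rcases Nat.lt_or_ge T 8 with h8 | h8
  · have h1 : (1 : ℝ) ≤ (sph 5 lam).card := by exact_mod_cast sph_pos (by norm_num)
    have h2 : (T : ℝ) ≤ 7 := by exact_mod_cast Nat.le_of_lt_succ h8
    have h3 : (lam : ℝ) ≤ 64 := by
      have : lam < 64 := by nlinarith
      exact_mod_cast this.le
    have h4 : Real.sqrt lam ≤ 14 := by linarith
    have := Real.sqrt_nonneg (lam : ℝ)
    nlinarith
  · set k := T / 4 with hk
    have hk1 : 4 * k ≤ T := Nat.mul_div_le T 4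
    have hk2 : T < 4 * k + 4 := by omega
    have hk3 : 2 ≤ k := by omega
    -- the points
    set r := (lam + 1) % 2 with hr
    have hr2 : r < 2 := Nat.mod_lt _ (by norm_num)
    let S : Finset ℤ := (Finset.range k).image (fun j : ℕ => ((2 * j + r : ℕ) : ℤ))
    have hScard : S.card = k := by
      rw [Finset.card_image_of_injective, Finset.card_range]
      intro a b hab
      simp only at hab
      have : 2 * a + r = 2 * b + r := by exact_mod_cast hab
      omega
    have hSle : ∀ j, j < k → 4 * (2 * j + r) ^ 2 ≤ lam := by
      intro j hj
      have h1 : 2 * (2 * j + r) ≤ T := by omega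
      calc 4 * (2 * j + r) ^ 2 = (2 * (2 * j + r)) * (2 * (2 * j + r)) := by ring
        _ ≤ T * T := Nat.mul_le_mul h1 h1
        _ ≤ lam := hT1
    have h1 := sph_succ_ge 4 lam S (by
      intro s hs
      obtain ⟨j, hj, rfl⟩ := Finset.mem_image.mp hs
      have := hSle j (Finset.mem_range.mp hj)
      have h' : (2 * j + r) ^ 2 ≤ lam := by omega
      exact_mod_cast h')
    have h2 : ∀ s ∈ S, lam ≤ 32 * (sph 4 (lam - s.natAbs ^ 2)).card := by
      intro s hs
      obtain ⟨j, hj, rfl⟩ := Finset.mem_image.mp hs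
      have h3 := hSle j (Finset.mem_range.mp hj)
      rw [Int.natAbs_natCast]
      have hodd : Odd (lam - (2 * j + r) ^ 2) := by
        have h' : (2 * j + r) ^ 2 ≤ lam := by omega
        rw [Nat.odd_sub h']
        have : Even ((2 * j + r) ^ 2) ↔ Even r := by
          rw [Nat.even_pow' (by norm_num), Nat.even_add]
          simp
        rw [this, Nat.odd_iff, Nat.even_iff]
        omega
      have h4 := sph4_ge hodd
      omega
    have h3 : k * lam ≤ 32 * (sph 5 lam).card := by
      calc k * lam = ∑ s ∈ S, lam := by rw [Finset.sum_const, hScard, smul_eq_mul]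
        _ ≤ ∑ s ∈ S, 32 * (sph 4 (lam - s.natAbs ^ 2)).card := Finset.sum_le_sum h2
        _ = 32 * ∑ s ∈ S, (sph 4 (lam - s.natAbs ^ 2)).card := by rw [Finset.mul_sum]
        _ ≤ _ := Nat.mul_le_mul_left _ h1
    have h4 : (k : ℝ) * lam ≤ 32 * (sph 5 lam).card := by exact_mod_cast h3
    have h5 : (T : ℝ) ≤ 8 * k := by
      have : T ≤ 8 * k := by omega
      exact_mod_cast this
    nlinarith

lemma sph_ge (n : ℕ) (hn : 5 ≤ n) : ∃ c : ℝ, 0 < c ∧ ∀ lam : ℕ, 1 ≤ lam →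
    c * (lam : ℝ) ^ ((n : ℝ) / 2 - 1) ≤ (sph n lam).card := by
  induction n, hn using Nat.le_induction with
  | base =>
    obtain ⟨c, hc, h⟩ := sph5_ge
    refine ⟨c, hc, fun lam hl => ?_⟩
    convert h lam hl using 3
    norm_num
  | succ n hn ih =>
    obtain ⟨c, hc, h⟩ := ih
    refine ⟨c * (1 / 2) ^ ((n : ℝ) / 2 - 1) / 4, by positivity, fun lam hl => ?_⟩
    have hl0 : (0 : ℝ) < lam := by exact_mod_cast hl
    have hexp : 0 ≤ (n : ℝ) / 2 - 1 := by
      have : (5 : ℝ) ≤ n := by exact_mod_cast hn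
      linarith
    set T := Nat.sqrt lam with hT
    have hT1 : T * T ≤ lam := Nat.sqrt_le lam
    have hT2 : lam < (T + 1) * (T + 1) := Nat.lt_succ_sqrt lam
    have hT0 : 1 ≤ T := by
      by_contra h
      have : T = 0 := by omega
      rw [this] at hT2; omega
    have hsq : Real.sqrt lam ≤ 2 * T := by
      rw [Real.sqrt_le_left (by positivity)]
      have : (lam : ℝ) ≤ (T + 1) * (T + 1) := by exact_mod_cast hT2.le
      have h1 : (1 : ℝ) ≤ T := by exact_mod_cast hT0
      nlinarith
    let S : Finset ℤ := (Finset.range (T / 2 + 1)).image (fun j : ℕ => (j : ℤ))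
    have hScard : S.card = T / 2 + 1 := by
      rw [Finset.card_image_of_injective _ Nat.cast_injective, Finset.card_range]
    have hSle : ∀ s ∈ S, 2 * s.natAbs ^ 2 ≤ lam := by
      intro s hs
      obtain ⟨j, hj, rfl⟩ := Finset.mem_image.mp hs
      rw [Finset.mem_range] at hj
      rw [Int.natAbs_natCast]
      have : 2 * j ≤ T := by omega
      nlinarith
    have h1 := sph_succ_ge n lam S (by
      intro s hs
      have h3 := hSle s hs
      have h2 : ((s.natAbs : ℤ)) ^ 2 = s ^ 2 := Int.natAbs_sq s
      rw [← h2]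
      have : s.natAbs ^ 2 ≤ lam := by omega
      exact_mod_cast this)
    have h2 : ∀ s ∈ S, c * ((1 / 2) ^ ((n : ℝ) / 2 - 1) * (lam : ℝ) ^ ((n : ℝ) / 2 - 1)) ≤
        (sph n (lam - s.natAbs ^ 2)).card := by
      intro s hs
      have h3 := hSle s hs
      refine le_trans ?_ (h (lam - s.natAbs ^ 2) (by omega))
      rw [← Real.mul_rpow (by norm_num) hl0.le]
      gcongr
      have : lam ≤ 2 * (lam - s.natAbs ^ 2) := by omega
      have : (lam : ℝ) ≤ 2 * ((lam - s.natAbs ^ 2 : ℕ) : ℝ) := by exact_mod_cast this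
      linarith
    have h3 := Finset.sum_le_sum h2
    rw [Finset.sum_const, hScard, nsmul_eq_mul] at h3
    have h4 : ∑ s ∈ S, ((sph n (lam - s.natAbs ^ 2)).card : ℝ) ≤ (sph (n + 1) lam).card := by
      exact_mod_cast h1
    refine le_trans (le_trans ?_ h3) h4
    have h5 : (lam : ℝ) ^ (((n + 1 : ℕ) : ℝ) / 2 - 1) = Real.sqrt lam * (lam : ℝ) ^ ((n : ℝ) / 2 - 1) := by
      rw [Real.sqrt_eq_rpow, ← Real.rpow_add hl0]
      congr 1; push_cast; ring
    rw [h5]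
    have h6 : (T : ℝ) ≤ 2 * ((T / 2 + 1 : ℕ) : ℝ) := by
      have : T ≤ 2 * (T / 2 + 1) := by omega
      exact_mod_cast this
    have h7 : Real.sqrt lam / 4 ≤ ((T / 2 + 1 : ℕ) : ℝ) := by linarith
    calc _ = (Real.sqrt lam / 4) * (c * ((1 / 2) ^ ((n : ℝ) / 2 - 1) * (lam : ℝ) ^ ((n : ℝ) / 2 - 1))) := by ring
      _ ≤ _ := by gcongr

lemma card_two_tors (q : ℕ) [NeZero q] : (univ.filter fun h : ZMod q => 2 * h = 0).card ≤ 2 := by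
  have : (univ.filter fun h : ZMod q => 2 * h = 0).card ≤ ({0, q / 2} : Finset ℕ).card := by
    apply Finset.card_le_card_of_injOn (fun h => h.val)
    · intro h hh
      simp only [coe_filter, mem_univ, true_and, Set.mem_setOf_eq] at hh
      have h1 : ((2 * h.val : ℕ) : ZMod q) = 0 := by
        push_cast; rw [ZMod.natCast_zmod_val]; exact hh
      rw [ZMod.natCast_eq_zero_iff] at h1
      have h2 := ZMod.val_lt h
      obtain ⟨k, hk⟩ := h1
      have hk2 : k < 2 := by
        by_contra hc
        have : q * 2 ≤ q * k := Nat.mul_le_mul_left _ (by omega)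
        omega
      simp only [coe_insert, coe_singleton, Set.mem_insert_iff, Set.mem_singleton_iff]
      interval_cases k <;> omega
    · intro x _ y _ hxy
      exact ZMod.val_injective q hxy
  exact this.trans (Finset.card_le_two)

lemma gauss_bound (q : ℕ) [NeZero q] (a n : ZMod q) (ha : IsUnit a) :
    ‖∑ r : ZMod q, ZMod.stdAddChar (a * r ^ 2 + n * r)‖ ^ 2 ≤ 2 * q := by
  set e := ZMod.stdAddChar (N := q) with he
  set G := ∑ r : ZMod q, e (a * r ^ 2 + n * r) with hG
  have h1 : G * (starRingEnd ℂ) G = ∑ h : ZMod q, e (a * h ^ 2 + n * h) * (if 2 * h = 0 then (q : ℂ) else 0) := by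
    rw [hG, map_sum, Finset.sum_mul_sum, Finset.sum_comm]
    have : ∀ s : ZMod q, ∑ r : ZMod q, e (a * r ^ 2 + n * r) * (starRingEnd ℂ) (e (a * s ^ 2 + n * s))
        = ∑ h : ZMod q, e (a * h ^ 2 + n * h) * e (s * (2 * a * h)) := by
      intro s
      rw [← Equiv.sum_comp (Equiv.addRight s)]
      apply Finset.sum_congr rfl
      intro h _
      rw [← AddChar.map_neg_eq_conj, ← AddChar.map_add_eq_mul, ← AddChar.map_add_eq_mul]
      congr 1
      simp only [Equiv.coe_addRight]
      ring
    rw [Finset.sum_congr rfl (fun s _ => this s), Finset.sum_comm]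
    apply Finset.sum_congr rfl
    intro h _
    rw [← Finset.mul_sum]
    congr 1
    rw [AddChar.sum_mulShift _ (ZMod.isPrimitive_stdAddChar q)]
    have : 2 * a * h = 0 ↔ 2 * h = 0 := by
      rw [show 2 * a * h = a * (2 * h) by ring]
      exact ha.mul_right_eq_zero
    simp only [this, ZMod.card]
    split_ifs <;> simp
  have h2 : ‖G‖ ^ 2 = ‖G * (starRingEnd ℂ) G‖ := by
    rw [norm_mul, RCLike.norm_conj, sq]
  rw [h2, h1]
  calc _ ≤ ∑ h : ZMod q, ‖e (a * h ^ 2 + n * h) * (if 2 * h = 0 then (q : ℂ) else 0)‖ := norm_sum_le _ _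
    _ = ∑ h : ZMod q, if 2 * h = 0 then (q:ℝ) else 0 := by
        apply Finset.sum_congr rfl
        intro h _
        rw [norm_mul, AddChar.norm_apply, one_mul]
        split_ifs <;> simp
    _ = ((univ.filter fun h : ZMod q => 2 * h = 0).card : ℝ) * q := by
        rw [← Finset.sum_filter]; simp
    _ ≤ 2 * q := by
        gcongr
        exact_mod_cast card_two_tors q

lemma summable_gauss {T : ℝ} (hT : 0 < T) : Summable fun n : ℤ => Real.exp (-Real.pi * T * n ^ 2) := by
  have := summable_pow_mul_jacobiTheta₂_term_bound 0 hT 0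
  refine this.congr fun n => ?_
  simp
  ring_nf

lemma theta_id (w : ℂ) (hw : 0 < w.re) (q : ℕ) [NeZero q] (a : ℤ) :
    ∑' x : ℤ, Complex.exp (-Real.pi * w * x ^ 2 + 2 * Real.pi * Complex.I * a * x ^ 2 / q)
    = 1 / (w * q ^ 2) ^ (1 / 2 : ℂ) * ∑' n : ℤ, Complex.exp (-Real.pi / (w * q ^ 2) * n ^ 2) *
      ∑ r : Fin q, Complex.exp (2 * Real.pi * Complex.I * (a * r ^ 2 + n * r) / q) := by
  have hq : (q : ℂ) ≠ 0 := by exact_mod_cast NeZero.ne q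
  have hw0 : w ≠ 0 := by rintro rfl; simp at hw
  have hs : Summable fun x : ℤ => Complex.exp (-Real.pi * w * x ^ 2 + 2 * Real.pi * Complex.I * a * x ^ 2 / q) := by
    apply Summable.of_norm
    refine (summable_gauss hw).congr fun x => ?_
    rw [Complex.norm_exp]
    congr 1
    have : (-Real.pi * w * x ^ 2 + 2 * Real.pi * Complex.I * a * x ^ 2 / q) =
      w * ((-Real.pi * x ^ 2 : ℝ) : ℂ)+ Complex.I * ((2 * Real.pi * a * x ^ 2 / q : ℝ) : ℂ) := by
      push_cast; ring
    rw [this]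
    simp only [Complex.add_re, Complex.re_mul_ofReal, Complex.I_re]
    ring
  have hq2 : 0 < (w * q ^ 2).re := by
    have : w * (q:ℂ) ^ 2 = w * ((q ^ 2 : ℝ) : ℂ) := by push_cast; ring
    rw [this, Complex.re_mul_ofReal]
    have : (0:ℝ) < q := by exact_mod_cast Nat.pos_of_ne_zero (NeZero.ne q)
    positivity
  rw [← (Int.divModEquiv q).symm.tsum_eq]
  have hs2 := (Int.divModEquiv q).symm.summable_iff.mpr hs
  rw [← (Equiv.prodComm _ _).summable_iff] at hs2
  rw [← (Equiv.prodComm _ _).tsum_eq]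
  rw [Summable.tsum_prod (by exact hs2), tsum_fintype]
  have key : ∀ r : Fin q, ∑' k : ℤ, Complex.exp (-Real.pi * w * (((Int.divModEquiv q).symm (k, r) : ℤ) : ℂ) ^ 2 + 2 * Real.pi * Complex.I * a * (((Int.divModEquiv q).symm (k, r) : ℤ) : ℂ) ^ 2 / q)
    = 1 / (w * q ^ 2) ^ (1 / 2 : ℂ) * ∑' n : ℤ, Complex.exp (-Real.pi / (w * q ^ 2) * n ^ 2) * Complex.exp (2 * Real.pi * Complex.I * (a * r ^ 2 + n * r) / q) := by
    intro r
    have h1 : ∀ k : ℤ, Complex.exp (-Real.pi * w * (((Int.divModEquiv q).symm (k, r) : ℤ) : ℂ) ^ 2 + 2 * Real.pi * Complex.I * a * (((Int.divModEquiv q).symm (k, r) : ℤ) : ℂ) ^ 2 / q)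
      = Complex.exp (2 * Real.pi * Complex.I * a * r ^ 2 / q - Real.pi * w * r ^ 2) *
        Complex.exp (-Real.pi * (w * q ^ 2) * k ^ 2 + 2 * Real.pi * (- w * q * r) * k) := by
      intro k
      rw [← Complex.exp_add, Complex.exp_eq_exp_iff_exists_int]
      refine ⟨a * (k ^ 2 * q + 2 * k * r), ?_⟩
      simp only [Int.divModEquiv_symm_apply]
      push_cast
      field_simp
      ring
    rw [tsum_congr h1, tsum_mul_left, Complex.tsum_exp_neg_quadratic hq2, mul_left_comm, ← tsum_mul_left]
    congr 1
    apply tsum_congr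
    intro n
    rw [← Complex.exp_add, ← Complex.exp_add]
    congr 1
    have hI := Complex.I_sq
    field_simp
    linear_combination (w^2 * q ^2 * r ^2) * (-1) * hI
  refine (Finset.sum_congr rfl fun r _ => key r).trans ?_
  rw [← Finset.mul_sum]
  congr 1
  rw [← Summable.tsum_finsetSum]
  · apply tsum_congr; intro n; rw [Finset.mul_sum]
  · intro r _
    apply Summable.of_norm
    have hpos : 0 < (1 / (w * q ^ 2)).re := by
      rw [one_div, Complex.inv_re]
      apply div_pos hq2
      rw [Complex.normSq_pos]; exact fun h => by simp [h] at hq2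
    refine (summable_gauss hpos).congr fun n => ?_
    rw [← Complex.exp_add, Complex.norm_exp]
    congr 1
    have : (-Real.pi / (w * q ^ 2) * n ^ 2 + 2 * Real.pi * Complex.I * (a * r ^ 2 + n * r) / q) =
      (1 / (w * q ^ 2)) * ((-Real.pi * n ^ 2 : ℝ) : ℂ)+ Complex.I * ((2 * Real.pi * (a * r ^ 2 + n * r) / q : ℝ) : ℂ) := by
      push_cast; field_simp
    rw [this]
    simp only [Complex.add_re, Complex.re_mul_ofReal, Complex.I_re]
    ring

lemma gauss_bound' (q : ℕ) [NeZero q] (a n : ℤ) (ha : IsCoprime a (q:ℤ)) :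
    ‖∑ r : Fin q, Complex.exp (2 * Real.pi * Complex.I * (a * r ^ 2 + n * r) / q)‖ ≤ Real.sqrt (2 * q) := by
  have hu : IsUnit (a : ZMod q) := by
    obtain ⟨u, v, h⟩ := ha
    have : ((u * a + v * q : ℤ) : ZMod q) = 1 := by rw [h]; simp
    push_cast at this
    simp at this
    exact IsUnit.of_mul_eq_one (u : ZMod q) (by rw [mul_comm]; exact this)
  have h := gauss_bound q (a : ZMod q) (n : ZMod q) hu
  apply Real.le_sqrt_of_sq_le
  convert h using 3
  refine Finset.sum_bij (fun (r : Fin q) _ => ((r : ℕ) : ZMod q)) (by simp) ?_ ?_ ?_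
  · intro r _ s _ hrs
    rw [ZMod.natCast_eq_natCast_iff'] at hrs
    rw [Nat.mod_eq_of_lt r.2, Nat.mod_eq_of_lt s.2] at hrs
    exact Fin.ext hrs
  · intro b _
    exact ⟨⟨b.val, ZMod.val_lt b⟩, by simp, by simp⟩
  · intro r _
    have := ZMod.stdAddChar_coe (N := q) (a * r ^ 2 + n * r)
    push_cast at this
    rw [this]

lemma theta_bound : ∃ B : ℝ, 0 < B ∧ ∀ lam : ℕ, 1 ≤ lam → ∀ (q : ℕ) (a : ℤ) (β : ℝ), 1 ≤ q → IsCoprime a (q:ℤ) →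
    q ≤ Nat.sqrt lam → q * |β| ≤ 1 / (Nat.sqrt lam + 1) →
    ‖∑' x : ℤ, Complex.exp (-Real.pi * (1 / lam - 2 * Complex.I * β) * x ^ 2 + 2 * Real.pi * Complex.I * a * x ^ 2 / q)‖
      ≤ B * (q * (1 / lam + |β|)) ^ (-(1/2) : ℝ) := by
  refine ⟨Real.sqrt 2 * (∑' n : ℤ, Real.exp (-Real.pi * (1/5) * n ^ 2)) * Real.sqrt 2, ?_, ?_⟩
  · have : 0 < ∑' n : ℤ, Real.exp (-Real.pi * (1/5) * n ^ 2) :=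
      (summable_gauss (by norm_num)).tsum_pos (fun _ => (Real.exp_pos _).le) 0 (Real.exp_pos _)
    positivity
  intro lam hlam q a β hq ha hqs hβ
  have : NeZero q := ⟨by omega⟩
  set w : ℂ := 1 / lam - 2 * Complex.I * β with hwdef
  have hl : (0:ℝ) < lam := by exact_mod_cast hlam
  have hq0 : (0:ℝ) < q := by exact_mod_cast hq
  have hre : w.re = 1 / lam := by
    rw [hwdef]
    have : (1 / lam - 2 * Complex.I * β : ℂ) = ((1 / lam : ℝ) : ℂ) - Complex.I * ((2 * β : ℝ) : ℂ) := by push_cast; ring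
    rw [this]; simp only [Complex.sub_re, Complex.re_mul_ofReal, Complex.I_re, Complex.ofReal_re]; ring
  have him : w.im = - 2 * β := by
    rw [hwdef]
    have : (1 / lam - 2 * Complex.I * β : ℂ) = ((1 / lam : ℝ) : ℂ) - Complex.I * ((2 * β : ℝ) : ℂ) := by push_cast; ring
    rw [this]; simp only [Complex.sub_im, Complex.im_mul_ofReal, Complex.I_im, Complex.ofReal_im]; ring
  have hw : 0 < w.re := by rw [hre]; positivity
  have hns : Complex.normSq w = (1 / lam) ^ 2 + 4 * β ^ 2 := by
    rw [Complex.normSq_apply, hre, him]; ring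
  have hw0 : w ≠ 0 := by intro h; rw [h] at hw; simp at hw
  rw [theta_id w hw q a, norm_mul]
  have hsq : (lam : ℝ) < (Nat.sqrt lam + 1) ^ 2 := by
    have := Nat.lt_succ_sqrt lam
    have h2 : ((lam:ℕ):ℝ) < ((Nat.sqrt lam).succ * (Nat.sqrt lam).succ : ℕ) := by exact_mod_cast this
    push_cast at h2; nlinarith
  have hsq2 : (q:ℝ) ^ 2 ≤ lam := by
    have h1 := Nat.sqrt_le lam
    have : q * q ≤ lam := (Nat.mul_le_mul hqs hqs).trans h1
    have h2 : ((q * q : ℕ):ℝ) ≤ lam := by exact_mod_cast this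
    push_cast at h2; nlinarith
  have hT : 1 / 5 ≤ (1 / (w * q ^ 2)).re := by
    have e1 : (1 / (w * q ^ 2)) = w⁻¹ * (((q:ℝ) ^ 2)⁻¹ : ℝ) := by
      push_cast; field_simp
    rw [e1, Complex.re_mul_ofReal, Complex.inv_re, hns, hre]
    have hb2 : (q:ℝ) ^ 2 * β ^ 2 * lam ≤ 1 := by
      have h3 : (q * |β|) ^ 2 ≤ (1 / (Nat.sqrt lam + 1)) ^ 2 := by gcongr
      rw [mul_pow, sq_abs, div_pow] at h3
      calc (q:ℝ) ^ 2 * β ^ 2 * lam ≤ (1 ^ 2 / (Nat.sqrt lam + 1 : ℝ) ^ 2) * (Nat.sqrt lam + 1 : ℝ) ^ 2 := by gcongr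
        _ = 1 := by field_simp
    rw [div_mul_eq_mul_div, le_div_iff₀ (by positivity)]
    have : (1:ℝ) / lam * ((q:ℝ) ^ 2)⁻¹ = 1 / (lam * q ^ 2) := by field_simp
    rw [this, le_div_iff₀ (by positivity)]
    have : 1 / 5 * ((1 / (lam:ℝ)) ^ 2 + 4 * β ^ 2) * (lam * q ^ 2) = 1 / 5 * (q ^ 2 / lam + 4 * (q ^ 2 * β ^ 2 * lam)) := by
      field_simp
    rw [this]
    have : (q:ℝ) ^ 2 / lam ≤ 1 := by rw [div_le_one hl]; exact hsq2
    linarith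
  have hsum := summable_gauss (T := 1/5) (by norm_num)
  have hb : ‖∑' n : ℤ, Complex.exp (-Real.pi / (w * q ^ 2) * n ^ 2) *
      ∑ r : Fin q, Complex.exp (2 * Real.pi * Complex.I * (a * r ^ 2 + n * r) / q)‖ ≤
      Real.sqrt (2 * q) * ∑' n : ℤ, Real.exp (-Real.pi * (1/5) * n ^ 2) := by
    rw [← tsum_mul_left]
    apply tsum_of_norm_bounded (hsum.mul_left _).hasSum
    intro n
    rw [norm_mul, mul_comm]
    apply mul_le_mul (gauss_bound' q a n ha) _ (norm_nonneg _) (Real.sqrt_nonneg _)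
    rw [Complex.norm_exp]
    apply Real.exp_le_exp.mpr
    have : (-Real.pi / (w * q ^ 2) * n ^ 2) = (1 / (w * q ^ 2)) * ((-Real.pi * n ^ 2 : ℝ) : ℂ) := by
      push_cast; ring
    rw [this, Complex.re_mul_ofReal]
    have : 0 ≤ Real.pi * (n:ℝ) ^ 2 := by positivity
    nlinarith
  have hnw : (q:ℝ) * (1 / lam + |β|) * q ≤ 2 * ‖w * q ^ 2‖ := by
    rw [norm_mul, norm_pow, Complex.norm_natCast]
    have h1 : 1 / lam ≤ ‖w‖ := by rw [← hre]; exact Complex.re_le_norm w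
    have h2 : |β| ≤ ‖w‖ := by
      have := Complex.abs_im_le_norm w
      rw [him, abs_mul] at this
      norm_num at this
      have := abs_nonneg β; linarith
    have : (q:ℝ)^2 * (1 / lam + |β|) ≤ q ^ 2 * (2 * ‖w‖) := by gcongr; linarith
    nlinarith
  have hX : 0 < (q:ℝ) * (1 / lam + |β|) := by positivity
  have hn1 : ‖1 / (w * q ^ 2) ^ (1 / 2 : ℂ)‖ ≤ Real.sqrt 2 * ((q:ℝ) * (1 / lam + |β|)) ^ (-(1/2) : ℝ) * (Real.sqrt q)⁻¹ := by
    rw [norm_div, norm_one]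
    have e : (1 / 2 : ℂ) = ((1/2 : ℝ) : ℂ) := by push_cast; rfl
    rw [e, Complex.norm_cpow_real, ← Real.sqrt_eq_rpow, Real.rpow_neg hX.le, ← Real.sqrt_eq_rpow]
    have h1 : Real.sqrt (q * (1 / lam + |β|)) * Real.sqrt q ≤ Real.sqrt 2 * Real.sqrt ‖w * q ^ 2‖ := by
      rw [← Real.sqrt_mul hX.le, ← Real.sqrt_mul (by norm_num)]
      exact Real.sqrt_le_sqrt hnw
    have p1 : 0 < Real.sqrt (q * (1 / lam + |β|)) := Real.sqrt_pos.mpr hX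
    have p2 : 0 < Real.sqrt q := Real.sqrt_pos.mpr hq0
    have p3 : 0 < Real.sqrt ‖w * q ^ 2‖ := Real.sqrt_pos.mpr (by
      apply norm_pos_iff.mpr; apply mul_ne_zero hw0
      exact pow_ne_zero _ (by exact_mod_cast NeZero.ne q))
    rw [div_le_iff₀ p3]
    calc 1 = (Real.sqrt (q * (1 / lam + |β|)) * Real.sqrt q) * ((Real.sqrt (q * (1 / lam + |β|)))⁻¹ * (Real.sqrt q)⁻¹) := by
            field_simp
      _ ≤ (Real.sqrt 2 * Real.sqrt ‖w * q ^ 2‖) * ((Real.sqrt (q * (1 / lam + |β|)))⁻¹ * (Real.sqrt q)⁻¹) :=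
            mul_le_mul_of_nonneg_right h1 (by positivity)
      _ = _ := by ring
  calc _ ≤ (Real.sqrt 2 * ((q:ℝ) * (1 / lam + |β|)) ^ (-(1/2) : ℝ) * (Real.sqrt q)⁻¹) * (Real.sqrt (2 * q) * ∑' n : ℤ, Real.exp (-Real.pi * (1/5) * n ^ 2)) := by
        apply mul_le_mul hn1 hb (norm_nonneg _)
        positivity
    _ = _ := by
        have p2 : 0 < Real.sqrt q := Real.sqrt_pos.mpr hq0
        rw [Real.sqrt_mul (by norm_num)]
        field_simp

/-- truncated Gaussian Weyl sum -/
def KT (lam : ℕ) (T : ℤ) (α : ℝ) : ℂ :=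
  ∑ x ∈ Icc (-T) T, Complex.exp (-Real.pi * x ^ 2 / lam + 2 * Real.pi * Complex.I * α * x ^ 2)

lemma KT_bound : ∃ B : ℝ, 0 < B ∧ ∀ lam : ℕ, 1 ≤ lam → ∃ T : ℤ, (lam:ℤ) ≤ T ∧
    ∀ (q : ℕ) (a : ℤ) (α : ℝ), 1 ≤ q → IsCoprime a (q:ℤ) →
    q ≤ Nat.sqrt lam → q * |α - a / q| ≤ 1 / (Nat.sqrt lam + 1) →
    ‖KT lam T α‖ ≤ B * (q * (1 / lam + |α - a / q|)) ^ (-(1/2) : ℝ) := by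
  obtain ⟨B, hB, h⟩ := theta_bound
  refine ⟨B + 2, by linarith, fun lam hlam => ?_⟩
  have hl : (0:ℝ) < lam := by exact_mod_cast hlam
  have hsum := summable_gauss (T := 1/lam) (by positivity)
  -- a finite set catching the tail
  obtain ⟨s, hs⟩ := (Metric.tendsto_atTop.mp hsum.hasSum) 1 one_pos
  obtain ⟨T0, hT0⟩ : ∃ T0 : ℤ, ∀ x ∈ s, |x| ≤ T0 := by
    obtain ⟨M, hM⟩ := (s.image (fun x => |x|)).bddAbove
    exact ⟨M, fun x hx => hM (by simp only [coe_image, Set.mem_image]; exact ⟨x, hx, rfl⟩)⟩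
  refine ⟨max lam T0, le_max_left _ _, ?_⟩
  intro q a α hq ha hqs hα
  set T := max (lam:ℤ) T0
  have hq0 : (0:ℝ) < q := by exact_mod_cast hq
  have hsub : s ⊆ Icc (-T) T := by
    intro x hx
    have := (hT0 x hx).trans (le_max_right (lam:ℤ) T0)
    rw [mem_Icc]; exact abs_le.mp this
  have htail := hs _ hsub
  set f : ℤ → ℂ := fun x => Complex.exp (-Real.pi * x ^ 2 / lam + 2 * Real.pi * Complex.I * α * x ^ 2) with hf
  have hnf : ∀ x, ‖f x‖ = Real.exp (-Real.pi * (1 / lam) * x ^ 2) := by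
    intro x
    rw [hf, Complex.norm_exp]
    congr 1
    have : (-Real.pi * x ^ 2 / lam + 2 * Real.pi * Complex.I * α * x ^ 2 : ℂ) = ((-Real.pi * (1/lam) * x ^ 2 : ℝ) : ℂ) + Complex.I * ((2 * Real.pi * α * x ^ 2 : ℝ) : ℂ) := by
      push_cast; ring
    rw [this]; simp only [Complex.add_re, Complex.re_mul_ofReal, Complex.I_re, Complex.ofReal_re]; ring
  have hfs : Summable f := Summable.of_norm (hsum.congr fun x => (hnf x).symm)
  have hsplit := hfs.sum_add_tsum_compl (s := Icc (-T) T)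
  have hsplit2 := hsum.sum_add_tsum_compl (s := Icc (-T) T)
  have hth := h lam hlam q a (α - a / q) hq ha hqs hα
  have heq : ∑' x : ℤ, Complex.exp (-Real.pi * (1 / lam - 2 * Complex.I * ((α - a / q : ℝ) : ℂ)) * x ^ 2 + 2 * Real.pi * Complex.I * a * x ^ 2 / q) = ∑' x, f x := by
    apply tsum_congr
    intro x
    rw [hf]
    simp only
    congr 1
    push_cast
    field_simp
    ring
  rw [heq] at hth
  have hcomp : ‖∑' x : ((Icc (-T) T : Finset ℤ) : Set ℤ)ᶜ.Elem, f x‖ ≤ 1 := by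
    have h1 : ‖∑' x : ((Icc (-T) T : Finset ℤ) : Set ℤ)ᶜ.Elem, f x‖ ≤ ∑' x : ((Icc (-T) T : Finset ℤ) : Set ℤ)ᶜ.Elem, Real.exp (-Real.pi * (1 / lam) * (x:ℤ) ^ 2) := by
      apply tsum_of_norm_bounded (hsum.subtype _).hasSum
      intro x
      exact (hnf x).le
    rw [Real.dist_eq, ← hsplit2] at htail
    have h2 := (abs_lt.mp htail).1
    linarith
  have hK : KT lam T α = ∑' x, f x - ∑' x : ((Icc (-T) T : Finset ℤ) : Set ℤ)ᶜ.Elem, f x := by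
    rw [← hsplit]; simp [KT, hf]
  have hX : 0 < (q:ℝ) * (1 / lam + |α - a / q|) := by positivity
  have hX2 : (q:ℝ) * (1 / lam + |α - a / q|) ≤ 2 := by
    rw [mul_add]
    have h1 : (q:ℝ) * (1 / lam) ≤ 1 := by
      rw [mul_one_div, div_le_one hl]
      exact_mod_cast hqs.trans (Nat.sqrt_le_self lam)
    have h2 : (1:ℝ) / (Nat.sqrt lam + 1) ≤ 1 := by
      rw [div_le_one (by positivity)]; linarith [(Nat.cast_nonneg (Nat.sqrt lam) : (0:ℝ) ≤ _)]
    linarith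
  have hX3 : 1 ≤ 2 * ((q:ℝ) * (1 / lam + |α - a / q|)) ^ (-(1/2) : ℝ) := by
    have h1 : (2:ℝ) ^ (-(1/2) : ℝ) ≤ ((q:ℝ) * (1 / lam + |α - a / q|)) ^ (-(1/2) : ℝ) :=
      Real.rpow_le_rpow_of_nonpos hX hX2 (by norm_num)
    have h2 : (2:ℝ) ^ (-1 : ℝ) ≤ (2:ℝ) ^ (-(1/2) : ℝ) :=
      Real.rpow_le_rpow_of_exponent_le (by norm_num) (by norm_num)
    rw [Real.rpow_neg_one] at h2
    linarith
  rw [hK]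
  calc _ ≤ _ := norm_sub_le _ _
    _ ≤ _ := add_le_add hth hcomp
    _ ≤ _ := by rw [add_mul]; linarith

/-- additive character -/
def ee (t : ℝ) : ℂ := Complex.exp (2 * Real.pi * Complex.I * t)

lemma ee_add (s t : ℝ) : ee (s + t) = ee s * ee t := by
  rw [ee, ee, ee, ← Complex.exp_add]; congr 1; push_cast; ring

lemma ee_zero : ee 0 = 1 := by simp [ee]

lemma norm_ee (t : ℝ) : ‖ee t‖ = 1 := by
  rw [ee, show (2 * Real.pi * Complex.I * t : ℂ) = ((2 * Real.pi * t : ℝ) : ℂ) * Complex.I by push_cast; ring]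
  exact Complex.norm_exp_ofReal_mul_I _

lemma ee_int (m : ℤ) : ee m = 1 := by
  rw [ee, Complex.exp_eq_one_iff]; exact ⟨m, by push_cast; ring⟩

lemma ee_sum {ι : Type*} (s : Finset ι) (f : ι → ℝ) : ee (∑ i ∈ s, f i) = ∏ i ∈ s, ee (f i) := by
  classical
  induction s using Finset.induction_on with
  | empty => simp [ee_zero]
  | insert a s ha ih => rw [Finset.sum_insert ha, Finset.prod_insert ha, ee_add, ih]

lemma conj_ee (t : ℝ) : (starRingEnd ℂ) (ee t) = ee (-t) := by
  rw [ee, ee, ← Complex.exp_conj]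
  congr 1
  simp [Complex.conj_ofReal]
  left; exact map_ofNat _ 2

lemma continuous_ee : Continuous ee := by
  unfold ee; fun_prop

lemma integral_ee (m : ℤ) : ∫ α in (0:ℝ)..1, ee (α * m) = if m = 0 then 1 else 0 := by
  split_ifs with h
  · subst h; simp [ee_zero]
  · have hc : (2 * Real.pi * Complex.I * m : ℂ) ≠ 0 := by
      have : (m:ℂ) ≠ 0 := by exact_mod_cast h
      have h2 : (Real.pi : ℂ) ≠ 0 := by exact_mod_cast Real.pi_ne_zero
      simp [this, h2]
    have := integral_exp_mul_complex (a := 0) (b := 1) hc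
    have e : ∀ α : ℝ, ee (α * m) = Complex.exp (2 * Real.pi * Complex.I * m * α) := by
      intro α; rw [ee]; congr 1; push_cast; ring
    simp_rw [e, this]
    have h1 : Complex.exp (2 * Real.pi * Complex.I * m * (1:ℝ)) = 1 := by
      rw [← e, one_mul, ee_int]
    rw [h1]; simp

lemma circle (n : ℕ) (T : Fin n → ℤ) (φ : Fin n → ℤ → ℝ) (lam : ℕ) :
    ∑ x ∈ (Fintype.piFinset fun k => Icc (-(T k)) (T k)).filter (fun x => ∑ k, x k ^ 2 = (lam:ℤ)), ∏ k, φ k (x k)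
    ≤ ∫ α in (0:ℝ)..1, ∏ k, ‖∑ x ∈ Icc (-(T k)) (T k), (φ k x : ℂ) * ee (α * ((x ^ 2 : ℤ) : ℝ))‖ := by
  have h1 : ∫ α in (0:ℝ)..1, (∏ k, ∑ x ∈ Icc (-(T k)) (T k), (φ k x : ℂ) * ee (α * ((x ^ 2 : ℤ) : ℝ))) * ee (α * ((-(lam : ℤ) : ℤ) : ℝ))
      = ((∑ x ∈ (Fintype.piFinset fun k => Icc (-(T k)) (T k)).filter (fun x => ∑ k, x k ^ 2 = (lam:ℤ)), ∏ k, φ k (x k) : ℝ) : ℂ) := by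
    have e : ∀ α : ℝ, (∏ k, ∑ x ∈ Icc (-(T k)) (T k), (φ k x : ℂ) * ee (α * ((x ^ 2 : ℤ) : ℝ))) * ee (α * ((-(lam : ℤ) : ℤ) : ℝ))
        = ∑ x ∈ Fintype.piFinset fun k => Icc (-(T k)) (T k), (∏ k, (φ k (x k) : ℂ)) * ee (α * ((∑ k, x k ^ 2 - (lam:ℤ) : ℤ) : ℝ)) := by
      intro α
      rw [Finset.prod_univ_sum, Finset.sum_mul]
      apply Finset.sum_congr rfl
      intro x _
      rw [Finset.prod_mul_distrib, ← ee_sum, mul_assoc, ← ee_add, ← Finset.mul_sum, ← mul_add]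
      congr 3
      push_cast; ring
    simp_rw [e]
    rw [intervalIntegral.integral_finsetSum]
    · simp_rw [intervalIntegral.integral_const_mul, integral_ee, sub_eq_zero]
      rw [Finset.sum_filter]
      push_cast
      apply Finset.sum_congr rfl
      intro x _
      split_ifs <;> simp
    · intro x _
      apply Continuous.intervalIntegrable
      have := continuous_ee
      fun_prop
  have h2 := intervalIntegral.norm_integral_le_integral_norm (f := fun α : ℝ => (∏ k, ∑ x ∈ Icc (-(T k)) (T k), (φ k x : ℂ) * ee (α * ((x ^ 2 : ℤ) : ℝ))) * ee (α * ((-(lam : ℤ) : ℤ) : ℝ))) (a := 0) (b := 1) (μ := volume) (by norm_num)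
  rw [h1, Complex.norm_real] at h2
  refine (Real.le_norm_self _).trans (h2.trans (le_of_eq ?_))
  apply intervalIntegral.integral_congr
  intro α _
  simp only [norm_mul, norm_ee, mul_one, norm_prod]

lemma sum_ee (q : ℕ) (hq : 1 ≤ q) (m : ℤ) :
    ∑ a ∈ range q, ee (a / q * m) = if (q:ℤ) ∣ m then (q:ℂ) else 0 := by
  have hq0 : (q:ℝ) ≠ 0 := by positivity
  have e : ∀ a : ℕ, ee (a / q * m) = ee (m / q) ^ a := by
    intro a
    rw [ee, ee, ← Complex.exp_nat_mul]; congr 1; push_cast; ring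
  simp_rw [e]
  split_ifs with h
  · obtain ⟨k, rfl⟩ := h
    have : ee (((q * k : ℤ) : ℝ) / q) = 1 := by
      rw [← ee_int k]; congr 1; push_cast; field_simp
    rw [this]; simp
  · have h1 : ee (m / q) ≠ 1 := by
      intro h1
      rw [ee, Complex.exp_eq_one_iff] at h1
      obtain ⟨k, hk⟩ := h1
      apply h
      refine ⟨k, ?_⟩
      have h3 := Complex.two_pi_I_ne_zero
      have : ((m / q : ℝ) : ℂ) = k := by
        apply mul_left_cancel₀ h3; rw [hk]; ring
      have h4 : (m / q : ℝ) = k := by exact_mod_cast this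
      field_simp at h4
      exact_mod_cast h4
    have h2 : ee (m / q) ^ q = 1 := by
      rw [← e, ← ee_int m]; congr 1; field_simp
    rw [geom_sum_eq h1, h2]; simp

lemma sum_S_sq (q : ℕ) (hq : 1 ≤ q) (s : Finset ℤ) (g : ℤ → ℝ) (hg : ∀ x, 0 ≤ g x) (β : ℝ) :
    ∑ a ∈ range q, ‖∑ x ∈ s, (g x : ℂ) * ee ((a / q + β) * ((x ^ 2 : ℤ) : ℝ))‖ ^ 2 ≤
    q * ∑ x ∈ s, ∑ y ∈ s, if (q:ℤ) ∣ x ^ 2 - y ^ 2 then g x * g y else 0 := by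
  have h : ((∑ a ∈ range q, ‖∑ x ∈ s, (g x : ℂ) * ee ((a / q + β) * ((x ^ 2 : ℤ) : ℝ))‖ ^ 2 : ℝ) : ℂ)
      = ∑ x ∈ s, ∑ y ∈ s, (g x * g y : ℂ) * ee (β * ((x ^ 2 - y ^ 2 : ℤ) : ℝ)) * (if (q:ℤ) ∣ x ^ 2 - y ^ 2 then (q:ℂ) else 0) := by
    push_cast
    have e : ∀ a : ℕ, (‖∑ x ∈ s, (g x : ℂ) * ee ((a / q + β) * ((x : ℝ) ^ 2))‖ ^ 2 : ℂ) =
        ∑ x ∈ s, ∑ y ∈ s, (g x * g y : ℂ) * ee (β * ((x ^ 2 - y ^ 2 : ℤ) : ℝ)) * ee (a / q * ((x ^ 2 - y ^ 2 : ℤ) : ℝ)) := by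
      intro a
      rw [← Complex.mul_conj', map_sum, Finset.sum_mul_sum]
      apply Finset.sum_congr rfl; intro x _
      apply Finset.sum_congr rfl; intro y _
      rw [map_mul, Complex.conj_ofReal, conj_ee, mul_assoc (g x * g y : ℂ), ← ee_add]
      rw [mul_mul_mul_comm, ← ee_add]
      congr 2
      push_cast; ring
    rw [Finset.sum_congr rfl fun a _ => e a, Finset.sum_comm]
    apply Finset.sum_congr rfl; intro x _
    rw [Finset.sum_comm]
    apply Finset.sum_congr rfl; intro y _
    rw [← Finset.mul_sum, sum_ee q hq]
    push_cast; rfl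
  have h2 : ‖((∑ a ∈ range q, ‖∑ x ∈ s, (g x : ℂ) * ee ((a / q + β) * ((x ^ 2 : ℤ) : ℝ))‖ ^ 2 : ℝ) : ℂ)‖ = ∑ a ∈ range q, ‖∑ x ∈ s, (g x : ℂ) * ee ((a / q + β) * ((x ^ 2 : ℤ) : ℝ))‖ ^ 2 := by
    rw [Complex.norm_real, Real.norm_of_nonneg]
    exact Finset.sum_nonneg fun _ _ => by positivity
  rw [← h2, h, Finset.mul_sum]
  refine (norm_sum_le _ _).trans (Finset.sum_le_sum fun x _ => ?_)
  rw [Finset.mul_sum]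
  refine (norm_sum_le _ _).trans (Finset.sum_le_sum fun y _ => ?_)
  rw [norm_mul, norm_mul, norm_ee, norm_mul, Complex.norm_real, Complex.norm_real, Real.norm_of_nonneg (hg x), Real.norm_of_nonneg (hg y)]
  split_ifs
  · simp; linarith
  · simp

def vv (lam : ℕ) (β : ℝ) : ℝ := (1 / lam + |β|) ^ (-(3/2) : ℝ)

def WW (lam : ℕ) (α : ℝ) : ℝ :=
  ∑ q ∈ Icc 1 (Nat.sqrt lam), ∑ a ∈ range (q + 1), (q:ℝ) ^ (-(3/2) : ℝ) * vv lam (α - a / q)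

def SS (lam : ℕ) (g : ℤ → ℝ) (α : ℝ) : ℂ :=
  ∑ x ∈ Icc (-(Nat.sqrt lam : ℤ)) (Nat.sqrt lam), (g x : ℂ) * ee (α * ((x ^ 2 : ℤ) : ℝ))

def GG (lam : ℕ) (m : ℤ) : ℝ := ∑ q ∈ Icc 1 (Nat.sqrt lam), if (q:ℤ) ∣ m then (q:ℝ) ^ (-(1/2) : ℝ) else 0

lemma vv_nonneg (lam : ℕ) (β : ℝ) : 0 ≤ vv lam β := by unfold vv; positivity

lemma WW_nonneg (lam : ℕ) (α : ℝ) : 0 ≤ WW lam α :=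
  Finset.sum_nonneg fun _ _ => Finset.sum_nonneg fun _ _ => mul_nonneg (by positivity) (vv_nonneg _ _)

lemma continuous_vv {lam : ℕ} (hlam : 1 ≤ lam) : Continuous (vv lam) := by
  have hl : (0:ℝ) < lam := by exact_mod_cast hlam
  unfold vv
  apply Continuous.rpow_const (by fun_prop)
  intro x; left; positivity

lemma continuous_WW {lam : ℕ} (hlam : 1 ≤ lam) : Continuous (WW lam) := by
  have := continuous_vv hlam
  unfold WW
  fun_prop

lemma continuous_SS (lam : ℕ) (g : ℤ → ℝ) : Continuous (SS lam g) := by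
  have := continuous_ee
  unfold SS
  fun_prop

lemma vv_int {lam : ℕ} (hlam : 1 ≤ lam) : ∫ β in (-1:ℝ)..1, vv lam β ≤ 4 * Real.sqrt lam := by
  have hl : (0:ℝ) < lam := by exact_mod_cast hlam
  have hc := continuous_vv hlam
  have hhalf : ∫ β in (0:ℝ)..1, vv lam β ≤ 2 * Real.sqrt lam := by
    have e : ∫ β in (0:ℝ)..1, vv lam β = ∫ β in (0:ℝ)..1, (1 / lam + β) ^ (-(3/2) : ℝ) := by
      apply intervalIntegral.integral_congr
      intro β hβ
      rw [Set.uIcc_of_le (by norm_num)] at hβ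
      simp only [vv, abs_of_nonneg hβ.1]
    rw [e, intervalIntegral.integral_comp_add_left (fun x => x ^ (-(3/2) : ℝ)), integral_rpow]
    · have h1 : (-(3/2) + 1 : ℝ) = -(1/2) := by norm_num
      rw [h1]
      have h2 : (1 / (lam:ℝ) + 0) ^ (-(1/2) : ℝ) = Real.sqrt lam := by
        rw [add_zero, one_div, Real.inv_rpow hl.le, Real.rpow_neg hl.le, inv_inv, Real.sqrt_eq_rpow]
      rw [h2]
      have h3 : 0 ≤ (1 / (lam:ℝ) + 1) ^ (-(1/2) : ℝ) := by positivity
      linarith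
    · right
      refine ⟨by norm_num, ?_⟩
      rw [Set.uIcc_of_le (by linarith)]
      intro h
      have : 0 < 1 / (lam:ℝ) := by positivity
      linarith [h.1]
  have hneg : ∫ β in (-1:ℝ)..0, vv lam β = ∫ β in (0:ℝ)..1, vv lam β := by
    have := intervalIntegral.integral_comp_neg (vv lam) (a := 0) (b := 1)
    rw [neg_zero] at this
    rw [← this]
    apply intervalIntegral.integral_congr
    intro β _
    simp [vv]
  rw [← intervalIntegral.integral_add_adjacent_intervals (b := 0) (hc.intervalIntegrable _ _) (hc.intervalIntegrable _ _), hneg]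
  linarith

lemma WW_bound : ∃ B : ℝ, 0 < B ∧ ∀ lam : ℕ, 1 ≤ lam → ∃ T : ℤ, (lam:ℤ) ≤ T ∧
    ∀ α : ℝ, 0 ≤ α → α ≤ 1 → ∀ m : ℕ, 3 ≤ m →
      ‖KT lam T α‖ ^ m ≤ B ^ m * (lam:ℝ) ^ (((m:ℝ) - 3) / 2) * WW lam α := by
  obtain ⟨B, hB, h⟩ := KT_bound
  refine ⟨B, hB, fun lam hlam => ?_⟩
  obtain ⟨T, hT, h⟩ := h lam hlam
  refine ⟨T, hT, fun α h0 h1 m hm => ?_⟩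
  have hl : (0:ℝ) < lam := by exact_mod_cast hlam
  have hN : 1 ≤ Nat.sqrt lam := by rw [Nat.le_sqrt]; simpa using hlam
  obtain ⟨r, hr1, hr2⟩ := Real.exists_rat_abs_sub_le_and_den_le α (n := Nat.sqrt lam) (by omega)
  set q := r.den with hqdef
  have hq : 1 ≤ q := r.den_pos
  have hq0 : (0:ℝ) < q := by exact_mod_cast hq
  have hrq : (r:ℝ) = r.num / q := by rw [hqdef]; exact Rat.cast_def r
  rw [hrq] at hr1
  have hn1 : (1:ℝ) ≤ Nat.sqrt lam := by exact_mod_cast hN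
  have hr1' : q * |α - r.num / q| ≤ 1 / (Nat.sqrt lam + 1) := by
    calc q * |α - r.num / q| ≤ q * (1 / ((Nat.sqrt lam + 1) * q)) := by gcongr
      _ = _ := by field_simp
  have hcop : IsCoprime r.num (q:ℤ) := by
    have := r.reduced
    rw [Int.isCoprime_iff_gcd_eq_one]
    exact this
  have hb := h q r.num α hq hcop hr2 hr1'
  have hlt : (1:ℝ) / (Nat.sqrt lam + 1) < 1 := by rw [div_lt_one (by linarith)]; linarith
  have habs : |q * α - r.num| < 1 := by
    have : |q * α - r.num| = q * |α - r.num / q| := by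
      rw [← abs_of_pos hq0, ← abs_mul, abs_of_pos hq0]; congr 1; field_simp
    rw [this]; linarith
  rw [abs_lt] at habs
  have hnum0 : 0 ≤ r.num := by
    have : (-1:ℝ) < r.num := by nlinarith
    have : (-1:ℤ) < r.num := by exact_mod_cast this
    omega
  have hnum1 : r.num ≤ q := by
    have : (r.num:ℝ) < q + 1 := by nlinarith
    have : r.num < (q:ℤ) + 1 := by exact_mod_cast this
    omega
  obtain ⟨a, ha⟩ := Int.eq_ofNat_of_zero_le hnum0
  have haq : a ≤ q := by rw [ha] at hnum1; exact_mod_cast hnum1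
  have hcast : (r.num : ℝ) = (a:ℝ) := by rw [ha]; simp
  rw [hcast] at hb
  set β := α - a / q with hβ
  have hY : 0 < 1 / (lam:ℝ) + |β| := by positivity
  set D := ((q:ℝ) * (1 / lam + |β|)) ^ (-(1/2) : ℝ) with hD
  have hD0 : 0 < D := by rw [hD]; positivity
  have hDl : D ≤ (lam:ℝ) ^ (1/2 : ℝ) := by
    have : D ≤ (1 / (lam:ℝ)) ^ (-(1/2) : ℝ) := by
      apply Real.rpow_le_rpow_of_nonpos (by positivity) _ (by norm_num)
      have h1 : 1 / (lam:ℝ) ≤ 1 / lam + |β| := by linarith [abs_nonneg β]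
      have h2 : (1:ℝ) ≤ q := by exact_mod_cast hq
      nlinarith
    rwa [one_div, Real.inv_rpow hl.le, Real.rpow_neg hl.le, inv_inv] at this
  have hD3 : D ^ 3 = (q:ℝ) ^ (-(3/2) : ℝ) * vv lam β := by
    rw [hD, ← Real.rpow_natCast, ← Real.rpow_mul (by positivity), vv, ← Real.mul_rpow hq0.le hY.le]
    norm_num
  have hterm : D ^ 3 ≤ WW lam α := by
    rw [hD3, WW]
    have s1 : (q:ℝ) ^ (-(3/2) : ℝ) * vv lam β ≤ ∑ a ∈ range (q + 1), (q:ℝ) ^ (-(3/2) : ℝ) * vv lam (α - a / q) :=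
      Finset.single_le_sum (f := fun a : ℕ => (q:ℝ) ^ (-(3/2) : ℝ) * vv lam (α - a / q))
        (fun _ _ => mul_nonneg (by positivity) (vv_nonneg _ _)) (mem_range.mpr (by omega))
    refine s1.trans ?_
    exact Finset.single_le_sum (f := fun q : ℕ => ∑ a ∈ range (q + 1), (q:ℝ) ^ (-(3/2) : ℝ) * vv lam (α - a / q))
        (fun _ _ => Finset.sum_nonneg fun _ _ => mul_nonneg (by positivity) (vv_nonneg _ _)) (mem_Icc.mpr ⟨hq, hr2⟩)
  calc ‖KT lam T α‖ ^ m ≤ (B * D) ^ m := by gcongr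
    _ = B ^ m * (D ^ (m - 3) * D ^ 3) := by
        rw [mul_pow, ← pow_add]; congr 2; omega
    _ ≤ B ^ m * (((lam:ℝ) ^ (1/2 : ℝ)) ^ (m - 3) * WW lam α) := by gcongr
    _ = _ := by
        rw [← Real.rpow_natCast ((lam:ℝ) ^ (1/2 : ℝ)), ← Real.rpow_mul hl.le, Nat.cast_sub hm, mul_assoc]
        congr 3; push_cast; ring

lemma int_SW {lam : ℕ} (hlam : 1 ≤ lam) (g : ℤ → ℝ) (hg : ∀ x, 0 ≤ g x) :
    ∫ α in (0:ℝ)..1, ‖SS lam g α‖ ^ 2 * WW lam α ≤ 8 * Real.sqrt lam *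
      ∑ x ∈ Icc (-(Nat.sqrt lam : ℤ)) (Nat.sqrt lam), ∑ y ∈ Icc (-(Nat.sqrt lam : ℤ)) (Nat.sqrt lam),
        g x * g y * GG lam (x ^ 2 - y ^ 2) := by
  have hcv := continuous_vv hlam
  have hcS := continuous_SS lam g
  set I := Icc (-(Nat.sqrt lam : ℤ)) (Nat.sqrt lam) with hI
  have e1 : ∫ α in (0:ℝ)..1, ‖SS lam g α‖ ^ 2 * WW lam α =
      ∑ q ∈ Icc 1 (Nat.sqrt lam), (q:ℝ) ^ (-(3/2) : ℝ) * ∑ a ∈ range (q + 1), ∫ α in (0:ℝ)..1, ‖SS lam g α‖ ^ 2 * vv lam (α - a / q) := by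
    simp_rw [WW, Finset.mul_sum]
    rw [intervalIntegral.integral_finsetSum]
    · apply Finset.sum_congr rfl; intro q _
      rw [intervalIntegral.integral_finsetSum]
      · apply Finset.sum_congr rfl; intro a _
        rw [← intervalIntegral.integral_const_mul]
        congr 1; ext α; ring
      · intro a _; apply Continuous.intervalIntegrable; fun_prop
    · intro a _; apply Continuous.intervalIntegrable; fun_prop
  have e2 : ∀ q ∈ Icc 1 (Nat.sqrt lam), ∑ a ∈ range (q + 1), ∫ α in (0:ℝ)..1, ‖SS lam g α‖ ^ 2 * vv lam (α - a / q)
      ≤ 8 * Real.sqrt lam * (q * ∑ x ∈ I, ∑ y ∈ I, if (q:ℤ) ∣ x ^ 2 - y ^ 2 then g x * g y else 0) := by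
    intro q hq
    have hq1 := (mem_Icc.mp hq).1
    have hq0 : (0:ℝ) < q := by exact_mod_cast hq1
    set R := ∑ x ∈ I, ∑ y ∈ I, if (q:ℤ) ∣ x ^ 2 - y ^ 2 then g x * g y else 0
    have s1 : ∀ a ∈ range (q + 1), ∫ α in (0:ℝ)..1, ‖SS lam g α‖ ^ 2 * vv lam (α - a / q) ≤
        ∫ β in (-1:ℝ)..1, ‖SS lam g (a / q + β)‖ ^ 2 * vv lam β := by
      intro a ha
      have haq : (a:ℝ) / q ≤ 1 := by
        rw [div_le_one hq0]; exact_mod_cast Nat.lt_succ_iff.mp (mem_range.mp ha)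
      have ha0 : (0:ℝ) ≤ a / q := by positivity
      have := intervalIntegral.integral_comp_sub_right (fun β => ‖SS lam g (a / q + β)‖ ^ 2 * vv lam β) (a := 0) (b := 1) ((a:ℝ) / q)
      simp only [add_sub_cancel] at this
      rw [this]
      apply intervalIntegral.integral_mono_interval (by linarith) (by linarith) (by linarith)
      · filter_upwards with β
        exact mul_nonneg (by positivity) (vv_nonneg _ _)
      · apply Continuous.intervalIntegrable; fun_prop
    refine (Finset.sum_le_sum s1).trans ?_
    rw [← intervalIntegral.integral_finsetSum (fun a _ => by apply Continuous.intervalIntegrable; fun_prop)]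
    have s2 : ∀ β, ∑ a ∈ range (q + 1), ‖SS lam g (a / q + β)‖ ^ 2 * vv lam β ≤ (2 * (q * R)) * vv lam β := by
      intro β
      rw [← Finset.sum_mul]
      apply mul_le_mul_of_nonneg_right _ (vv_nonneg _ _)
      rw [Finset.sum_range_succ]
      have t1 := sum_S_sq q hq1 I g hg β
      have t2 : ‖SS lam g ((q:ℝ) / q + β)‖ ^ 2 ≤ ∑ a ∈ range q, ‖SS lam g (a / q + β)‖ ^ 2 := by
        have : SS lam g ((q:ℝ) / q + β) = SS lam g (((0:ℕ):ℝ) / q + β) := by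
          rw [SS, SS]
          apply Finset.sum_congr rfl; intro x _
          congr 1
          rw [div_self hq0.ne', add_mul, one_mul, ee_add, ee_int]; simp
        rw [this]
        exact Finset.single_le_sum (f := fun a : ℕ => ‖SS lam g (a / q + β)‖ ^ 2) (fun _ _ => by positivity) (mem_range.mpr hq1)
      have t3 : ∑ a ∈ range q, ‖SS lam g (a / q + β)‖ ^ 2 ≤ q * R := t1
      linarith
    have hR : 0 ≤ R := Finset.sum_nonneg fun x _ => Finset.sum_nonneg fun y _ => by
      split_ifs; exacts [mul_nonneg (hg x) (hg y), le_refl _]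
    calc _ ≤ ∫ β in (-1:ℝ)..1, (2 * (q * R)) * vv lam β := by
          apply intervalIntegral.integral_mono (by norm_num)
          · apply Continuous.intervalIntegrable; fun_prop
          · apply Continuous.intervalIntegrable; fun_prop
          · exact s2
      _ = (2 * (q * R)) * ∫ β in (-1:ℝ)..1, vv lam β := intervalIntegral.integral_const_mul _ _
      _ ≤ (2 * (q * R)) * (4 * Real.sqrt lam) := by
          have := vv_int hlam; gcongr
      _ = _ := by ring
  rw [e1]
  calc _ ≤ ∑ q ∈ Icc 1 (Nat.sqrt lam), (q:ℝ) ^ (-(3/2) : ℝ) * (8 * Real.sqrt lam * (q * ∑ x ∈ I, ∑ y ∈ I, if (q:ℤ) ∣ x ^ 2 - y ^ 2 then g x * g y else 0)) := by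
        apply Finset.sum_le_sum; intro q hq
        exact mul_le_mul_of_nonneg_left (e2 q hq) (by positivity)
    _ = 8 * Real.sqrt lam * ∑ q ∈ Icc 1 (Nat.sqrt lam), ∑ x ∈ I, ∑ y ∈ I, g x * g y * (if (q:ℤ) ∣ x ^ 2 - y ^ 2 then (q:ℝ) ^ (-(1/2) : ℝ) else 0) := by
        rw [Finset.mul_sum]
        apply Finset.sum_congr rfl; intro q hq
        have hq1 := (mem_Icc.mp hq).1
        have hq0 : (0:ℝ) < q := by exact_mod_cast hq1
        have hp : (q:ℝ) ^ (-(1/2) : ℝ) = (q:ℝ) ^ (-(3/2) : ℝ) * q := by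
          rw [← Real.rpow_add_one hq0.ne']; norm_num
        rw [mul_left_comm, ← mul_assoc ((q:ℝ) ^ (-(3/2) : ℝ)), ← hp, Finset.mul_sum]
        congr 1
        apply Finset.sum_congr rfl; intro x _
        rw [Finset.mul_sum]
        apply Finset.sum_congr rfl; intro y _
        split_ifs <;> ring
    _ = _ := by
        congr 1
        rw [Finset.sum_comm]
        apply Finset.sum_congr rfl; intro x _
        rw [Finset.sum_comm]
        apply Finset.sum_congr rfl; intro y _
        rw [GG, Finset.mul_sum]

def sg (u : ℕ) : ℝ := ∑ d ∈ u.divisors, (d:ℝ) ^ (-(1/2) : ℝ)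

lemma sg_nonneg (u : ℕ) : 0 ≤ sg u := Finset.sum_nonneg fun _ _ => by positivity

open scoped Pointwise in
lemma sg_mul (u v : ℕ) : sg (u * v) ≤ sg u * sg v := by
  rw [sg, sg, sg, Finset.sum_mul_sum, ← Finset.sum_product', Nat.divisors_mul]
  have : (u.divisors * v.divisors) = (u.divisors ×ˢ v.divisors).image (fun p => p.1 * p.2) := by
    rw [← Finset.image_mul_product]
  rw [this]
  have key : ∀ d : ℕ, d ∈ (u.divisors ×ˢ v.divisors).image (fun p => p.1 * p.2) → (d:ℝ) ^ (-(1/2) : ℝ) ≤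
      ∑ p ∈ (u.divisors ×ˢ v.divisors).filter (fun p => p.1 * p.2 = d), (p.1:ℝ) ^ (-(1/2) : ℝ) * (p.2:ℝ) ^ (-(1/2) : ℝ) := by
    intro d hd
    obtain ⟨p, hp, rfl⟩ := Finset.mem_image.mp hd
    have : ((p.1 * p.2 : ℕ) : ℝ) ^ (-(1/2) : ℝ) = (p.1:ℝ) ^ (-(1/2) : ℝ) * (p.2:ℝ) ^ (-(1/2) : ℝ) := by
      push_cast; rw [Real.mul_rpow (by positivity) (by positivity)]
    rw [this]
    exact Finset.single_le_sum (f := fun p : ℕ × ℕ => (p.1:ℝ) ^ (-(1/2) : ℝ) * (p.2:ℝ) ^ (-(1/2) : ℝ))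
      (fun _ _ => by positivity) (by simp only [mem_filter, and_true]; exact hp)
  refine (Finset.sum_le_sum key).trans ?_
  rw [Finset.sum_fiberwise_of_maps_to (fun p hp => Finset.mem_image_of_mem _ hp)]

lemma sum_div_swap (N : ℕ) (F : ℕ → ℕ → ℝ) :
    ∑ u ∈ Icc 1 N, ∑ d ∈ u.divisors, F d u = ∑ d ∈ Icc 1 N, ∑ v ∈ Icc 1 (N / d), F d (d * v) := by
  rw [Finset.sum_sigma', Finset.sum_sigma']
  refine Finset.sum_bij' (fun p _ => ⟨p.2, p.1 / p.2⟩) (fun p _ => ⟨p.1 * p.2, p.1⟩) ?_ ?_ ?_ ?_ ?_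
  · rintro ⟨u, d⟩ h
    simp only [mem_sigma, mem_Icc, Nat.mem_divisors] at h ⊢
    obtain ⟨⟨h1, h2⟩, h3, h4⟩ := h
    have := Nat.le_of_dvd (by omega) h3
    have hd := Nat.pos_of_dvd_of_pos h3 (by omega)
    exact ⟨⟨hd, by omega⟩, Nat.div_pos this hd, Nat.div_le_div_right h2⟩
  · rintro ⟨d, v⟩ h
    simp only [mem_sigma, mem_Icc, Nat.mem_divisors] at h ⊢
    obtain ⟨⟨h1, h2⟩, h3, h4⟩ := h
    have := (Nat.le_div_iff_mul_le (by omega)).mp h4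
    have hp : 0 < d * v := Nat.mul_pos h1 h3
    exact ⟨⟨hp, by rw [mul_comm]; exact this⟩, Dvd.intro _ rfl, hp.ne'⟩
  · rintro ⟨u, d⟩ h
    simp only [mem_sigma, mem_Icc, Nat.mem_divisors] at h ⊢
    rw [Nat.mul_div_cancel' h.2.1]
  · rintro ⟨d, v⟩ h
    simp only [mem_sigma, mem_Icc, Nat.mem_divisors] at h ⊢
    rw [Nat.mul_div_cancel_left _ (by omega)]
  · rintro ⟨u, d⟩ h
    simp only [mem_sigma, mem_Icc, Nat.mem_divisors] at h ⊢
    rw [Nat.mul_div_cancel' h.2.1]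

lemma sgA (k : ℕ) : ∃ C : ℝ, 0 ≤ C ∧ ∀ N : ℕ, ∑ d ∈ Icc 1 N, sg d ^ k * (d:ℝ) ^ (-(3/2) : ℝ) ≤ C := by
  induction k with
  | zero =>
    have hs : Summable fun d : ℕ => (d:ℝ) ^ (-(3/2) : ℝ) := Real.summable_nat_rpow.mpr (by norm_num)
    refine ⟨∑' d : ℕ, (d:ℝ) ^ (-(3/2) : ℝ), tsum_nonneg fun _ => by positivity, fun N => ?_⟩
    simp only [pow_zero, one_mul]
    exact hs.sum_le_tsum _ (fun _ _ => by positivity)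
  | succ k ih =>
    obtain ⟨C, hC, h⟩ := ih
    refine ⟨C * C, by positivity, fun N => ?_⟩
    have e : ∀ u ∈ Icc 1 N, sg u ^ (k+1) * (u:ℝ) ^ (-(3/2) : ℝ) = ∑ d ∈ u.divisors, (d:ℝ) ^ (-(1/2) : ℝ) * (sg u ^ k * (u:ℝ) ^ (-(3/2) : ℝ)) := by
      intro u _
      rw [← Finset.sum_mul, ← sg]; ring
    rw [Finset.sum_congr rfl e, sum_div_swap N (fun d u => (d:ℝ) ^ (-(1/2) : ℝ) * (sg u ^ k * (u:ℝ) ^ (-(3/2) : ℝ)))]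
    calc _ ≤ ∑ d ∈ Icc 1 N, (sg d ^ k * (d:ℝ) ^ (-(3/2) : ℝ)) * C := by
          apply Finset.sum_le_sum
          intro d hd
          have hd1 : (1:ℝ) ≤ d := by exact_mod_cast (mem_Icc.mp hd).1
          have hd2 : (d:ℝ) ^ (-(1/2) : ℝ) ≤ 1 := Real.rpow_le_one_of_one_le_of_nonpos hd1 (by norm_num)
          calc _ ≤ ∑ v ∈ Icc 1 (N / d), (sg d ^ k * (d:ℝ) ^ (-(3/2) : ℝ)) * (sg v ^ k * (v:ℝ) ^ (-(3/2) : ℝ)) := by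
                apply Finset.sum_le_sum
                intro v _
                have h1 : sg (d * v) ^ k ≤ sg d ^ k * sg v ^ k := by
                  rw [← mul_pow]; exact pow_le_pow_left₀ (sg_nonneg _) (sg_mul _ _) _
                have h2 : ((d * v : ℕ):ℝ) ^ (-(3/2) : ℝ) = (d:ℝ) ^ (-(3/2) : ℝ) * (v:ℝ) ^ (-(3/2) : ℝ) := by
                  push_cast; rw [Real.mul_rpow (by positivity) (by positivity)]
                rw [h2]
                have := sg_nonneg (d * v)
                calc _ ≤ 1 * ((sg d ^ k * sg v ^ k) * ((d:ℝ) ^ (-(3/2) : ℝ) * (v:ℝ) ^ (-(3/2) : ℝ))) := by gcongr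
                  _ = _ := by ring
            _ = (sg d ^ k * (d:ℝ) ^ (-(3/2) : ℝ)) * ∑ v ∈ Icc 1 (N / d), (sg v ^ k * (v:ℝ) ^ (-(3/2) : ℝ)) := by
                rw [Finset.mul_sum]
            _ ≤ _ := by
                have := sg_nonneg d
                exact mul_le_mul_of_nonneg_left (h _) (by positivity)
      _ ≤ C * C := by
          rw [← Finset.sum_mul]; exact mul_le_mul_of_nonneg_right (h N) hC

lemma sgB (k : ℕ) : ∃ C : ℝ, 0 ≤ C ∧ ∀ N : ℕ, ∑ d ∈ Icc 1 N, sg d ^ k ≤ C * N := by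
  induction k with
  | zero => exact ⟨1, by norm_num, fun N => by simp⟩
  | succ k ih =>
    obtain ⟨C, hC, h⟩ := ih
    obtain ⟨A, hA, h'⟩ := sgA k
    refine ⟨C * A, by positivity, fun N => ?_⟩
    have e : ∀ u ∈ Icc 1 N, sg u ^ (k+1) = ∑ d ∈ u.divisors, (d:ℝ) ^ (-(1/2) : ℝ) * (sg u ^ k) := by
      intro u _
      rw [← Finset.sum_mul, ← sg]; ring
    rw [Finset.sum_congr rfl e, sum_div_swap N (fun d u => (d:ℝ) ^ (-(1/2) : ℝ) * (sg u ^ k))]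
    calc _ ≤ ∑ d ∈ Icc 1 N, (sg d ^ k * (d:ℝ) ^ (-(3/2) : ℝ)) * (C * N) := by
          apply Finset.sum_le_sum
          intro d hd
          have hd1 : (1:ℝ) ≤ d := by exact_mod_cast (mem_Icc.mp hd).1
          calc _ ≤ ∑ v ∈ Icc 1 (N / d), ((d:ℝ) ^ (-(1/2) : ℝ) * sg d ^ k) * (sg v ^ k) := by
                apply Finset.sum_le_sum
                intro v _
                have h1 : sg (d * v) ^ k ≤ sg d ^ k * sg v ^ k := by
                  rw [← mul_pow]; exact pow_le_pow_left₀ (sg_nonneg _) (sg_mul _ _) _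
                rw [mul_assoc]; gcongr
            _ = ((d:ℝ) ^ (-(1/2) : ℝ) * sg d ^ k) * ∑ v ∈ Icc 1 (N / d), (sg v ^ k) := by
                rw [Finset.mul_sum]
            _ ≤ ((d:ℝ) ^ (-(1/2) : ℝ) * sg d ^ k) * (C * ((N:ℝ) / d)) := by
                have := sg_nonneg d
                apply mul_le_mul_of_nonneg_left _ (by positivity)
                refine (h _).trans ?_
                gcongr
                exact Nat.cast_div_le
            _ = _ := by
                have : (d:ℝ) ^ (-(3/2) : ℝ) = (d:ℝ) ^ (-(1/2) : ℝ) / d := by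
                  rw [← Real.rpow_sub_one (by positivity)]; norm_num
                rw [this]; field_simp
      _ ≤ A * (C * N) := by
          rw [← Finset.sum_mul]; exact mul_le_mul_of_nonneg_right (h' N) (by positivity)
      _ = _ := by ring

lemma GG_nonneg (lam : ℕ) (m : ℤ) : 0 ≤ GG lam m := Finset.sum_nonneg fun _ _ => by split_ifs <;> positivity

lemma GG_le_sg (lam : ℕ) {m : ℤ} (hm : m ≠ 0) : GG lam m ≤ sg m.natAbs := by
  rw [GG, ← Finset.sum_filter, sg]
  apply Finset.sum_le_sum_of_subset_of_nonneg
  · intro q hq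
    simp only [mem_filter] at hq
    rw [Nat.mem_divisors]
    exact ⟨Int.natCast_dvd.mp hq.2, by simpa using hm⟩
  · intros; positivity

lemma GG_zero (lam : ℕ) : GG lam 0 ≤ 2 * (lam:ℝ) ^ (1/4 : ℝ) := by
  have key : ∀ N : ℕ, ∑ q ∈ Icc 1 N, (q:ℝ) ^ (-(1/2) : ℝ) ≤ 2 * Real.sqrt N := by
    intro N
    induction N with
    | zero => simp
    | succ N ih =>
      rw [Finset.sum_Icc_succ_top (by omega)]
      have hp : (0:ℝ) < (N + 1 : ℕ) := by positivity
      rw [Real.rpow_neg hp.le, ← Real.sqrt_eq_rpow]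
      have h1 : Real.sqrt N ≤ Real.sqrt (N+1 : ℕ) := Real.sqrt_le_sqrt (by push_cast; linarith)
      have h2 := Real.sq_sqrt (Nat.cast_nonneg (α := ℝ) N)
      have h3 := Real.sq_sqrt hp.le
      have h4 := Real.sqrt_pos.mpr hp
      have h5 : (Real.sqrt (N+1 : ℕ))⁻¹ ≤ 2 * (Real.sqrt (N+1 : ℕ) - Real.sqrt N) := by
        rw [inv_le_iff_one_le_mul₀ h4]
        push_cast at h3 h1 h4 ⊢
        nlinarith [Real.sqrt_nonneg (N:ℝ)]
      linarith
  have : GG lam 0 = ∑ q ∈ Icc 1 (Nat.sqrt lam), (q:ℝ) ^ (-(1/2) : ℝ) := by simp [GG]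
  rw [this]
  refine (key _).trans ?_
  have h1 : ((Nat.sqrt lam : ℕ) : ℝ) ≤ Real.sqrt lam := Real.nat_sqrt_le_real_sqrt
  have h2 : (lam:ℝ) ^ (1/4 : ℝ) = Real.sqrt (Real.sqrt lam) := by
    rw [Real.sqrt_eq_rpow, Real.sqrt_eq_rpow, ← Real.rpow_mul (by positivity)]; norm_num
  rw [h2]
  gcongr

lemma sum_int_abs (M : ℕ) (φ : ℕ → ℝ) (hφ : ∀ u, 0 ≤ φ u) :
    ∑ u ∈ (Icc (-(M:ℤ)) M).filter (· ≠ 0), φ u.natAbs ≤ 2 * ∑ u ∈ Icc 1 M, φ u := by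
  rw [← Finset.sum_fiberwise_of_maps_to (t := Icc 1 M) (g := Int.natAbs) (by
    intro u hu; simp only [mem_filter, mem_Icc] at hu ⊢; omega), Finset.mul_sum]
  apply Finset.sum_le_sum
  intro u _
  calc _ = ∑ i ∈ ((Icc (-(M:ℤ)) M).filter (· ≠ 0)).filter (fun i => i.natAbs = u), φ u := by
        apply Finset.sum_congr rfl; intro i hi; rw [(mem_filter.mp hi).2]
    _ = (((Icc (-(M:ℤ)) M).filter (· ≠ 0)).filter (fun i => i.natAbs = u)).card * φ u := by simp
    _ ≤ _ := by
        apply mul_le_mul_of_nonneg_right _ (hφ u)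
        have : (((Icc (-(M:ℤ)) M).filter (· ≠ 0)).filter (fun i => i.natAbs = u)) ⊆ {(u:ℤ), -(u:ℤ)} := by
          intro i hi
          have := (mem_filter.mp hi).2
          simp only [mem_insert, mem_singleton]; omega
        exact_mod_cast (Finset.card_le_card this).trans Finset.card_le_two

lemma GG_cube : ∃ C : ℝ, 0 ≤ C ∧ ∀ lam : ℕ, 1 ≤ lam →
    ∑ p ∈ ((Icc (-(Nat.sqrt lam : ℤ)) (Nat.sqrt lam)) ×ˢ (Icc (-(Nat.sqrt lam : ℤ)) (Nat.sqrt lam))).filter (fun p => p.1 ^ 2 ≠ p.2 ^ 2),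
      GG lam (p.1 ^ 2 - p.2 ^ 2) ^ 3 ≤ C * lam := by
  obtain ⟨C, hC, h⟩ := sgB 3
  refine ⟨16 * C ^ 2, by positivity, fun lam hlam => ?_⟩
  set N := Nat.sqrt lam
  set J := (Icc (-((2 * N : ℕ):ℤ)) ((2 * N : ℕ):ℤ)).filter (· ≠ 0) with hJ
  calc _ ≤ ∑ p ∈ ((Icc (-(N : ℤ)) N) ×ˢ (Icc (-(N : ℤ)) N)).filter (fun p => p.1 ^ 2 ≠ p.2 ^ 2),
        sg (p.1 - p.2).natAbs ^ 3 * sg (p.1 + p.2).natAbs ^ 3 := by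
        apply Finset.sum_le_sum
        intro p hp
        have hne : p.1 ^ 2 - p.2 ^ 2 ≠ 0 := sub_ne_zero.mpr (mem_filter.mp hp).2
        rw [← mul_pow]
        apply pow_le_pow_left₀ (GG_nonneg _ _)
        refine (GG_le_sg lam hne).trans ?_
        rw [show p.1 ^ 2 - p.2 ^ 2 = (p.1 - p.2) * (p.1 + p.2) by ring, Int.natAbs_mul]
        exact sg_mul _ _
    _ = ∑ r ∈ (((Icc (-(N : ℤ)) N) ×ˢ (Icc (-(N : ℤ)) N)).filter (fun p => p.1 ^ 2 ≠ p.2 ^ 2)).image (fun p => (p.1 - p.2, p.1 + p.2)),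
        sg r.1.natAbs ^ 3 * sg r.2.natAbs ^ 3 := by
        rw [Finset.sum_image]
        rintro ⟨a, b⟩ _ ⟨c, d⟩ _ h
        simp only [Prod.mk.injEq] at h ⊢
        omega
    _ ≤ ∑ r ∈ J ×ˢ J, sg r.1.natAbs ^ 3 * sg r.2.natAbs ^ 3 := by
        apply Finset.sum_le_sum_of_subset_of_nonneg
        · intro r hr
          obtain ⟨p, hp, rfl⟩ := Finset.mem_image.mp hr
          simp only [mem_filter, mem_product, mem_Icc] at hp
          simp only [hJ, mem_filter, mem_product, mem_Icc]
          have hne : (p.1 - p.2) * (p.1 + p.2) ≠ 0 := by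
            rw [show (p.1 - p.2) * (p.1 + p.2) = p.1 ^ 2 - p.2 ^ 2 by ring]; exact sub_ne_zero.mpr hp.2
          have h1 := left_ne_zero_of_mul hne
          have h2 := right_ne_zero_of_mul hne
          push_cast
          refine ⟨⟨⟨?_, ?_⟩, h1⟩, ⟨?_, ?_⟩, h2⟩ <;> omega
        · intro r _ _
          have := sg_nonneg r.1.natAbs
          have := sg_nonneg r.2.natAbs
          positivity
    _ = (∑ u ∈ J, sg u.natAbs ^ 3) * (∑ u ∈ J, sg u.natAbs ^ 3) := by
        rw [Finset.sum_mul_sum, Finset.sum_product]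
    _ ≤ (2 * (C * (2 * N : ℕ))) * (2 * (C * (2 * N : ℕ))) := by
        have hb : ∑ u ∈ J, sg u.natAbs ^ 3 ≤ 2 * (C * (2 * N : ℕ)) :=
          (sum_int_abs (2 * N) (fun u => sg u ^ 3) (fun u => pow_nonneg (sg_nonneg u) 3)).trans
            (mul_le_mul_of_nonneg_left (h _) (by norm_num))
        have h0 : 0 ≤ ∑ u ∈ J, sg u.natAbs ^ 3 := Finset.sum_nonneg fun u _ => pow_nonneg (sg_nonneg _) 3
        exact mul_le_mul hb hb h0 (by positivity)
    _ = 16 * C ^ 2 * ((N * N : ℕ) : ℝ) := by push_cast; ring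
    _ ≤ _ := by
        gcongr
        exact Nat.sqrt_le lam

/-- the interval of integers with square at most `lam` -/
def II (lam : ℕ) : Finset ℤ := Icc (-(Nat.sqrt lam : ℤ)) (Nat.sqrt lam)

lemma sum_sq_le (s : Finset ℤ) (g : ℤ → ℝ) (hg : ∀ x, 0 ≤ g x) :
    ∑ x ∈ s, g x ^ 2 ≤ ((∑ x ∈ s, g x ^ (3/2 : ℝ)) ^ (2/3 : ℝ)) ^ 2 := by
  set U := ∑ x ∈ s, g x ^ (3/2 : ℝ) with hU
  have hU0 : 0 ≤ U := Finset.sum_nonneg fun x _ => Real.rpow_nonneg (hg x) _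
  have h1 : ∀ x ∈ s, g x ^ 2 ≤ g x ^ (3/2 : ℝ) * U ^ (1/3 : ℝ) := by
    intro x hx
    have hx1 : g x ^ (3/2 : ℝ) ≤ U := Finset.single_le_sum (f := fun x => g x ^ (3/2 : ℝ)) (fun x _ => Real.rpow_nonneg (hg x) _) hx
    have hx2 : g x ^ (1/2 : ℝ) ≤ U ^ (1/3 : ℝ) := by
      have := Real.rpow_le_rpow (Real.rpow_nonneg (hg x) _) hx1 (by norm_num : (0:ℝ) ≤ 1/3)
      rw [← Real.rpow_mul (hg x)] at this
      norm_num at this ⊢; exact this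
    have : g x ^ 2 = g x ^ (3/2 : ℝ) * g x ^ (1/2 : ℝ) := by
      rw [← Real.rpow_add_of_nonneg (hg x) (by norm_num) (by norm_num)]; norm_num
    rw [this]
    exact mul_le_mul_of_nonneg_left hx2 (Real.rpow_nonneg (hg x) _)
  refine (Finset.sum_le_sum h1).trans (le_of_eq ?_)
  rw [← Finset.sum_mul, ← hU, ← Real.rpow_natCast, ← Real.rpow_mul hU0]
  nth_rewrite 1 [← Real.rpow_one U]
  rw [← Real.rpow_add_of_nonneg hU0 (by norm_num) (by norm_num)]; norm_num

lemma quad_bound : ∃ C : ℝ, 0 ≤ C ∧ ∀ lam : ℕ, 1 ≤ lam → ∀ g : ℤ → ℝ, (∀ x, 0 ≤ g x) →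
    ∑ x ∈ II lam, ∑ y ∈ II lam, g x * g y * GG lam (x ^ 2 - y ^ 2) ≤
      C * (lam:ℝ) ^ (1/3 : ℝ) * ((∑ x ∈ II lam, g x ^ (3/2 : ℝ)) ^ (2/3 : ℝ)) ^ 2 := by
  obtain ⟨C, hC, h⟩ := GG_cube
  refine ⟨C ^ (1/3 : ℝ) + 4, by positivity, fun lam hlam g hg => ?_⟩
  set I := II lam with hI
  set U := ∑ x ∈ I, g x ^ (3/2 : ℝ) with hU
  have hU0 : 0 ≤ U := Finset.sum_nonneg fun x _ => Real.rpow_nonneg (hg x) _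
  have hl1 : (1:ℝ) ≤ lam := by exact_mod_cast hlam
  have hl0 : (0:ℝ) ≤ lam := by linarith
  rw [← Finset.sum_product' (f := fun x y => g x * g y * GG lam (x ^ 2 - y ^ 2)),
    ← Finset.sum_filter_add_sum_filter_not (I ×ˢ I) (fun p => p.1 ^ 2 ≠ p.2 ^ 2)]
  have hoff : ∑ p ∈ (I ×ˢ I).filter (fun p => p.1 ^ 2 ≠ p.2 ^ 2), g p.1 * g p.2 * GG lam (p.1 ^ 2 - p.2 ^ 2)
      ≤ C ^ (1/3 : ℝ) * (lam:ℝ) ^ (1/3 : ℝ) * (U ^ (2/3 : ℝ)) ^ 2 := by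
    have hh := Real.inner_le_Lp_mul_Lq_of_nonneg ((I ×ˢ I).filter (fun p => p.1 ^ 2 ≠ p.2 ^ 2))
      (f := fun p => g p.1 * g p.2) (g := fun p => GG lam (p.1 ^ 2 - p.2 ^ 2)) (p := 3/2) (q := 3)
      (by constructor <;> norm_num) (fun p _ => mul_nonneg (hg _) (hg _)) (fun p _ => GG_nonneg _ _)
    refine hh.trans ?_
    have a1 : ∑ p ∈ (I ×ˢ I).filter (fun p => p.1 ^ 2 ≠ p.2 ^ 2), (g p.1 * g p.2) ^ (3/2 : ℝ) ≤ U * U := by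
      calc _ ≤ ∑ p ∈ I ×ˢ I, (g p.1 * g p.2) ^ (3/2 : ℝ) :=
            Finset.sum_le_sum_of_subset_of_nonneg (Finset.filter_subset _ _)
              (fun p _ _ => Real.rpow_nonneg (mul_nonneg (hg _) (hg _)) _)
        _ = U * U := by
            rw [hU, Finset.sum_mul_sum, Finset.sum_product]
            simp_rw [Real.mul_rpow (hg _) (hg _)]
    have a2 : ∑ p ∈ (I ×ˢ I).filter (fun p => p.1 ^ 2 ≠ p.2 ^ 2), GG lam (p.1 ^ 2 - p.2 ^ 2) ^ (3 : ℝ) ≤ C * lam := by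
      have := h lam hlam
      norm_cast at this ⊢
    have b1 : (∑ p ∈ (I ×ˢ I).filter (fun p => p.1 ^ 2 ≠ p.2 ^ 2), (g p.1 * g p.2) ^ (3/2 : ℝ)) ^ (1 / (3/2) : ℝ) ≤ (U * U) ^ (1/(3/2) : ℝ) :=
      Real.rpow_le_rpow (Finset.sum_nonneg fun p _ => Real.rpow_nonneg (mul_nonneg (hg _) (hg _)) _) a1 (by norm_num)
    have b2 : (∑ p ∈ (I ×ˢ I).filter (fun p => p.1 ^ 2 ≠ p.2 ^ 2), GG lam (p.1 ^ 2 - p.2 ^ 2) ^ (3 : ℝ)) ^ (1 / 3 : ℝ) ≤ (C * lam) ^ (1/3 : ℝ) :=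
      Real.rpow_le_rpow (Finset.sum_nonneg fun p _ => Real.rpow_nonneg (GG_nonneg _ _) _) a2 (by norm_num)
    calc _ ≤ (U * U) ^ (1/(3/2) : ℝ) * (C * lam) ^ (1/3 : ℝ) :=
          mul_le_mul b1 b2 (Real.rpow_nonneg (Finset.sum_nonneg fun p _ => Real.rpow_nonneg (GG_nonneg _ _) _) _) (by positivity)
      _ = _ := by
          rw [Real.mul_rpow hC hl0, Real.mul_rpow hU0 hU0]
          norm_num; ring
  have hdiag : ∑ p ∈ (I ×ˢ I).filter (fun p => ¬ (p.1 ^ 2 ≠ p.2 ^ 2)), g p.1 * g p.2 * GG lam (p.1 ^ 2 - p.2 ^ 2)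
      ≤ 4 * (lam:ℝ) ^ (1/3 : ℝ) * (U ^ (2/3 : ℝ)) ^ 2 := by
    have c1 : ∑ p ∈ (I ×ˢ I).filter (fun p => ¬ (p.1 ^ 2 ≠ p.2 ^ 2)), g p.1 * g p.2 * GG lam (p.1 ^ 2 - p.2 ^ 2)
        = (∑ p ∈ (I ×ˢ I).filter (fun p => ¬ (p.1 ^ 2 ≠ p.2 ^ 2)), g p.1 * g p.2) * GG lam 0 := by
      rw [Finset.sum_mul]
      apply Finset.sum_congr rfl
      intro p hp
      have := (mem_filter.mp hp).2
      push Not at this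
      rw [this, sub_self]
    have c2 : ∑ p ∈ (I ×ˢ I).filter (fun p => ¬ (p.1 ^ 2 ≠ p.2 ^ 2)), g p.1 * g p.2 ≤ 2 * ∑ x ∈ I, g x ^ 2 := by
      rw [Finset.sum_filter, Finset.sum_product]
      calc _ ≤ ∑ x ∈ I, (g x * g x + g x * g (-x)) := by
            apply Finset.sum_le_sum
            intro x _
            rw [← Finset.sum_filter]
            calc _ ≤ ∑ y ∈ ({x, -x} : Finset ℤ), g x * g y := by
                  apply Finset.sum_le_sum_of_subset_of_nonneg
                  · intro y hy
                    have := (mem_filter.mp hy).2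
                    simp only [ne_eq, not_not] at this
                    simp only [mem_insert, mem_singleton]
                    rcases sq_eq_sq_iff_eq_or_eq_neg.mp this with h | h
                    · left; exact h.symm
                    · right; omega
                  · intro y _ _; exact mul_nonneg (hg _) (hg _)
              _ ≤ _ := by
                  rcases eq_or_ne x (-x) with h | h
                  · rw [← h]; simp; exact mul_nonneg (hg _) (hg _)
                  · rw [Finset.sum_pair h]
        _ ≤ ∑ x ∈ I, (3/2 * g x ^ 2 + 1/2 * g (-x) ^ 2) := by
            apply Finset.sum_le_sum
            intro x _
            nlinarith [sq_nonneg (g x - g (-x))]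
        _ = 2 * ∑ x ∈ I, g x ^ 2 := by
            rw [Finset.sum_add_distrib, ← Finset.mul_sum, ← Finset.mul_sum]
            have : ∑ x ∈ I, g (-x) ^ 2 = ∑ x ∈ I, g x ^ 2 := by
              apply Finset.sum_nbij' (fun x => -x) (fun x => -x)
              · intro x hx; simp only [hI, II, mem_Icc] at hx ⊢; omega
              · intro x hx; simp only [hI, II, mem_Icc] at hx ⊢; omega
              · simp
              · simp
              · simp
            rw [this]; ring
    have c3 := sum_sq_le I g hg
    rw [← hU] at c3
    have c4 := GG_zero lam
    have c5 : (lam:ℝ) ^ (1/4 : ℝ) ≤ (lam:ℝ) ^ (1/3 : ℝ) := Real.rpow_le_rpow_of_exponent_le hl1 (by norm_num)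
    rw [c1]
    calc _ ≤ (2 * (U ^ (2/3 : ℝ)) ^ 2) * (2 * (lam:ℝ) ^ (1/3 : ℝ)) := by
          apply mul_le_mul _ _ (GG_nonneg _ _) (by positivity)
          · linarith
          · linarith
      _ = _ := by ring
  rw [add_mul, add_mul]
  exact add_le_add hoff hdiag

lemma amgm_opt {L u v : ℝ} (hu : 0 ≤ u) (hv : 0 ≤ v) (h : ∀ t : ℝ, 0 < t → L ≤ (t * u ^ 2 + t⁻¹ * v ^ 2) / 2) :
    L ≤ u * v := by
  have key : ∀ ε : ℝ, 0 < ε → L ≤ (u + ε) * (v + ε) := by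
    intro ε hε
    have h1 : 0 < u + ε := by linarith
    have h2 : 0 < v + ε := by linarith
    refine (h ((v + ε) / (u + ε)) (by positivity)).trans ?_
    calc _ ≤ ((v + ε) / (u + ε) * (u + ε) ^ 2 + ((v + ε) / (u + ε))⁻¹ * (v + ε) ^ 2) / 2 := by
          gcongr <;> linarith
      _ = _ := by field_simp; ring
  have hc : Filter.Tendsto (fun ε : ℝ => (u + ε) * (v + ε)) (nhdsWithin 0 (Set.Ioi 0)) (nhds (u * v)) := by
    have : Filter.Tendsto (fun ε : ℝ => (u + ε) * (v + ε)) (nhds 0) (nhds ((u + 0) * (v + 0))) := by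
      apply Continuous.tendsto; fun_prop
    simp only [add_zero] at this
    exact this.mono_left nhdsWithin_le_nhds
  refine ge_of_tendsto hc ?_
  filter_upwards [self_mem_nhdsWithin] with ε hε using key ε hε

lemma bilin_bound : ∃ C : ℝ, 0 ≤ C ∧ ∀ lam : ℕ, 1 ≤ lam → ∀ g1 g2 : ℤ → ℝ, (∀ x, 0 ≤ g1 x) → (∀ x, 0 ≤ g2 x) →
    ∫ α in (0:ℝ)..1, ‖SS lam g1 α‖ * ‖SS lam g2 α‖ * WW lam α ≤
      C * (lam:ℝ) ^ (5/6 : ℝ) * ((∑ x ∈ II lam, g1 x ^ (3/2 : ℝ)) ^ (2/3 : ℝ) * (∑ x ∈ II lam, g2 x ^ (3/2 : ℝ)) ^ (2/3 : ℝ)) := by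
  obtain ⟨C, hC, h⟩ := quad_bound
  refine ⟨8 * C, by positivity, fun lam hlam g1 g2 hg1 hg2 => ?_⟩
  have hl : (0:ℝ) < lam := by exact_mod_cast hlam
  have hone : ∀ g : ℤ → ℝ, (∀ x, 0 ≤ g x) → ∫ α in (0:ℝ)..1, ‖SS lam g α‖ ^ 2 * WW lam α ≤
      8 * C * (lam:ℝ) ^ (5/6 : ℝ) * ((∑ x ∈ II lam, g x ^ (3/2 : ℝ)) ^ (2/3 : ℝ)) ^ 2 := by
    intro g hg
    refine (int_SW hlam g hg).trans ?_
    have := h lam hlam g hg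
    calc _ ≤ 8 * Real.sqrt lam * (C * (lam:ℝ) ^ (1/3 : ℝ) * ((∑ x ∈ II lam, g x ^ (3/2 : ℝ)) ^ (2/3 : ℝ)) ^ 2) :=
          mul_le_mul_of_nonneg_left this (by positivity)
      _ = _ := by
          have e : (lam:ℝ) ^ (5/6 : ℝ) = Real.sqrt lam * (lam:ℝ) ^ (1/3 : ℝ) := by
            rw [Real.sqrt_eq_rpow, ← Real.rpow_add hl]; norm_num
          rw [e]; ring
  set A := 8 * C * (lam:ℝ) ^ (5/6 : ℝ) with hA
  have hA0 : 0 ≤ A := by positivity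
  set u1 := (∑ x ∈ II lam, g1 x ^ (3/2 : ℝ)) ^ (2/3 : ℝ) with hu1
  set u2 := (∑ x ∈ II lam, g2 x ^ (3/2 : ℝ)) ^ (2/3 : ℝ) with hu2
  have hu10 : 0 ≤ u1 := Real.rpow_nonneg (Finset.sum_nonneg fun x _ => Real.rpow_nonneg (hg1 x) _) _
  have hu20 : 0 ≤ u2 := Real.rpow_nonneg (Finset.sum_nonneg fun x _ => Real.rpow_nonneg (hg2 x) _) _
  have hres := amgm_opt (L := ∫ α in (0:ℝ)..1, ‖SS lam g1 α‖ * ‖SS lam g2 α‖ * WW lam α) (u := Real.sqrt A * u1) (v := Real.sqrt A * u2) (by positivity) (by positivity) ?_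
  · calc _ ≤ _ := hres
      _ = (Real.sqrt A * Real.sqrt A) * (u1 * u2) := by ring
      _ = _ := by rw [Real.mul_self_sqrt hA0]
  intro t ht
  have c1 := continuous_SS lam g1
  have c2 := continuous_SS lam g2
  have c3 := continuous_WW hlam
  calc _ ≤ ∫ α in (0:ℝ)..1, ((t / 2) * (‖SS lam g1 α‖ ^ 2 * WW lam α) + (t⁻¹ / 2) * (‖SS lam g2 α‖ ^ 2 * WW lam α)) := by
        apply intervalIntegral.integral_mono (by norm_num)
        · apply Continuous.intervalIntegrable; fun_prop
        · apply Continuous.intervalIntegrable; fun_prop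
        · intro α
          have hW := WW_nonneg lam α
          have : ‖SS lam g1 α‖ * ‖SS lam g2 α‖ ≤ t / 2 * ‖SS lam g1 α‖ ^ 2 + t⁻¹ / 2 * ‖SS lam g2 α‖ ^ 2 := by
            have h3 : 0 ≤ t⁻¹ / 2 * (t * ‖SS lam g1 α‖ - ‖SS lam g2 α‖) ^ 2 := by positivity
            have h4 : t⁻¹ / 2 * (t * ‖SS lam g1 α‖ - ‖SS lam g2 α‖) ^ 2 = t / 2 * ‖SS lam g1 α‖ ^ 2 + t⁻¹ / 2 * ‖SS lam g2 α‖ ^ 2 - ‖SS lam g1 α‖ * ‖SS lam g2 α‖ := by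
              field_simp; ring
            linarith
          calc _ ≤ (t / 2 * ‖SS lam g1 α‖ ^ 2 + t⁻¹ / 2 * ‖SS lam g2 α‖ ^ 2) * WW lam α := mul_le_mul_of_nonneg_right this hW
            _ = _ := by ring
    _ = (t / 2) * (∫ α in (0:ℝ)..1, ‖SS lam g1 α‖ ^ 2 * WW lam α) + (t⁻¹ / 2) * ∫ α in (0:ℝ)..1, ‖SS lam g2 α‖ ^ 2 * WW lam α := by
        rw [intervalIntegral.integral_add, intervalIntegral.integral_const_mul, intervalIntegral.integral_const_mul]
        · apply Continuous.intervalIntegrable; fun_prop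
        · apply Continuous.intervalIntegrable; fun_prop
    _ ≤ (t / 2) * (A * u1 ^ 2) + (t⁻¹ / 2) * (A * u2 ^ 2) := by
        have := hone g1 hg1
        have := hone g2 hg2
        gcongr
    _ = _ := by
        rw [mul_pow, mul_pow, Real.sq_sqrt hA0]; ring

lemma prod_split {M : Type*} [CommMonoid M] {n : ℕ} {i j : Fin n} (hij : i ≠ j) (F : Fin n → M) (z : M)
    (hF : ∀ k, k ≠ i → k ≠ j → F k = z) : ∏ k, F k = F i * F j * z ^ (n - 2) := by
  rw [← Finset.mul_prod_erase univ F (mem_univ i), ← Finset.mul_prod_erase (univ.erase i) F (a := j) (by simp [hij.symm]), mul_assoc]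
  congr 2
  rw [Finset.prod_congr rfl (g := fun _ => z), Finset.prod_const]
  · congr 1
    rw [Finset.card_erase_of_mem (by simp [hij.symm]), Finset.card_erase_of_mem (mem_univ _)]
    simp; omega
  · intro k hk
    simp only [mem_erase] at hk
    exact hF k hk.2.1 hk.1

lemma sph_coord {n lam : ℕ} {x : Fin n → ℤ} (hx : x ∈ sph n lam) (k : Fin n) : x k ∈ II lam := by
  rw [mem_sph] at hx
  have h1 : x k ^ 2 ≤ (lam:ℤ) := by
    rw [← hx]; exact Finset.single_le_sum (f := fun k => x k ^ 2) (fun _ _ => sq_nonneg _) (mem_univ k)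
  have h2 : (x k).natAbs ≤ Nat.sqrt lam := by
    rw [Nat.le_sqrt]
    zify
    rw [← sq, sq_abs]; exact h1
  rw [II, mem_Icc]; omega

lemma pair_bound (n : ℕ) (hn : 5 ≤ n) : ∃ C : ℝ, 0 ≤ C ∧ ∀ lam : ℕ, 1 ≤ lam → ∀ i j : Fin n, i ≠ j →
    ∀ g1 g2 : ℤ → ℝ, (∀ x, 0 ≤ g1 x) → (∀ x, 0 ≤ g2 x) →
    ∑ x ∈ sph n lam, g1 (x i) * g2 (x j) ≤ C * (sph n lam).card *
      (((lam:ℝ) ^ (-(1/2) : ℝ) * ∑ x ∈ II lam, g1 x ^ (3/2 : ℝ)) ^ (2/3 : ℝ) *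
        ((lam:ℝ) ^ (-(1/2) : ℝ) * ∑ x ∈ II lam, g2 x ^ (3/2 : ℝ)) ^ (2/3 : ℝ)) := by
  obtain ⟨B, hB, hW⟩ := WW_bound
  obtain ⟨C, hC, hbil⟩ := bilin_bound
  obtain ⟨c, hc, hsph⟩ := sph_ge n hn
  refine ⟨Real.exp Real.pi * B ^ (n - 2) * C * c⁻¹, by positivity, fun lam hlam i j hij g1 g2 hg1 hg2 => ?_⟩
  have hl : (0:ℝ) < lam := by exact_mod_cast hlam
  obtain ⟨T, hT, hW⟩ := hW lam hlam
  have hNT : (Nat.sqrt lam : ℤ) ≤ T := le_trans (by exact_mod_cast Nat.sqrt_le_self lam) hT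
  set φ : Fin n → ℤ → ℝ := fun k => if k = i then g1 else if k = j then g2 else fun x => Real.exp (-Real.pi * x ^ 2 / lam) with hφ
  set TT : Fin n → ℤ := fun k => if k = i then (Nat.sqrt lam : ℤ) else if k = j then (Nat.sqrt lam : ℤ) else T with hTT
  have hφi : φ i = g1 := by simp [hφ]
  have hφj : φ j = g2 := by simp [hφ, hij.symm]
  have hφk : ∀ k, k ≠ i → k ≠ j → φ k = fun x : ℤ => Real.exp (-Real.pi * x ^ 2 / lam) := by
    intro k h1 h2; simp [hφ, h1, h2]
  have hTi : TT i = (Nat.sqrt lam : ℤ) := by simp [hTT]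
  have hTj : TT j = (Nat.sqrt lam : ℤ) := by simp [hTT]
  have hTk : ∀ k, k ≠ i → k ≠ j → TT k = T := by
    intro k h1 h2; simp [hTT, h1, h2]
  have hNTT : ∀ k, (Nat.sqrt lam : ℤ) ≤ TT k := by
    intro k
    simp only [hTT]; split_ifs <;> first | exact le_refl _ | exact hNT
  have hcirc := circle n TT φ lam
  -- lower bound
  have hlow : Real.exp (-Real.pi) * ∑ x ∈ sph n lam, g1 (x i) * g2 (x j) ≤
      ∑ x ∈ (Fintype.piFinset fun k => Icc (-(TT k)) (TT k)).filter (fun x => ∑ k, x k ^ 2 = (lam:ℤ)), ∏ k, φ k (x k) := by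
    have hset : (Fintype.piFinset fun k => Icc (-(TT k)) (TT k)).filter (fun x => ∑ k, x k ^ 2 = (lam:ℤ)) = sph n lam := by
      ext x
      rw [mem_filter, mem_sph]
      constructor
      · exact fun h => h.2
      · intro h
        refine ⟨?_, h⟩
        rw [Fintype.mem_piFinset]
        intro k
        have h1 := sph_coord (mem_sph.mpr h) k
        have h2 := hNTT k
        rw [II, mem_Icc] at h1
        rw [mem_Icc]; omega
    rw [hset, Finset.mul_sum]
    apply Finset.sum_le_sum
    intro x hx
    have e1 : ∏ k, φ k (x k) = g1 (x i) * g2 (x j) * ∏ k ∈ (univ.erase i).erase j, Real.exp (-Real.pi * x k ^ 2 / lam) := by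
      rw [← Finset.mul_prod_erase univ _ (mem_univ i), ← Finset.mul_prod_erase (univ.erase i) _ (a := j) (by simp [hij.symm]), hφi, hφj, mul_assoc]
      congr 2
      apply Finset.prod_congr rfl
      intro k hk
      simp only [mem_erase] at hk
      rw [hφk k hk.2.1 hk.1]
    rw [e1, mul_comm]
    apply mul_le_mul_of_nonneg_left _ (mul_nonneg (hg1 _) (hg2 _))
    rw [← Real.exp_sum]
    apply Real.exp_le_exp.mpr
    have h3 : ∑ k ∈ (univ.erase i).erase j, (x k : ℝ) ^ 2 ≤ lam := by
      have : ∑ k, (x k:ℝ) ^ 2 = lam := by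
        have := mem_sph.mp hx
        exact_mod_cast this
      rw [← this]
      apply Finset.sum_le_sum_of_subset_of_nonneg (Finset.subset_univ _)
      intros; positivity
    have h4 : ∑ k ∈ (univ.erase i).erase j, (-Real.pi * (x k : ℝ) ^ 2 / lam) = -(Real.pi * ((∑ k ∈ (univ.erase i).erase j, (x k : ℝ) ^ 2) / lam)) := by
      rw [Finset.sum_div, Finset.mul_sum, ← Finset.sum_neg_distrib]
      apply Finset.sum_congr rfl; intros; ring
    rw [h4, neg_le_neg_iff]
    have h5 : (∑ k ∈ (univ.erase i).erase j, (x k : ℝ) ^ 2) / lam ≤ 1 := by rw [div_le_one hl]; exact h3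
    nlinarith [Real.pi_pos]
  -- product form
  have hprod : ∀ α : ℝ, ∏ k, ‖∑ x ∈ Icc (-(TT k)) (TT k), (φ k x : ℂ) * ee (α * ((x ^ 2 : ℤ) : ℝ))‖ =
      ‖SS lam g1 α‖ * ‖SS lam g2 α‖ * ‖KT lam T α‖ ^ (n - 2) := by
    intro α
    rw [prod_split hij _ ‖KT lam T α‖]
    · rw [hφi, hφj, hTi, hTj]; rfl
    · intro k h1 h2
      rw [hφk k h1 h2, hTk k h1 h2, KT]
      congr 1
      apply Finset.sum_congr rfl
      intro x _
      rw [Complex.ofReal_exp, ee, ← Complex.exp_add]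
      congr 1; push_cast; ring
  simp_rw [hprod] at hcirc
  have c1 := continuous_SS lam g1
  have c2 := continuous_SS lam g2
  have c3 := continuous_WW hlam
  have c4 : Continuous (KT lam T) := by unfold KT; fun_prop
  have hup : ∫ α in (0:ℝ)..1, ‖SS lam g1 α‖ * ‖SS lam g2 α‖ * ‖KT lam T α‖ ^ (n - 2) ≤
      B ^ (n - 2) * (lam:ℝ) ^ ((((n - 2 : ℕ):ℝ) - 3) / 2) * ∫ α in (0:ℝ)..1, ‖SS lam g1 α‖ * ‖SS lam g2 α‖ * WW lam α := by
    rw [← intervalIntegral.integral_const_mul]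
    apply intervalIntegral.integral_mono_on (by norm_num)
    · apply Continuous.intervalIntegrable; fun_prop
    · apply Continuous.intervalIntegrable; fun_prop
    · intro α hα
      have := hW α hα.1 hα.2 (n - 2) (by omega)
      calc _ ≤ ‖SS lam g1 α‖ * ‖SS lam g2 α‖ * (B ^ (n - 2) * (lam:ℝ) ^ ((((n - 2 : ℕ):ℝ) - 3) / 2) * WW lam α) := by gcongr
        _ = _ := by ring
  have hb := hbil lam hlam g1 g2 hg1 hg2
  set U1 := ∑ x ∈ II lam, g1 x ^ (3/2 : ℝ) with hU1
  set U2 := ∑ x ∈ II lam, g2 x ^ (3/2 : ℝ) with hU2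
  have hU10 : 0 ≤ U1 := Finset.sum_nonneg fun x _ => Real.rpow_nonneg (hg1 x) _
  have hU20 : 0 ≤ U2 := Finset.sum_nonneg fun x _ => Real.rpow_nonneg (hg2 x) _
  have hs := hsph lam hlam
  set R := ∑ x ∈ sph n lam, g1 (x i) * g2 (x j)
  have hfin : Real.exp (-Real.pi) * R ≤ B ^ (n - 2) * (lam:ℝ) ^ ((((n - 2 : ℕ):ℝ) - 3) / 2) * (C * (lam:ℝ) ^ (5/6 : ℝ) * (U1 ^ (2/3:ℝ) * U2 ^ (2/3:ℝ))) := by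
    refine (hlow.trans hcirc).trans (hup.trans ?_)
    gcongr
  have hexp : Real.exp Real.pi * Real.exp (-Real.pi) = 1 := by rw [← Real.exp_add]; simp
  have hpw : (lam:ℝ) ^ ((((n - 2 : ℕ):ℝ) - 3) / 2) * (lam:ℝ) ^ (5/6 : ℝ) = (lam:ℝ) ^ ((n:ℝ)/2 - 1) * ((lam:ℝ) ^ (-(1/3) : ℝ) * (lam:ℝ) ^ (-(1/3) : ℝ)) := by
    rw [← Real.rpow_add hl, ← Real.rpow_add hl, ← Real.rpow_add hl]
    congr 1
    push_cast [Nat.cast_sub (show 2 ≤ n by omega)]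
    ring
  have hm : ∀ U : ℝ, 0 ≤ U → ((lam:ℝ) ^ (-(1/2) : ℝ) * U) ^ (2/3 : ℝ) = (lam:ℝ) ^ (-(1/3) : ℝ) * U ^ (2/3 : ℝ) := by
    intro U hU
    rw [Real.mul_rpow (by positivity) hU, ← Real.rpow_mul hl.le]; norm_num
  rw [hm U1 hU10, hm U2 hU20]
  calc R = Real.exp Real.pi * (Real.exp (-Real.pi) * R) := by rw [← mul_assoc, hexp, one_mul]
    _ ≤ Real.exp Real.pi * (B ^ (n - 2) * (lam:ℝ) ^ ((((n - 2 : ℕ):ℝ) - 3) / 2) * (C * (lam:ℝ) ^ (5/6 : ℝ) * (U1 ^ (2/3:ℝ) * U2 ^ (2/3:ℝ)))) := by gcongr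
    _ = Real.exp Real.pi * B ^ (n - 2) * C * ((lam:ℝ) ^ ((((n - 2 : ℕ):ℝ) - 3) / 2) * (lam:ℝ) ^ (5/6 : ℝ)) * (U1 ^ (2/3:ℝ) * U2 ^ (2/3:ℝ)) := by ring
    _ = Real.exp Real.pi * B ^ (n - 2) * C * c⁻¹ * (c * (lam:ℝ) ^ ((n:ℝ)/2 - 1)) * ((lam:ℝ) ^ (-(1/3) : ℝ) * U1 ^ (2/3:ℝ) * ((lam:ℝ) ^ (-(1/3) : ℝ) * U2 ^ (2/3:ℝ))) := by
        rw [hpw]; field_simp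
    _ ≤ Real.exp Real.pi * B ^ (n - 2) * C * c⁻¹ * ((sph n lam).card : ℝ) * ((lam:ℝ) ^ (-(1/3) : ℝ) * U1 ^ (2/3:ℝ) * ((lam:ℝ) ^ (-(1/3) : ℝ) * U2 ^ (2/3:ℝ))) := by
        gcongr

/-- maximal partial sums -/
def Sg (h : ℤ → ℝ) (t : ℝ) : ℕ → ℤ → ℝ
  | 0, _ => 0
  | K + 1, y => max 0 (h y - t + Sg h t K (y + 1))

lemma Sg_nonneg (h : ℤ → ℝ) (t : ℝ) (K : ℕ) (y : ℤ) : 0 ≤ Sg h t K y := by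
  cases K <;> simp [Sg]

lemma Sg_mono (h : ℤ → ℝ) (t : ℝ) (K : ℕ) (y : ℤ) : Sg h t K y ≤ Sg h t (K + 1) y := by
  induction K generalizing y with
  | zero => rw [Sg]; exact Sg_nonneg _ _ _ _
  | succ K ih =>
    rw [Sg, Sg]
    exact max_le_max (le_refl _) (by linarith [ih (y + 1)])

lemma Sg_ge (h : ℤ → ℝ) (t : ℝ) (K : ℕ) (y : ℤ) (k : ℕ) (hk : k ≤ K) :
    ∑ j ∈ range k, (h (y + j) - t) ≤ Sg h t K y := by
  induction K generalizing y k with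
  | zero => obtain rfl : k = 0 := by omega
            simp [Sg]
  | succ K ih =>
    cases k with
    | zero => simpa using Sg_nonneg h t (K + 1) y
    | succ k =>
      rw [Finset.sum_range_succ', Sg]
      have := ih (y + 1) k (by omega)
      refine le_trans ?_ (le_max_right _ _)
      have e : ∑ j ∈ range k, (h (y + ((j + 1 : ℕ) : ℤ)) - t) = ∑ j ∈ range k, (h (y + 1 + j) - t) := by
        apply Finset.sum_congr rfl; intro j _; congr 2; push_cast; ring
      rw [e]
      simp only [Nat.cast_zero, add_zero]
      linarith

lemma Sg_exists (h : ℤ → ℝ) (t : ℝ) (K : ℕ) (y : ℤ) : ∃ k, k ≤ K ∧ Sg h t K y = ∑ j ∈ range k, (h (y + j) - t) := by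
  induction K generalizing y with
  | zero => exact ⟨0, le_refl _, by simp [Sg]⟩
  | succ K ih =>
    rcases le_total (h y - t + Sg h t K (y + 1)) 0 with h0 | h0
    · exact ⟨0, by omega, by rw [Sg, max_eq_left h0]; simp⟩
    · obtain ⟨k, hk, e⟩ := ih (y + 1)
      refine ⟨k + 1, by omega, ?_⟩
      rw [Sg, max_eq_right h0, e, Finset.sum_range_succ']
      have e : ∑ j ∈ range k, (h (y + ((j + 1 : ℕ) : ℤ)) - t) = ∑ j ∈ range k, (h (y + 1 + j) - t) := by
        apply Finset.sum_congr rfl; intro j _; congr 2; push_cast; ring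
      rw [e]
      simp only [Nat.cast_zero, add_zero]
      linarith

def mx (h : ℤ → ℝ) (K : ℕ) (y : ℤ) : ℝ :=
  (range (K + 1)).sup' (Finset.nonempty_range_iff.mpr (Nat.succ_ne_zero K)) (fun k => (k:ℝ)⁻¹ * ∑ j ∈ range k, h (y + j))

lemma mx_nonneg (h : ℤ → ℝ) (K : ℕ) (y : ℤ) : 0 ≤ mx h K y := by
  rw [mx, Finset.le_sup'_iff]
  exact ⟨0, by simp, by simp⟩

lemma lt_mx_iff (h : ℤ → ℝ) (K : ℕ) (y : ℤ) {t : ℝ} (ht : 0 < t) : t < mx h K y ↔ 0 < Sg h t K y := by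
  rw [mx, Finset.lt_sup'_iff]
  constructor
  · rintro ⟨k, hk, hlt⟩
    have hk0 : k ≠ 0 := by rintro rfl; simp at hlt; linarith
    have hkp : (0:ℝ) < k := by positivity
    refine lt_of_lt_of_le ?_ (Sg_ge h t K y k (by simpa [Nat.lt_succ_iff] using hk))
    rw [Finset.sum_sub_distrib]
    simp only [sum_const, card_range, nsmul_eq_mul]
    rw [lt_inv_mul_iff₀ hkp] at hlt
    linarith
  · intro hpos
    obtain ⟨k, hk, e⟩ := Sg_exists h t K y
    refine ⟨k, by simpa [Nat.lt_succ_iff] using hk, ?_⟩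
    rw [e] at hpos
    have hk0 : k ≠ 0 := by rintro rfl; simp at hpos
    have hkp : (0:ℝ) < k := by positivity
    rw [Finset.sum_sub_distrib] at hpos
    simp only [sum_const, card_range, nsmul_eq_mul] at hpos
    rw [lt_inv_mul_iff₀ hkp]
    linarith

/-- support of mx -/
def FF (s : Finset ℤ) (K : ℕ) : Finset ℤ := (s ×ˢ range (K + 1)).image (fun p => p.1 - p.2)

lemma mx_supp (h : ℤ → ℝ) (s : Finset ℤ) (hs : ∀ x, x ∉ s → h x = 0) (K : ℕ) (y : ℤ) (hy : y ∉ FF s K) : mx h K y = 0 := by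
  apply le_antisymm _ (mx_nonneg _ _ _)
  rw [mx]
  apply Finset.sup'_le
  intro k hk
  have : ∑ j ∈ range k, h (y + j) = 0 := by
    apply Finset.sum_eq_zero
    intro j hj
    apply hs
    intro hmem
    apply hy
    rw [FF, mem_image]
    refine ⟨(y + j, j), ?_, by simp⟩
    simp only [mem_product, mem_range] at *
    exact ⟨hmem, by omega⟩
  rw [this]; simp

lemma weak_type (h : ℤ → ℝ) (s : Finset ℤ) (hs : ∀ x, x ∉ s → h x = 0) (K : ℕ) {t : ℝ} (ht : 0 < t) :
    t * ((FF s K).filter (fun y => t < mx h K y)).card ≤ ∑ y ∈ (FF s K).filter (fun y => t < mx h K y), h y := by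
  set E := (FF s K).filter (fun y => t < mx h K y) with hE
  have hEmem : ∀ y, y ∈ E ↔ 0 < Sg h t K y := by
    intro y
    rw [hE, mem_filter, lt_mx_iff _ _ _ ht]
    constructor
    · exact fun h => h.2
    · intro hp
      refine ⟨?_, hp⟩
      by_contra hc
      have := mx_supp h s hs K y hc
      rw [← lt_mx_iff _ _ _ ht, this] at hp
      linarith
  have h1 : ∀ y ∈ E, Sg h t K y - Sg h t K (y + 1) ≤ h y - t := by
    intro y hy
    have hp := (hEmem y).mp hy
    cases K with
    | zero => simp [Sg] at hp
    | succ K =>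
      have hm := Sg_mono h t K (y + 1)
      have : Sg h t (K + 1) y = h y - t + Sg h t K (y + 1) := by
        rw [Sg] at hp ⊢
        rcases max_cases 0 (h y - t + Sg h t K (y + 1)) with h | h
        · rw [h.1] at hp; exact absurd hp (lt_irrefl _)
        · exact h.1
      linarith
  have h2 := Finset.sum_le_sum h1
  have h3 : ∑ y ∈ E, Sg h t K (y + 1) ≤ ∑ y ∈ E, Sg h t K y := by
    calc ∑ y ∈ E, Sg h t K (y + 1) = ∑ z ∈ E.image (fun y => y + 1), Sg h t K z := by
          rw [Finset.sum_image]; intro a _ b _ hab; simpa using hab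
      _ = ∑ z ∈ (E.image (fun y => y + 1)).filter (fun z => z ∈ E), Sg h t K z := by
          rw [Finset.sum_filter_of_ne]
          intro z _ hz
          rw [hEmem]; exact lt_of_le_of_ne (Sg_nonneg _ _ _ _) hz.symm
      _ ≤ _ := by
          apply Finset.sum_le_sum_of_subset_of_nonneg
          · intro z hz; exact (mem_filter.mp hz).2
          · intros; exact Sg_nonneg _ _ _ _
  rw [Finset.sum_sub_distrib, Finset.sum_sub_distrib] at h2
  simp only [sum_const, nsmul_eq_mul] at h2
  linarith

lemma hl_fin (h : ℤ → ℝ) (hh : ∀ x, 0 ≤ h x) (s : Finset ℤ) (hs : ∀ x, x ∉ s → h x = 0) (K : ℕ) :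
    ∑' y, ENNReal.ofReal (mx h K y ^ (4/3 : ℝ)) ≤ 4 * ∑' y, ENNReal.ofReal (h y) * ENNReal.ofReal (mx h K y ^ (1/3 : ℝ)) := by
  set μ : Measure ℤ := Measure.count.withDensity (fun y => ENNReal.ofReal (h y)) with hμ
  have L1 := lintegral_rpow_eq_lintegral_meas_lt_mul (Measure.count : Measure ℤ) (f := mx h K)
    (Filter.Eventually.of_forall (mx_nonneg h K)) (Measurable.of_discrete).aemeasurable (p := 4/3) (by norm_num)
  have L2 := lintegral_rpow_eq_lintegral_meas_lt_mul μ (f := mx h K)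
    (Filter.Eventually.of_forall (mx_nonneg h K)) (Measurable.of_discrete).aemeasurable (p := 1/3) (by norm_num)
  rw [lintegral_count] at L1
  rw [hμ, lintegral_withDensity_eq_lintegral_mul _ Measurable.of_discrete Measurable.of_discrete, lintegral_count, ← hμ] at L2
  simp only [Pi.mul_apply] at L2
  rw [L1, L2, ← mul_assoc]
  have e4 : ENNReal.ofReal (4/3) = 4 * ENNReal.ofReal (1/3) := by
    rw [show (4/3:ℝ) = 4 * (1/3) by norm_num, ENNReal.ofReal_mul (by norm_num)]; norm_num
  rw [e4]
  refine mul_le_mul' le_rfl ?_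
  apply setLIntegral_mono' measurableSet_Ioi
  intro t ht
  have ht : 0 < t := ht
  set E := (FF s K).filter (fun y => t < mx h K y) with hE
  have hset : {a | t < mx h K a} = (E : Set ℤ) := by
    ext y
    simp only [Set.mem_ofPred_eq, hE, coe_filter]
    constructor
    · intro hy
      refine ⟨?_, hy⟩
      by_contra hc
      rw [mx_supp h s hs K y hc] at hy; linarith
    · exact fun h => h.2
  rw [hset, Measure.count_apply_finset, hμ, withDensity_apply _ (Finset.measurableSet E)]
  have hsum2 : ∫⁻ a in (E : Set ℤ), ENNReal.ofReal (h a) ∂Measure.count = ENNReal.ofReal (∑ y ∈ E, h y) := by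
    rw [lintegral_finset]
    rw [ENNReal.ofReal_sum_of_nonneg (fun y _ => hh y)]
    simp
  rw [hsum2]
  have hw := weak_type h s hs K ht
  rw [← hE] at hw
  have hE0 : 0 ≤ ∑ y ∈ E, h y := Finset.sum_nonneg fun y _ => hh y
  have e1 : ((E.card : ℕ) : ℝ≥0∞) = ENNReal.ofReal E.card := by simp
  rw [e1, ← ENNReal.ofReal_mul (by positivity), ← ENNReal.ofReal_mul hE0]
  apply ENNReal.ofReal_le_ofReal
  have e2 : t ^ ((4/3:ℝ) - 1) = t * t ^ ((1/3:ℝ) - 1) := by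
    nth_rewrite 2 [← Real.rpow_one t]
    rw [← Real.rpow_add ht]; norm_num
  rw [e2]
  have : 0 ≤ t ^ ((1/3:ℝ) - 1) := by positivity
  nlinarith

lemma young_pt {h m : ℝ} (hh : 0 ≤ h) (hm : 0 ≤ m) :
    4 * (h * m ^ (1/3:ℝ)) ≤ (1/2) * m ^ (4/3:ℝ) + 8 * h ^ (4/3:ℝ) := by
  have e : ∀ x : ℝ, 0 ≤ x → x ^ (4/3:ℝ) = x * x ^ (1/3:ℝ) := by
    intro x hx
    rw [show (4/3:ℝ) = 1 + 1/3 by norm_num, Real.rpow_add' hx (by norm_num), Real.rpow_one]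
  rw [e m hm, e h hh]
  have p1 : 0 ≤ m ^ (1/3:ℝ) := by positivity
  have p2 : 0 ≤ h ^ (1/3:ℝ) := by positivity
  rcases le_total (8 * h) m with c | c
  · have : 8 * h * m ^ (1/3:ℝ) ≤ m * m ^ (1/3:ℝ) := by gcongr
    have : 0 ≤ h * h ^ (1/3:ℝ) := by positivity
    nlinarith
  · have h1 : m ^ (1/3:ℝ) ≤ (8 * h) ^ (1/3:ℝ) := Real.rpow_le_rpow hm c (by norm_num)
    rw [Real.mul_rpow (by norm_num) hh] at h1
    have e8 : (8:ℝ) ^ (1/3:ℝ) = 2 := by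
      rw [show (8:ℝ) = 2 ^ (3:ℝ) by norm_num, ← Real.rpow_mul (by norm_num)]; norm_num
    rw [e8] at h1
    have : h * m ^ (1/3:ℝ) ≤ h * (2 * h ^ (1/3:ℝ)) := by gcongr
    have : 0 ≤ m * m ^ (1/3:ℝ) := by positivity
    nlinarith

lemma hl_fin2 (h : ℤ → ℝ) (hh : ∀ x, 0 ≤ h x) (s : Finset ℤ) (hs : ∀ x, x ∉ s → h x = 0) (K : ℕ) :
    ∑' y, ENNReal.ofReal (mx h K y ^ (4/3 : ℝ)) ≤ 16 * ∑' y, ENNReal.ofReal (h y ^ (4/3:ℝ)) := by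
  have h1 := hl_fin h hh s hs K
  set X := ∑' y, ENNReal.ofReal (mx h K y ^ (4/3 : ℝ)) with hX
  set H := ∑' y, ENNReal.ofReal (h y ^ (4/3:ℝ)) with hH
  have hfin : X ≠ ∞ := by
    rw [hX, tsum_eq_sum (s := FF s K)]
    · exact ENNReal.sum_ne_top.mpr (fun _ _ => ENNReal.ofReal_ne_top)
    · intro y hy
      rw [mx_supp h s hs K y hy]; simp
  have hfinH : H ≠ ∞ := by
    rw [hH, tsum_eq_sum (s := s)]
    · exact ENNReal.sum_ne_top.mpr (fun _ _ => ENNReal.ofReal_ne_top)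
    · intro y hy
      rw [hs y hy]; simp
  have h2 : 4 * ∑' y, ENNReal.ofReal (h y) * ENNReal.ofReal (mx h K y ^ (1/3 : ℝ)) ≤
      ENNReal.ofReal (1/2) * X + ENNReal.ofReal 8 * H := by
    rw [hX, hH, ← ENNReal.tsum_mul_left, ← ENNReal.tsum_mul_left, ← ENNReal.tsum_mul_left, ← ENNReal.tsum_add]
    apply ENNReal.tsum_le_tsum
    intro y
    have m0 := mx_nonneg h K y
    have := ENNReal.ofReal_le_ofReal (young_pt (hh y) m0)
    rw [ENNReal.ofReal_add (by positivity) (by have := hh y; positivity), ENNReal.ofReal_mul (by norm_num),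
      ENNReal.ofReal_mul (hh y), ENNReal.ofReal_mul (by norm_num), ENNReal.ofReal_mul (by norm_num)] at this
    simpa using this
  have h3 := h1.trans h2
  clear h1 h2
  clear_value X H
  lift X to ℝ≥0 using hfin
  lift H to ℝ≥0 using hfinH
  rw [← ENNReal.ofReal_coe_nnreal, ← ENNReal.ofReal_coe_nnreal (p := H), ← ENNReal.ofReal_mul (by norm_num),
    ← ENNReal.ofReal_mul (by norm_num), ← ENNReal.ofReal_add (by positivity) (by positivity),
    ENNReal.ofReal_le_ofReal_iff (by positivity)] at h3
  have : X ≤ 16 * H := by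
    rw [← NNReal.coe_le_coe]; push_cast; linarith
  exact_mod_cast this

/-- one sided maximal function -/
def Mp (h : ℤ → ℝ) (y : ℤ) : ℝ≥0∞ := ⨆ k : ℕ, ENNReal.ofReal ((k:ℝ)⁻¹ * ∑ j ∈ range k, h (y + j))

def trn (h : ℤ → ℝ) (L : ℕ) : ℤ → ℝ := fun x => if x ∈ Icc (-(L:ℤ)) L then h x else 0

lemma mx_mono {h h' : ℤ → ℝ} (hh : ∀ x, h x ≤ h' x) {K K' : ℕ} (hK : K ≤ K') (y : ℤ) : mx h K y ≤ mx h' K' y := by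
  rw [mx, Finset.sup'_le_iff]
  intro k hk
  rw [mx, Finset.le_sup'_iff]
  refine ⟨k, by simp at *; omega, ?_⟩
  have := Finset.sum_le_sum (s := range k) (fun j _ => hh (y + j))
  gcongr

lemma Mp_le (h : ℤ → ℝ) (y : ℤ) : Mp h y ≤ ⨆ L : ℕ, ENNReal.ofReal (mx (trn h L) L y) := by
  rw [Mp]
  apply iSup_le
  intro k
  refine le_trans ?_ (le_iSup _ (y.natAbs + k))
  apply ENNReal.ofReal_le_ofReal
  rw [mx, Finset.le_sup'_iff]
  refine ⟨k, by simp, ?_⟩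
  apply le_of_eq
  congr 1
  apply Finset.sum_congr rfl
  intro j hj
  rw [trn, if_pos]
  simp only [mem_Icc, mem_range] at *
  push_cast
  constructor <;> cases abs_cases y <;> omega

lemma hl_Mp (h : ℤ → ℝ) (hh : ∀ x, 0 ≤ h x) :
    ∑' y, (Mp h y) ^ (4/3:ℝ) ≤ 16 * ∑' y, ENNReal.ofReal (h y ^ (4/3:ℝ)) := by
  have h1 : ∀ y, (Mp h y) ^ (4/3:ℝ) ≤ ⨆ L : ℕ, ENNReal.ofReal (mx (trn h L) L y ^ (4/3:ℝ)) := by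
    intro y
    have := ENNReal.rpow_le_rpow (Mp_le h y) (z := 4/3) (by norm_num)
    refine this.trans ?_
    have e : (⨆ L : ℕ, ENNReal.ofReal (mx (trn h L) L y)) ^ (4/3:ℝ) = ⨆ L : ℕ, (ENNReal.ofReal (mx (trn h L) L y)) ^ (4/3:ℝ) :=
      (ENNReal.orderIsoRpow (4/3:ℝ) (by norm_num)).map_iSup _
    rw [e]
    apply iSup_mono
    intro L
    rw [ENNReal.ofReal_rpow_of_nonneg (mx_nonneg _ _ _) (by norm_num)]
  refine (ENNReal.tsum_le_tsum h1).trans ?_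
  have trn_mono : ∀ {L L' : ℕ}, L ≤ L' → ∀ x, trn h L x ≤ trn h L' x := by
    intro L L' hL x
    unfold trn
    split_ifs with a b
    · exact le_rfl
    · simp only [mem_Icc] at *; omega
    · exact hh x
    · exact le_rfl
  rw [← lintegral_count, lintegral_iSup (fun _ => Measurable.of_discrete)]
  · apply iSup_le
    intro L
    rw [lintegral_count]
    refine (hl_fin2 (trn h L) ?_ (Icc (-(L:ℤ)) L) ?_ L).trans ?_
    · intro x; unfold trn; split_ifs; exacts [hh x, le_rfl]
    · intro x hx; rw [trn, if_neg hx]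
    · gcongr with y
      · unfold trn; split_ifs; exacts [hh y, le_rfl]
      · unfold trn; split_ifs; exacts [le_rfl, hh y]
  · intro L L' hL y
    apply ENNReal.ofReal_le_ofReal
    exact Real.rpow_le_rpow (mx_nonneg _ _ _) (mx_mono (trn_mono hL) hL y) (by norm_num)

/-- two sided spherical-scale maximal function -/
def M2 (h : ℤ → ℝ) (y : ℤ) : ℝ≥0∞ := ⨆ (lam : ℕ) (_ : 1 ≤ lam),
  ENNReal.ofReal ((lam:ℝ) ^ (-(1/2):ℝ) * ∑ x ∈ II lam, h (y - x))

lemma M2_le (h : ℤ → ℝ) (hh : ∀ x, 0 ≤ h x) (y : ℤ) : M2 h y ≤ 2 * (Mp h y + Mp (fun x => h (-x)) (-y)) := by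
  rw [M2]
  apply iSup₂_le
  intro lam hlam
  set N := Nat.sqrt lam with hN
  have hN1 : 1 ≤ N := by rw [hN, Nat.le_sqrt]; simpa using hlam
  have hN1' : (1:ℝ) ≤ N := by exact_mod_cast hN1
  have hscale : (lam:ℝ) ^ (-(1/2):ℝ) ≤ 2 * ((N + 1 : ℕ):ℝ)⁻¹ := by
    rw [Real.rpow_neg (by positivity), ← Real.sqrt_eq_rpow]
    have : (N:ℝ) ≤ Real.sqrt lam := by
      apply Real.le_sqrt_of_sq_le
      have : N ^ 2 ≤ lam := by rw [hN]; exact Nat.sqrt_le' lam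
      exact_mod_cast this
    calc (Real.sqrt lam)⁻¹ ≤ (N:ℝ)⁻¹ := by gcongr
      _ ≤ _ := by
        push_cast
        rw [← div_eq_mul_inv, inv_eq_one_div, div_le_div_iff₀ (by positivity) (by positivity)]
        linarith
  have hsum : ∑ x ∈ II lam, h (y - x) ≤ ∑ j ∈ range (N + 1), h (y + j) + ∑ j ∈ range (N + 1), h (-(-y + j)) := by
    have s1 : ∑ j ∈ range (N + 1), h (y + j) = ∑ x ∈ (range (N + 1)).image (fun j : ℕ => -(j:ℤ)), h (y - x) := by
      rw [Finset.sum_image]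
      · simp
      · intro a _ b _ hab; simpa using hab
    have s2 : ∑ j ∈ range (N + 1), h (-(-y + j)) = ∑ x ∈ (range (N + 1)).image (fun j : ℕ => (j:ℤ)), h (y - x) := by
      rw [Finset.sum_image]
      · apply Finset.sum_congr rfl; intro j _; congr 1; ring
      · intro a _ b _ hab; simpa using hab
    rw [s1, s2, ← Finset.sum_union_inter]
    have : 0 ≤ ∑ x ∈ (range (N + 1)).image (fun j : ℕ => -(j:ℤ)) ∩ (range (N + 1)).image (fun j : ℕ => (j:ℤ)), h (y - x) :=
      Finset.sum_nonneg fun x _ => hh _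
    refine le_trans ?_ (le_add_of_nonneg_right this)
    apply Finset.sum_le_sum_of_subset_of_nonneg
    · intro x hx
      simp only [II, mem_Icc, ← hN] at hx
      simp only [mem_union, mem_image, mem_range]
      rcases le_total 0 x with c | c
      · right; exact ⟨x.toNat, by omega, by omega⟩
      · left; exact ⟨(-x).toNat, by omega, by omega⟩
    · intros; exact hh _
  have hA : 0 ≤ ∑ j ∈ range (N + 1), h (y + j) := Finset.sum_nonneg fun x _ => hh _
  have hB : 0 ≤ ∑ j ∈ range (N + 1), h (-(-y + j)) := Finset.sum_nonneg fun x _ => hh _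
  have hfin : (lam:ℝ) ^ (-(1/2):ℝ) * ∑ x ∈ II lam, h (y - x) ≤
      2 * (((N + 1 : ℕ):ℝ)⁻¹ * ∑ j ∈ range (N + 1), h (y + j) + ((N + 1 : ℕ):ℝ)⁻¹ * ∑ j ∈ range (N + 1), h (-(-y + j))) := by
    calc _ ≤ 2 * ((N + 1 : ℕ):ℝ)⁻¹ * (∑ j ∈ range (N + 1), h (y + j) + ∑ j ∈ range (N + 1), h (-(-y + j))) := by
          apply mul_le_mul hscale hsum (Finset.sum_nonneg fun x _ => hh _) (by positivity)
      _ = _ := by ring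
  refine (ENNReal.ofReal_le_ofReal hfin).trans ?_
  rw [ENNReal.ofReal_mul (by norm_num), ENNReal.ofReal_add (by positivity) (by positivity)]
  simp only [ENNReal.ofReal_ofNat]
  gcongr
  · exact le_iSup (fun k : ℕ => ENNReal.ofReal ((k:ℝ)⁻¹ * ∑ j ∈ range k, h (y + j))) (N + 1)
  · exact le_iSup (fun k : ℕ => ENNReal.ofReal ((k:ℝ)⁻¹ * ∑ j ∈ range k, h (-(-y + j)))) (N + 1)

lemma hl_M2 : ∃ C : ℝ≥0, ∀ h : ℤ → ℝ, (∀ x, 0 ≤ h x) →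
    ∑' y, (M2 h y) ^ (4/3:ℝ) ≤ C * ∑' y, ENNReal.ofReal (h y ^ (4/3:ℝ)) := by
  refine ⟨(2:ℝ≥0) ^ (4/3:ℝ) * (2 ^ (4/3 - 1 : ℝ) * 32), fun h hh => ?_⟩
  have a1 := hl_Mp h hh
  have a2 := hl_Mp (fun x => h (-x)) (fun x => hh _)
  have a3 : ∑' y, (Mp (fun x => h (-x)) (-y)) ^ (4/3:ℝ) = ∑' y, (Mp (fun x => h (-x)) y) ^ (4/3:ℝ) :=
    (Equiv.neg ℤ).tsum_eq (fun y => (Mp (fun x => h (-x)) y) ^ (4/3:ℝ))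
  have a4 : ∑' y, ENNReal.ofReal (h (-y) ^ (4/3:ℝ)) = ∑' y, ENNReal.ofReal (h y ^ (4/3:ℝ)) :=
    (Equiv.neg ℤ).tsum_eq (fun y => ENNReal.ofReal (h y ^ (4/3:ℝ)))
  have b : ∀ y, (M2 h y) ^ (4/3:ℝ) ≤ (2:ℝ≥0∞) ^ (4/3:ℝ) * (2 ^ (4/3 - 1 : ℝ) *
      ((Mp h y) ^ (4/3:ℝ) + (Mp (fun x => h (-x)) (-y)) ^ (4/3:ℝ))) := by
    intro y
    refine (ENNReal.rpow_le_rpow (M2_le h hh y) (by norm_num)).trans ?_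
    rw [ENNReal.mul_rpow_of_nonneg _ _ (by norm_num)]
    gcongr
    exact ENNReal.rpow_add_le_mul_rpow_add_rpow _ _ (by norm_num)
  refine (ENNReal.tsum_le_tsum b).trans ?_
  rw [ENNReal.tsum_mul_left, ENNReal.tsum_mul_left, ENNReal.tsum_add, a3]
  rw [a4] at a2
  have c1 : ((2:ℝ≥0) ^ (4/3:ℝ) : ℝ≥0) = (2:ℝ≥0∞) ^ (4/3:ℝ) := by
    rw [ENNReal.coe_rpow_of_nonneg _ (by norm_num)]; norm_num
  have c2 : ((2:ℝ≥0) ^ (4/3 - 1:ℝ) : ℝ≥0) = (2:ℝ≥0∞) ^ (4/3 - 1:ℝ) := by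
    rw [ENNReal.coe_rpow_of_nonneg _ (by norm_num)]; norm_num
  push_cast
  rw [c1, c2, mul_assoc, mul_assoc]
  gcongr
  refine (add_le_add a1 a2).trans ?_
  rw [← add_mul]; norm_num

lemma ennHolder_fin {α : Type*} (S : Finset α) (n : ℕ) (hn : 0 < n) (w : Fin n → α → ℝ≥0∞) :
    ∑ x ∈ S, ∏ i, (w i x) ^ (1/(n:ℝ)) ≤ ∏ i, (∑ x ∈ S, w i x) ^ (1/(n:ℝ)) := by
  classical
  let : MeasurableSpace S := ⊤
  have := ENNReal.lintegral_prod_norm_pow_le (μ := (Measure.count : Measure S)) (Finset.univ : Finset (Fin n))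
    (f := fun i x => w i x) (p := fun _ => 1/(n:ℝ)) (fun i _ => measurable_from_top.aemeasurable)
    (by simp; field_simp) (fun i _ => by positivity)
  simp only [lintegral_count, tsum_fintype] at this
  have e : ∀ F : α → ℝ≥0∞, ∑ x : S, F x = ∑ x ∈ S, F x := fun F => Finset.sum_coe_sort S F
  simp only [e (fun x => ∏ i, (w i x) ^ (1/(n:ℝ)))] at this
  simp only [e (w _)] at this
  exact this

lemma ennHolder_tsum (n : ℕ) (hn : 0 < n) (w : Fin n → ℤ → ℝ≥0∞) :
    ∑' x, ∏ i, (w i x) ^ (1/(n:ℝ)) ≤ ∏ i, (∑' x, w i x) ^ (1/(n:ℝ)) := by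
  have := ENNReal.lintegral_prod_norm_pow_le (μ := (Measure.count : Measure ℤ)) (Finset.univ : Finset (Fin n))
    (f := fun i x => w i x) (p := fun _ => 1/(n:ℝ)) (fun i _ => Measurable.of_discrete.aemeasurable)
    (by simp; field_simp) (fun i _ => by positivity)
  simpa only [lintegral_count] using this

lemma mulAvg_le (n : ℕ) (lam : ℕ) (f : Fin n → ℤ → ℂ) (y : ℤ) :
    ‖mulAvg n lam f y‖ ≤ ((sph n lam).card : ℝ)⁻¹ * ∑ x ∈ sph n lam, ∏ i, ‖f i (y - x i)‖ := by
  rw [mulAvg, sphereCount_eq, ← coe_sph, finsum_mem_coe_finset, norm_mul, norm_inv, Complex.norm_natCast]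
  gcongr
  refine (norm_sum_le _ _).trans ?_
  simp

lemma mulAvg_jensen (n : ℕ) (hn : 4 ≤ n) (lam : ℕ) (f : Fin n → ℤ → ℂ) (y : ℤ) (q : ℝ) (hq : 1 ≤ q) :
    ‖mulAvg n lam f y‖ ^ q ≤ ((sph n lam).card : ℝ)⁻¹ * ∑ x ∈ sph n lam, ∏ i, ‖f i (y - x i)‖ ^ q := by
  have hc : (0:ℝ) < (sph n lam).card := by
    have := sph_pos (lam := lam) hn; exact_mod_cast this
  refine (Real.rpow_le_rpow (norm_nonneg _) (mulAvg_le n lam f y) (by linarith)).trans ?_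
  rw [Finset.mul_sum, Finset.mul_sum]
  have := Real.rpow_arith_mean_le_arith_mean_rpow (sph n lam) (fun _ => ((sph n lam).card : ℝ)⁻¹)
    (fun x => ∏ i, ‖f i (y - x i)‖) (fun _ _ => by positivity) (by simp; field_simp) (fun _ _ => by positivity) hq
  refine this.trans (le_of_eq ?_)
  apply Finset.sum_congr rfl
  intro x _
  rw [Real.finsetProd_rpow _ _ (fun _ _ => norm_nonneg _)]

lemma prod_mul_perm {n : ℕ} (σ : Equiv.Perm (Fin n)) (F : Fin n → ℝ≥0∞) :
    ∏ i, (F i * F (σ i)) = ∏ i, F i ^ 2 := by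
  rw [Finset.prod_mul_distrib, Equiv.prod_comp σ F, ← Finset.prod_mul_distrib]
  simp [sq]

lemma exists_perm (n : ℕ) (hn : 2 ≤ n) : ∃ σ : Equiv.Perm (Fin n), ∀ i, i ≠ σ i := by
  have : NeZero n := ⟨by omega⟩
  refine ⟨Equiv.addRight 1, fun i h => ?_⟩
  have h1 : (1 : Fin n) = 0 := by simpa using h.symm
  have := congrArg Fin.val h1
  rw [Fin.val_one', Fin.val_zero, Nat.mod_eq_of_lt (by omega)] at this
  omega

lemma pt_bound (n : ℕ) (hn : 5 ≤ n) : ∃ C : ℝ≥0, ∀ q : ℝ, 1 ≤ q → ∀ f : Fin n → ℤ → ℂ, ∀ y : ℤ,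
    (maxFn n f y) ^ q ≤ C * ∏ i, ((M2 (fun x => ‖f i x‖ ^ (3 / 4 * (n * q))) y) ^ (4/3:ℝ)) ^ (1/(n:ℝ)) := by
  obtain ⟨C, hC, hpb⟩ := pair_bound n hn
  obtain ⟨σ, hσ⟩ := exists_perm n (by omega)
  refine ⟨C.toNNReal, fun q hq f y => ?_⟩
  have hn0 : (0:ℝ) < n := by have : 0 < n := by omega
                             exact_mod_cast this
  set h : Fin n → ℤ → ℝ := fun i x => ‖f i x‖ ^ (3 / 4 * (n * q)) with hh
  set g : Fin n → ℤ → ℝ := fun i x => ‖f i x‖ ^ (1 / 2 * (n * q)) with hg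
  have e1 : (maxFn n f y) ^ q = ⨆ (lam : ℕ) (_ : 1 ≤ lam), (‖mulAvg n lam f y‖₊ : ℝ≥0∞) ^ q := by
    rw [maxFn]
    rw [show ∀ u : ℝ≥0∞, u ^ q = ENNReal.orderIsoRpow q (by linarith) u from fun u => rfl, OrderIso.map_iSup₂]
    rfl
  rw [e1]
  apply iSup₂_le
  intro lam hlam
  set S := sph n lam with hS
  have hc : (0:ℝ) < S.card := by
    have := sph_pos (n := n) (lam := lam) (by omega); exact_mod_cast this
  have s1 : (‖mulAvg n lam f y‖₊ : ℝ≥0∞) ^ q ≤ ENNReal.ofReal (((S.card : ℝ))⁻¹) *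
      ∑ x ∈ S, ∏ i, ENNReal.ofReal (‖f i (y - x i)‖ ^ q) := by
    have := ENNReal.ofReal_le_ofReal (mulAvg_jensen n (by omega) lam f y q hq)
    rw [← ENNReal.ofReal_rpow_of_nonneg (norm_nonneg _) (by linarith), ENNReal.ofReal_mul (by positivity),
      ENNReal.ofReal_sum_of_nonneg (fun _ _ => by positivity), ofReal_norm] at this
    refine this.trans (le_of_eq ?_)
    congr 1
    apply Finset.sum_congr rfl
    intro x _
    rw [ENNReal.ofReal_prod_of_nonneg (fun _ _ => by positivity)]
  set w : Fin n → (Fin n → ℤ) → ℝ≥0∞ := fun i x => ENNReal.ofReal (g i (y - x i)) * ENNReal.ofReal (g (σ i) (y - x (σ i))) with hw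
  have s2 : ∀ x, ∏ i, ENNReal.ofReal (‖f i (y - x i)‖ ^ q) = ∏ i, (w i x) ^ (1/(n:ℝ)) := by
    intro x
    have : ∀ i, (w i x) ^ (1/(n:ℝ)) = (ENNReal.ofReal (g i (y - x i))) ^ (1/(n:ℝ)) * (ENNReal.ofReal (g (σ i) (y - x (σ i)))) ^ (1/(n:ℝ)) := by
      intro i
      rw [hw, ENNReal.mul_rpow_of_nonneg _ _ (by positivity)]
    simp only [this]
    rw [prod_mul_perm σ (fun i => (ENNReal.ofReal (g i (y - x i))) ^ (1/(n:ℝ)))]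
    apply Finset.prod_congr rfl
    intro i _
    rw [hg, ← ENNReal.ofReal_rpow_of_nonneg (norm_nonneg _) (by positivity), ← ENNReal.ofReal_rpow_of_nonneg (norm_nonneg _) (by positivity),
      ← ENNReal.rpow_natCast, ← ENNReal.rpow_mul, ← ENNReal.rpow_mul]
    congr 1
    push_cast
    field_simp
  simp only [s2] at s1
  refine s1.trans ?_
  have s3 := ennHolder_fin S n (by omega) w
  set M : Fin n → ℝ≥0∞ := fun i => M2 (h i) y with hM
  have s4 : ∀ i, ∑ x ∈ S, w i x ≤ ENNReal.ofReal (C * S.card) * ((M i) ^ (2/3:ℝ) * (M (σ i)) ^ (2/3:ℝ)) := by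
    intro i
    have := hpb lam hlam i (σ i) (hσ i) (fun x => g i (y - x)) (fun x => g (σ i) (y - x)) (fun x => by rw [hg]; positivity) (fun x => by rw [hg]; positivity)
    have e2 : ∀ j x, g j x ^ (3/2:ℝ) = h j x := by
      intro j x
      rw [hg, hh]
      simp only
      rw [← Real.rpow_mul (norm_nonneg _)]
      congr 1; ring
    simp only [e2] at this
    have hpos : ∀ j, 0 ≤ (lam:ℝ)^(-(1/2):ℝ) * ∑ x ∈ II lam, h j (y - x) := by
      intro j
      apply mul_nonneg (by positivity)
      apply Finset.sum_nonneg; intro x _; rw [hh]; positivity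
    have hle : ∀ j, ENNReal.ofReal ((lam:ℝ)^(-(1/2):ℝ) * ∑ x ∈ II lam, h j (y - x)) ≤ M j := by
      intro j
      exact le_iSup₂ (f := fun (lam : ℕ) (_ : 1 ≤ lam) => ENNReal.ofReal ((lam:ℝ)^(-(1/2):ℝ) * ∑ x ∈ II lam, h j (y - x))) lam hlam
    have t1 := ENNReal.ofReal_le_ofReal this
    rw [ENNReal.ofReal_mul (by positivity), ENNReal.ofReal_mul (Real.rpow_nonneg (hpos i) _),
      ← ENNReal.ofReal_rpow_of_nonneg (hpos i) (by norm_num), ← ENNReal.ofReal_rpow_of_nonneg (hpos _) (by norm_num)] at t1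
    calc ∑ x ∈ S, w i x = ENNReal.ofReal (∑ x ∈ S, g i (y - x i) * g (σ i) (y - x (σ i))) := by
          rw [ENNReal.ofReal_sum_of_nonneg (fun _ _ => by rw [hg]; positivity)]
          apply Finset.sum_congr rfl
          intro x _
          rw [hw, ENNReal.ofReal_mul (by rw [hg]; positivity)]
      _ ≤ _ := t1
      _ ≤ _ := by
          gcongr
          · exact hle i
          · exact hle (σ i)
  have s5 : ∏ i, (∑ x ∈ S, w i x) ^ (1/(n:ℝ)) ≤ ENNReal.ofReal (C * S.card) * ∏ i, ((M i) ^ (4/3:ℝ)) ^ (1/(n:ℝ)) := by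
    calc ∏ i, (∑ x ∈ S, w i x) ^ (1/(n:ℝ)) ≤ ∏ i, (ENNReal.ofReal (C * S.card) * ((M i) ^ (2/3:ℝ) * (M (σ i)) ^ (2/3:ℝ))) ^ (1/(n:ℝ)) := by
          apply Finset.prod_le_prod'
          intro i _
          exact ENNReal.rpow_le_rpow (s4 i) (by positivity)
      _ = _ := by
          have : ∀ i, (ENNReal.ofReal (C * S.card) * ((M i) ^ (2/3:ℝ) * (M (σ i)) ^ (2/3:ℝ))) ^ (1/(n:ℝ)) =
              (ENNReal.ofReal (C * S.card)) ^ (1/(n:ℝ)) * ((M i ^ (2/3:ℝ)) ^ (1/(n:ℝ)) * (M (σ i) ^ (2/3:ℝ)) ^ (1/(n:ℝ))) := by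
            intro i
            rw [ENNReal.mul_rpow_of_nonneg _ _ (by positivity), ENNReal.mul_rpow_of_nonneg _ _ (by positivity)]
          simp only [this]
          rw [Finset.prod_mul_distrib, prod_mul_perm σ (fun i => (M i ^ (2/3:ℝ)) ^ (1/(n:ℝ)))]
          congr 1
          · simp only [prod_const, card_univ, Fintype.card_fin]
            rw [← ENNReal.rpow_natCast, ← ENNReal.rpow_mul]
            rw [show 1 / (n:ℝ) * n = 1 by field_simp, ENNReal.rpow_one]
          · apply Finset.prod_congr rfl
            intro i _
            rw [← ENNReal.rpow_natCast, ← ENNReal.rpow_mul, ← ENNReal.rpow_mul, ← ENNReal.rpow_mul]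
            congr 1; push_cast; ring
  calc _ ≤ ENNReal.ofReal (((S.card : ℝ))⁻¹) * (ENNReal.ofReal (C * S.card) * ∏ i, ((M i) ^ (4/3:ℝ)) ^ (1/(n:ℝ))) :=
        mul_le_mul' le_rfl (s3.trans s5)
    _ = _ := by
      rw [← mul_assoc, ← ENNReal.ofReal_mul (by positivity)]
      congr 1
      rw [show (S.card:ℝ)⁻¹ * (C * S.card) = C by field_simp]
      rfl

lemma lp_mono (p P : ℝ) (hp : 0 < p) (hP : p ≤ P) (u : ℤ → ℝ≥0∞) :
    (∑' x, u x ^ P) ^ (1/P) ≤ (∑' x, u x ^ p) ^ (1/p) := by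
  have hP0 : 0 < P := by linarith
  set S := ∑' x, u x ^ p with hS
  have h1 : ∀ x, u x ≤ S ^ (1/p) := by
    intro x
    have : u x ^ p ≤ S := ENNReal.le_tsum x
    have := ENNReal.rpow_le_rpow this (z := 1/p) (by positivity)
    rwa [← ENNReal.rpow_mul, mul_one_div_cancel hp.ne', ENNReal.rpow_one] at this
  have h2 : ∀ x, u x ^ P ≤ u x ^ p * (S ^ (1/p)) ^ (P - p) := by
    intro x
    calc u x ^ P = u x ^ p * u x ^ (P - p) := by
          rw [← ENNReal.rpow_add_of_nonneg _ _ hp.le (by linarith)]; congr 1; ring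
      _ ≤ _ := by gcongr; exact h1 x
  have h3 : ∑' x, u x ^ P ≤ S ^ (P / p) := by
    refine (ENNReal.tsum_le_tsum h2).trans (le_of_eq ?_)
    rw [ENNReal.tsum_mul_right, ← hS, ← ENNReal.rpow_mul]
    nth_rewrite 1 [← ENNReal.rpow_one S]
    rw [← ENNReal.rpow_add_of_nonneg _ _ (by norm_num) (mul_nonneg (by positivity) (by linarith))]
    congr 1; field_simp; ring
  refine (ENNReal.rpow_le_rpow h3 (by positivity)).trans (le_of_eq ?_)
  rw [← ENNReal.rpow_mul]; congr 1; field_simp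

lemma sufficiency (n : ℕ) (hn : 5 ≤ n) (p q : ℝ) (hp : 1 ≤ p) (hq : 1 ≤ q) (hpq : p ≤ n * q) :
    ∃ C : ℝ≥0, ∀ f : Fin n → ℤ → ℂ, (∀ i, lpNorm p (f i) ≠ ∞) →
      lqNormE q (maxFn n f) ≤ (C : ℝ≥0∞) * ∏ i, lpNorm p (f i) := by
  obtain ⟨C1, h1⟩ := pt_bound n hn
  obtain ⟨C2, h2⟩ := hl_M2
  have hn0 : (0:ℝ) < n := by have : 0 < n := by omega
                             exact_mod_cast this
  have hq0 : 0 < q := by linarith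
  refine ⟨(C1 * C2) ^ (1/q), fun f _ => ?_⟩
  set A : Fin n → ℝ≥0∞ := fun i => ∑' y, (‖f i y‖₊ : ℝ≥0∞) ^ (n * q) with hA
  have key : ∑' y, (maxFn n f y) ^ q ≤ (C1 * C2 : ℝ≥0∞) * ∏ i, (A i) ^ (1/(n:ℝ)) := by
    refine (ENNReal.tsum_le_tsum (fun y => h1 q hq f y)).trans ?_
    rw [ENNReal.tsum_mul_left, mul_assoc]
    gcongr
    refine (ennHolder_tsum n (by omega) (fun i y => (M2 (fun x => ‖f i x‖ ^ (3 / 4 * (n * q))) y) ^ (4/3:ℝ))).trans ?_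
    have b : ∀ i, (∑' y, (M2 (fun x => ‖f i x‖ ^ (3 / 4 * (n * q))) y) ^ (4/3:ℝ)) ≤ C2 * A i := by
      intro i
      refine (h2 _ (fun x => by positivity)).trans (le_of_eq ?_)
      congr 1
      apply tsum_congr
      intro y
      rw [← Real.rpow_mul (norm_nonneg _), ← ENNReal.ofReal_rpow_of_nonneg (norm_nonneg _) (by positivity), ofReal_norm]
      rw [show 3 / 4 * (n * q) * (4/3:ℝ) = n * q by ring]
      rfl
    calc _ ≤ ∏ i, (C2 * A i) ^ (1/(n:ℝ)) := by
          apply Finset.prod_le_prod'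
          intro i _
          exact ENNReal.rpow_le_rpow (b i) (by positivity)
      _ = _ := by
          simp only [ENNReal.mul_rpow_of_nonneg _ _ (show 0 ≤ 1/(n:ℝ) by positivity)]
          rw [Finset.prod_mul_distrib]
          congr 1
          simp only [prod_const, card_univ, Fintype.card_fin]
          rw [← ENNReal.rpow_natCast, ← ENNReal.rpow_mul]
          rw [show 1 / (n:ℝ) * n = 1 by field_simp, ENNReal.rpow_one]
  rw [lqNormE]
  refine (ENNReal.rpow_le_rpow key (by positivity)).trans ?_
  rw [ENNReal.mul_rpow_of_nonneg _ _ (by positivity), ENNReal.coe_rpow_of_nonneg _ (by positivity), ENNReal.coe_mul,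
    ← ENNReal.prod_rpow_of_nonneg (by positivity)]
  gcongr with i
  rw [← ENNReal.rpow_mul, show 1 / (n:ℝ) * (1/q) = 1 / (n * q) by field_simp]
  exact lp_mono p (n * q) (by linarith) hpq _

lemma sq_mod8 (a : ℤ) : (a ^ 2 % 8 = 1 ∧ a % 2 = 1) ∨ ((a ^ 2 % 8 = 0 ∨ a ^ 2 % 8 = 4) ∧ a % 2 = 0) := by
  have h : a % 8 = 0 ∨ a % 8 = 1 ∨ a % 8 = 2 ∨ a % 8 = 3 ∨ a % 8 = 4 ∨ a % 8 = 5 ∨ a % 8 = 6 ∨ a % 8 = 7 := by omega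
  rcases h with h | h | h | h | h | h | h | h <;>
    (rw [sq, Int.mul_emod, h]; norm_num; try omega)

lemma card_four_step (m : ℕ) (hm : 2 ∣ m) : (sph 4 (4 * m)).card ≤ (sph 4 m).card := by
  have : sph 4 (4 * m) ⊆ (sph 4 m).image (fun x i => 2 * x i) := by
    intro x hx
    rw [mem_sph] at hx
    rw [mem_image]
    obtain ⟨m', rfl⟩ := hm
    rw [Fin.sum_univ_four] at hx
    push_cast at hx
    have hev : ∀ i, x i % 2 = 0 := by
      have h0 := sq_mod8 (x 0)
      have h1 := sq_mod8 (x 1)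
      have h2 := sq_mod8 (x 2)
      have h3 := sq_mod8 (x 3)
      generalize x 0 ^ 2 = s0 at *
      generalize x 1 ^ 2 = s1 at *
      generalize x 2 ^ 2 = s2 at *
      generalize x 3 ^ 2 = s3 at *
      intro i
      fin_cases i <;> simp only [Fin.zero_eta, Fin.mk_one, Fin.reduceFinMk] <;> omega
    refine ⟨fun i => x i / 2, ?_, ?_⟩
    · rw [mem_sph, Fin.sum_univ_four]
      have e : ∀ i, x i = 2 * (x i / 2) := fun i => by have := hev i; omega
      rw [e 0, e 1, e 2, e 3] at hx
      push_cast
      linarith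
    · funext i
      have := hev i; simp only; omega
  exact (Finset.card_le_card this).trans Finset.card_image_le

lemma card_four (k : ℕ) : (sph 4 (4 ^ (k + 1))).card ≤ (sph 4 4).card := by
  induction k with
  | zero => simp
  | succ k ih =>
    rw [pow_succ' 4 (k + 1)]
    exact (card_four_step _ (dvd_pow (by norm_num) (by omega))).trans ih

lemma mulAvg_sph (n lam : ℕ) (f : Fin n → ℤ → ℂ) (y : ℤ) :
    mulAvg n lam f y = ((sph n lam).card : ℂ)⁻¹ * ∑ x ∈ sph n lam, ∏ i, f i (y - x i) := by
  rw [mulAvg, sphereCount_eq, ← coe_sph, finsum_mem_coe_finset]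

lemma nec_four (p q : ℝ) (hp : 1 ≤ p) (hq : 1 ≤ q) (C : ℝ≥0)
    (H : ∀ f : Fin 4 → ℤ → ℂ, (∀ i, lpNorm p (f i) ≠ ∞) →
      lqNormE q (maxFn 4 f) ≤ (C : ℝ≥0∞) * ∏ i, lpNorm p (f i)) : False := by
  set f : Fin 4 → ℤ → ℂ := fun _ x => if x = 0 then 1 else 0 with hf
  have hl : ∀ i, lpNorm p (f i) = 1 := by
    intro i
    rw [_root_.lpNorm, tsum_eq_single 0]
    · simp [hf]
    · intro x hx
      simp [hf, hx]; linarith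
  have h1 := H f (fun i => by rw [hl i]; simp)
  simp only [hl, prod_const_one, mul_one] at h1
  have hlow : ∀ k : ℕ, ((sph 4 4).card : ℝ≥0∞)⁻¹ ≤ maxFn 4 f (2 ^ k) := by
    intro k
    rw [maxFn]
    refine le_trans ?_ (le_iSup₂ (f := fun (lam : ℕ) (_ : 1 ≤ lam) => (‖mulAvg 4 lam f (2 ^ k)‖₊ : ℝ≥0∞)) (4 ^ (k + 1)) (Nat.one_le_pow _ _ (by norm_num)))
    have e : ∑ x ∈ sph 4 (4 ^ (k + 1)), ∏ i, f i (2 ^ k - x i) = 1 := by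
      rw [Finset.sum_eq_single (fun _ => 2 ^ k)]
      · simp [hf]
      · intro x _ hx
        obtain ⟨i, hi⟩ := Function.ne_iff.mp hx
        apply Finset.prod_eq_zero (mem_univ i)
        simp only [hf]
        rw [if_neg]
        intro h; apply hi; omega
      · intro h
        exfalso; apply h
        rw [mem_sph, Fin.sum_univ_four]
        push_cast
        have e4 : (4:ℤ) ^ k = (2 ^ k) ^ 2 := by
          rw [← pow_mul, mul_comm, pow_mul]; norm_num
        rw [pow_succ 4 k, e4]
        ring
    rw [mulAvg_sph, e, mul_one, nnnorm_inv]
    have hpos : 1 ≤ (sph 4 (4 ^ (k + 1))).card := sph_pos le_rfl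
    have : ‖((sph 4 (4 ^ (k + 1))).card : ℂ)‖₊ = ((sph 4 (4 ^ (k + 1))).card : ℝ≥0) := by simp
    rw [this, ENNReal.coe_inv (by positivity), ENNReal.coe_natCast]
    apply ENNReal.inv_le_inv'
    exact_mod_cast card_four k
  have htop : ∑' y, (maxFn 4 f y) ^ q = ∞ := by
    rw [eq_top_iff]
    have inj : Function.Injective (fun k : ℕ => (2:ℤ) ^ k) := by
      intro a b hab
      exact Int.pow_right_injective (by norm_num) hab
    refine le_trans ?_ (ENNReal.tsum_comp_le_tsum_of_injective inj (fun y => (maxFn 4 f y) ^ q))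
    refine le_trans (le_of_eq ?_) (ENNReal.tsum_le_tsum (fun k => ENNReal.rpow_le_rpow (hlow k) (by linarith)))
    rw [ENNReal.tsum_const_eq_top_of_ne_zero]
    rw [Ne, ENNReal.rpow_eq_zero_iff]
    push Not
    constructor
    · intro h; exact absurd h (ENNReal.inv_ne_zero.mpr (ENNReal.natCast_ne_top _))
    · intro h
      exfalso
      rw [ENNReal.inv_eq_top] at h
      have hpos : 1 ≤ (sph 4 4).card := sph_pos le_rfl
      have : (sph 4 4).card = 0 := by exact_mod_cast h
      omega
  rw [lqNormE, htop, ENNReal.top_rpow_of_pos (by positivity)] at h1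
  simp at h1

lemma nec_pq (n : ℕ) (hn : 4 ≤ n) (p q : ℝ) (hp : 1 ≤ p) (hq : 1 ≤ q) (C : ℝ≥0)
    (H : ∀ f : Fin n → ℤ → ℂ, (∀ i, lpNorm p (f i) ≠ ∞) →
      lqNormE q (maxFn n f) ≤ (C : ℝ≥0∞) * ∏ i, lpNorm p (f i)) : p ≤ n * q := by
  by_contra hcon
  push Not at hcon
  have key : ∀ M : ℕ, ((2 * M + 1 : ℕ) : ℝ) ^ (1/q) ≤ C * ((2 * M + 3 : ℕ):ℝ) ^ (n / p) := by
    intro M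
    set f : Fin n → ℤ → ℂ := fun _ x => if x ∈ Icc (-(M + 1 : ℤ)) (M + 1) then 1 else 0 with hf
    have hl : ∀ i, lpNorm p (f i) = ((2 * M + 3 : ℕ) : ℝ≥0∞) ^ (1/p) := by
      intro i
      rw [_root_.lpNorm, tsum_eq_sum (s := Icc (-(M + 1 : ℤ)) (M + 1))]
      · congr 1
        rw [Finset.sum_congr rfl (g := fun _ => 1)]
        · simp only [sum_const, Int.card_Icc, nsmul_eq_mul, mul_one]
          congr 1; omega
        · intro x hx
          simp only [hf]; rw [if_pos hx]; simp
      · intro x hx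
        simp only [hf]; rw [if_neg hx]; simp; linarith
    have hfin : ∀ i, lpNorm p (f i) ≠ ∞ := by
      intro i; rw [hl i]
      exact ENNReal.rpow_ne_top_of_nonneg (by positivity) (ENNReal.natCast_ne_top _)
    have h1 := H f hfin
    simp only [hl, prod_const, card_univ, Fintype.card_fin] at h1
    have hone : ∀ y ∈ Icc (-(M:ℤ)) M, 1 ≤ maxFn n f y := by
      intro y hy
      rw [maxFn]
      refine le_trans ?_ (le_iSup₂ (f := fun (lam : ℕ) (_ : 1 ≤ lam) => (‖mulAvg n lam f y‖₊ : ℝ≥0∞)) 1 le_rfl)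
      have e : ∑ x ∈ sph n 1, ∏ i, f i (y - x i) = (sph n 1).card := by
        rw [Finset.sum_congr rfl (g := fun _ => 1)]
        · simp
        · intro x hx
          apply Finset.prod_eq_one
          intro i _
          have := sph_coord hx i
          simp only [II, Nat.sqrt_one, mem_Icc] at this hy
          simp only [hf]
          rw [if_pos]
          rw [mem_Icc]
          push_cast at this
          omega
      have hpos : 1 ≤ (sph n 1).card := sph_pos hn
      rw [mulAvg_sph, e, inv_mul_cancel₀ (by
        have : (sph n 1).card ≠ 0 := by omega
        exact_mod_cast this)]
      simp
    have h2 : ((2 * M + 1 : ℕ) : ℝ≥0∞) ≤ ∑' y, (maxFn n f y) ^ q := by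
      refine le_trans ?_ (ENNReal.sum_le_tsum (Icc (-(M:ℤ)) M))
      calc ((2 * M + 1 : ℕ) : ℝ≥0∞) = ∑ y ∈ Icc (-(M:ℤ)) M, 1 := by
            simp only [sum_const, Int.card_Icc, nsmul_eq_mul, mul_one]
            congr 1; omega
        _ ≤ _ := by
            apply Finset.sum_le_sum
            intro y hy
            exact ENNReal.one_le_rpow (hone y hy) (by linarith)
    have h3 := (ENNReal.rpow_le_rpow h2 (z := 1/q) (by positivity)).trans h1
    rw [← ENNReal.rpow_natCast, ← ENNReal.rpow_mul, show 1 / p * (n:ℝ) = n / p by ring] at h3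
    rw [← ENNReal.ofReal_natCast, ← ENNReal.ofReal_natCast, ← ENNReal.ofReal_coe_nnreal,
      ENNReal.ofReal_rpow_of_nonneg (by positivity) (by positivity), ENNReal.ofReal_rpow_of_nonneg (by positivity) (by positivity),
      ← ENNReal.ofReal_mul (by positivity), ENNReal.ofReal_le_ofReal_iff (by positivity)] at h3
    exact h3
  have hd : 0 < 1 / q - n / p := by
    rw [sub_pos, div_lt_div_iff₀ (by linarith) (by linarith)]; linarith
  have key2 : ∀ M : ℕ, ((2 * M + 1 : ℕ) : ℝ) ^ (1/q - n/p) ≤ C * 3 ^ (n/p : ℝ) := by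
    intro M
    have hb : (0:ℝ) < ((2 * M + 1 : ℕ) : ℝ) := by positivity
    rw [Real.rpow_sub hb, div_le_iff₀ (by positivity), mul_assoc, ← Real.mul_rpow (by norm_num) hb.le]
    refine (key M).trans ?_
    gcongr
    push_cast
    linarith [show (0:ℝ) ≤ M from by positivity]
  have ht := (tendsto_rpow_atTop hd).comp tendsto_natCast_atTop_atTop
  obtain ⟨N, hN⟩ := (ht.eventually (Filter.eventually_gt_atTop ((C:ℝ) * 3 ^ (n/p : ℝ)))).exists_forall_of_atTop
  have := hN (2 * N + 1) (by omega)
  exact absurd (key2 N) (not_le.mpr this)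

/-- For `n ≥ 4`, `1 ≤ q < ∞`, `1 ≤ p < ∞`, the maximal operator `A_*`
maps `ℓ^p × ⋯ × ℓ^p → ℓ^q` boundedly if and only if `n ≥ 5` and `p ≤ n q`. -/
theorem statement0 (n : ℕ) (hn : 4 ≤ n) (p q : ℝ) (hp : 1 ≤ p) (hq : 1 ≤ q) :
    (∃ C : ℝ≥0, ∀ f : Fin n → ℤ → ℂ, (∀ i, lpNorm p (f i) ≠ ∞) →
      lqNormE q (maxFn n f) ≤ (C : ℝ≥0∞) * ∏ i, lpNorm p (f i)) ↔
    (5 ≤ n ∧ p ≤ n * q) := by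
  constructor
  · rintro ⟨C, H⟩
    refine ⟨?_, nec_pq n hn p q hp hq C H⟩
    by_contra h
    obtain rfl : n = 4 := by omega
    exact nec_four p q hp hq C H
  · rintro ⟨h5, hpq⟩
    exact sufficiency n h5 p q hp hq hpq
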